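/- arXiv:2110.13886 — 9 statements merged into one kernel-verified Lean document; each statement's English description precedes it below -/
import Mathlib

section
/- For every integer e ≥ 1, the presented group G_e = ⟨x, y ∣ x^{3^{e+1}} = 1, y^3 = 1, [y,x] = x^{3^e}⟩ is a finite group of order 3^{e+2}. -/
/-- Relations of `G_e = ⟨x, y ∣ x^(3^(e+1)) = 1, y^3 = 1, [y,x] = x^(3^e)⟩`,
with `[a,b] = a⁻¹ * b⁻¹ * a * b`, generators `x = of 0`, `y = of 1`. -/
def Grels (e : ℕ) : Set (FreeGroup (Fin 2)) :=
  {FreeGroup.of 0 ^ 3 ^ (e + 1), FreeGroup.of 1 ^ 3,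
   (FreeGroup.of 1)⁻¹ * (FreeGroup.of 0)⁻¹ * FreeGroup.of 1 * FreeGroup.of 0 *
     (FreeGroup.of 0 ^ 3 ^ e)⁻¹}

/-- twist -/
def ctw (e : ℕ) (b : ZMod 3) : ZMod (3 ^ (e + 1)) := 1 - 3 ^ e * (b.val : ZMod (3 ^ (e + 1)))

/-- action of x -/
def permX (e : ℕ) : Equiv.Perm (ZMod 3 × ZMod (3 ^ (e + 1))) where
  toFun p := (p.1, p.2 + ctw e p.1)
  invFun p := (p.1, p.2 - ctw e p.1)
  left_inv p := by simp
  right_inv p := by simp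

/-- action of y -/
def permY (e : ℕ) : Equiv.Perm (ZMod 3 × ZMod (3 ^ (e + 1))) where
  toFun p := (p.1 + 1, p.2)
  invFun p := (p.1 - 1, p.2)
  left_inv p := by simp
  right_inv p := by simp

lemma permX_pow (e n : ℕ) (p) : (permX e ^ n) p = (p.1, p.2 + n * ctw e p.1) := by
  induction n with
  | zero => simp
  | succ n ih =>
    rw [pow_succ' (permX e), Equiv.Perm.mul_apply, ih]
    simp only [permX, Equiv.coe_fn_mk, Prod.mk.injEq, true_and]
    push_cast; ring

lemma permY_pow (e n : ℕ) (p) : (permY e ^ n) p = (p.1 + n, p.2) := by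
  induction n with
  | zero => simp
  | succ n ih =>
    rw [pow_succ' (permY e), Equiv.Perm.mul_apply, ih]
    simp only [permY, Equiv.coe_fn_mk, Prod.mk.injEq, and_true]
    push_cast; ring

lemma three_zero (e : ℕ) : (3 : ZMod (3 ^ (e + 1))) ^ e * 3 = 0 := by
  have h := ZMod.natCast_self (3 ^ (e + 1))
  push_cast at h
  rw [← pow_succ, h]

lemma ctw_succ (e : ℕ) (b : ZMod 3) : ctw e (b + 1) = ctw e b - 3 ^ e := by
  have h := three_zero e
  have hb : b = 0 ∨ b = 1 ∨ b = 2 := by revert b; decide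
  rcases hb with rfl | rfl | rfl
  · have h1 : (0 + 1 : ZMod 3).val = 1 := rfl
    have h2 : (0 : ZMod 3).val = 0 := rfl
    simp only [ctw, h1, h2]; push_cast; ring
  · have h1 : (1 + 1 : ZMod 3).val = 2 := rfl
    have h2 : (1 : ZMod 3).val = 1 := rfl
    simp only [ctw, h1, h2]; push_cast; ring
  · have h1 : (2 + 1 : ZMod 3).val = 0 := rfl
    have h2 : (2 : ZMod 3).val = 2 := rfl
    simp only [ctw, h1, h2]; push_cast; linear_combination h

lemma mul_ctw (e : ℕ) (he : 1 ≤ e) (b : ZMod 3) : 3 ^ e * ctw e b = 3 ^ e := by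
  obtain ⟨k, rfl⟩ := Nat.exists_eq_add_of_le' he
  have h := three_zero (k + 1)
  unfold ctw
  linear_combination (-(3 ^ k * (b.val : ZMod (3 ^ (k + 1 + 1))))) * h

lemma perm_rel (e : ℕ) (he : 1 ≤ e) : permY e * permX e = permX e * permY e * permX e ^ 3 ^ e := by
  ext1 p
  simp only [Equiv.Perm.mul_apply, permX_pow]
  simp only [permX, permY, Equiv.coe_fn_mk, Prod.mk.injEq, true_and]
  have h := mul_ctw e he p.1
  rw [ctw_succ]; push_cast; rw [h]; ring

/-- the hom -/
def theHom (e : ℕ) (he : 1 ≤ e) :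
    PresentedGroup (Grels e) →* Equiv.Perm (ZMod 3 × ZMod (3 ^ (e + 1))) :=
  PresentedGroup.toGroup (f := ![permX e, permY e]) (by
    intro r hr
    rcases hr with rfl | rfl | rfl
    · simp only [map_pow, FreeGroup.lift_apply_of]
      ext1 p
      have h := three_zero e
      rw [← pow_succ] at h
      simp [permX_pow, h]
    · simp only [map_pow, FreeGroup.lift_apply_of]
      ext1 p
      have h : (3 : ZMod 3) = 0 := rfl
      simp [permY_pow, h]
    · simp only [map_pow, map_mul, map_inv, FreeGroup.lift_apply_of]
      have h := perm_rel e he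
      simp only [Matrix.cons_val_zero, Matrix.cons_val_one]
      rw [mul_inv_eq_one, mul_assoc, h]
      group)

lemma conj_pow_aux {G : Type*} [Group G] (x y : G) (k : ℤ) (h : x * y = y * x ^ k) (m : ℤ) (b : ℕ) :
    x ^ m * y ^ b = y ^ b * x ^ (k ^ b * m) := by
  have h1 : ∀ m : ℤ, x ^ m * y = y * x ^ (k * m) := by
    intro m
    have hs : SemiconjBy y (x ^ k) x := h.symm
    have := hs.zpow_right m
    rw [zpow_mul]; exact this.symm
  induction b generalizing m with
  | zero => simp
  | succ b ih =>
    rw [pow_succ y, ← mul_assoc, ih, mul_assoc, h1, ← mul_assoc]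
    congr 2; ring

theorem stmt0 (e : ℕ) (he : 1 ≤ e) :
    Finite (PresentedGroup (Grels e)) ∧
    Nat.card (PresentedGroup (Grels e)) = 3 ^ (e + 2) := by
  set x : PresentedGroup (Grels e) := PresentedGroup.of 0 with hx
  set y : PresentedGroup (Grels e) := PresentedGroup.of 1 with hy
  have r1 : x ^ 3 ^ (e + 1) = 1 :=
    PresentedGroup.one_of_mem (rels := Grels e) (x := FreeGroup.of 0 ^ 3 ^ (e + 1)) (by simp [Grels])
  have r2 : y ^ 3 = 1 :=
    PresentedGroup.one_of_mem (rels := Grels e) (x := FreeGroup.of 1 ^ 3) (by simp [Grels])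
  have r3 : y⁻¹ * x⁻¹ * y * x * (x ^ 3 ^ e)⁻¹ = 1 :=
    PresentedGroup.one_of_mem (rels := Grels e) (x := (FreeGroup.of 1)⁻¹ * (FreeGroup.of 0)⁻¹ *
      FreeGroup.of 1 * FreeGroup.of 0 * (FreeGroup.of 0 ^ 3 ^ e)⁻¹) (by simp [Grels])
  have hc : x * y = y * x ^ (1 - 3 ^ e : ℤ) := by
    have h2 : x ^ (1 - 3 ^ e : ℤ) = x * (x ^ 3 ^ e)⁻¹ := by
      rw [zpow_sub, zpow_one]; norm_cast
    rw [h2]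
    have : x * y * (y⁻¹ * x⁻¹ * y * x * (x ^ 3 ^ e)⁻¹) = x * y := by rw [r3, mul_one]
    rw [← this]; group
  have key := conj_pow_aux x y _ hc
  have hform : ∀ g : PresentedGroup (Grels e), ∃ (b : ℕ) (a : ℤ), g = y ^ b * x ^ a := by
    intro g
    have hg : g ∈ Subgroup.closure (Set.range (PresentedGroup.of (rels := Grels e))) := by
      rw [PresentedGroup.closure_range_of]; trivial
    induction hg using Subgroup.closure_induction_left with
    | one => exact ⟨0, 0, by simp⟩
    | mul_left s hs g _ ih =>
      obtain ⟨b, a, rfl⟩ := ih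
      obtain ⟨i, rfl⟩ := hs
      fin_cases i
      · refine ⟨b, (1 - 3 ^ e) ^ b * 1 + a, ?_⟩
        rw [zpow_add, ← mul_assoc, ← mul_assoc, ← key, zpow_one]; rfl
      · exact ⟨b + 1, a, by rw [pow_succ', mul_assoc]; rfl⟩
    | inv_mul_cancel s hs g _ ih =>
      obtain ⟨b, a, rfl⟩ := ih
      obtain ⟨i, rfl⟩ := hs
      fin_cases i
      · refine ⟨b, (1 - 3 ^ e) ^ b * (-1) + a, ?_⟩
        rw [zpow_add, ← mul_assoc, ← mul_assoc, ← key, zpow_neg_one]; rfl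
      · refine ⟨2 + b, a, ?_⟩
        have : y⁻¹ = y ^ 2 := by
          rw [inv_eq_iff_mul_eq_one, ← pow_succ', r2]
        rw [pow_add, ← this, mul_assoc]; rfl
  let f : ZMod 3 × ZMod (3 ^ (e + 1)) → PresentedGroup (Grels e) :=
    fun p => y ^ p.1.val * x ^ p.2.val
  haveI : NeZero (3 ^ (e + 1)) := ⟨by positivity⟩
  have hinj : Function.Injective f := by
    have hl : Function.LeftInverse (fun g => theHom e he g (0, 0)) f := by
      intro p
      have e1 : theHom e he x = permX e := PresentedGroup.toGroup.of _
      have e2 : theHom e he y = permY e := PresentedGroup.toGroup.of _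
      simp only [f, map_mul, map_pow, e1, e2, Equiv.Perm.mul_apply, permX_pow, permY_pow]
      simp [ctw]
    exact hl.injective
  have hsurj : Function.Surjective f := by
    intro g
    obtain ⟨b, a, rfl⟩ := hform g
    refine ⟨((b : ZMod 3), (a : ZMod (3 ^ (e + 1)))), ?_⟩
    simp only [f]
    congr 1
    · rw [ZMod.val_natCast, ← pow_eq_pow_mod b r2]
    · rw [← zpow_natCast, ZMod.val_intCast]
      exact (zpow_eq_zpow_emod' a r1).symm
  have hb := Equiv.ofBijective f ⟨hinj, hsurj⟩
  refine ⟨Finite.of_equiv _ hb, ?_⟩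
  rw [← Nat.card_congr hb, Nat.card_prod, Nat.card_zmod, Nat.card_zmod]
  ring
end

section
/- For every integer e ≥ 1, the abelianization of the presented group G_e = ⟨x, y ∣ x^{3^{e+1}} = 1, y^3 = 1, [y,x] = x^{3^e}⟩ is isomorphic to (ZMod (3^e)) × (ZMod 3). -/
theorem stmt1 (e : ℕ) (he : 1 ≤ e) :
    Nonempty (Abelianization (PresentedGroup (Grels e)) ≃*
      Multiplicative (ZMod (3 ^ e) × ZMod 3)) := by
  -- forward map
  let v : Fin 2 → Multiplicative (ZMod (3 ^ e) × ZMod 3) :=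
    ![Multiplicative.ofAdd (1, 0), Multiplicative.ofAdd (0, 1)]
  have hx0 : Multiplicative.ofAdd ((1, 0) : ZMod (3 ^ e) × ZMod 3) ^ 3 ^ e = 1 := by
    rw [← ofAdd_nsmul, ← ofAdd_zero]
    congr 1
    ext
    · have := ZMod.natCast_self (3 ^ e)
      simpa using this
    · simp
  have hy0 : Multiplicative.ofAdd ((0, 1) : ZMod (3 ^ e) × ZMod 3) ^ 3 = 1 := by
    rw [← ofAdd_nsmul, ← ofAdd_zero]
    congr 1
    ext
    · simp
    · have := ZMod.natCast_self 3
      simpa using this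
  have hv : ∀ r ∈ Grels e, FreeGroup.lift v r = 1 := by
    intro r hr
    rcases hr with rfl | rfl | rfl
    · simp only [map_pow, FreeGroup.lift_apply_of, v, Matrix.cons_val_zero]
      rw [pow_succ, pow_mul, hx0, one_pow]
    · simp only [map_pow, FreeGroup.lift_apply_of, v, Matrix.cons_val_one, Matrix.cons_val_zero]
      exact hy0
    · simp only [map_mul, map_inv, map_pow, FreeGroup.lift_apply_of, v, Matrix.cons_val_one,
        Matrix.cons_val_zero]
      rw [hx0, inv_one, mul_one, mul_right_comm, inv_mul_cancel_right, inv_mul_cancel]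
  let f : Abelianization (PresentedGroup (Grels e)) →* Multiplicative (ZMod (3 ^ e) × ZMod 3) :=
    Abelianization.lift (PresentedGroup.toGroup hv)
  -- backward map
  let q : FreeGroup (Fin 2) →* Abelianization (PresentedGroup (Grels e)) :=
    Abelianization.of.comp (PresentedGroup.mk (Grels e))
  have hq : ∀ r ∈ Grels e, q r = 1 := by
    intro r hr
    have : PresentedGroup.mk (Grels e) r = 1 :=
      (QuotientGroup.eq_one_iff r).2 (Subgroup.subset_normalClosure hr)
    simp [q, this]
  let X := q (FreeGroup.of 0)
  let Y := q (FreeGroup.of 1)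
  have hY : Y ^ 3 = 1 := by
    have := hq (FreeGroup.of 1 ^ 3) (by simp [Grels])
    simpa only [map_pow] using this
  have hX : X ^ 3 ^ e = 1 := by
    have h : Y⁻¹ * X⁻¹ * Y * X * (X ^ 3 ^ e)⁻¹ = 1 := by
      have := hq _ (Or.inr (Or.inr rfl))
      simpa only [map_pow, map_mul, map_inv] using this
    have h2 : Y⁻¹ * X⁻¹ * Y * X = 1 := by
      rw [mul_right_comm Y⁻¹]; simp
    rw [h2, one_mul, inv_eq_one] at h
    exact h
  let gX : ZMod (3 ^ e) →+ Additive (Abelianization (PresentedGroup (Grels e))) :=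
    ZMod.lift (3 ^ e) ⟨zmultiplesHom _ (Additive.ofMul X), by
      rw [zmultiplesHom_apply, natCast_zsmul, ← ofMul_pow, hX, ofMul_one]⟩
  let gY : ZMod 3 →+ Additive (Abelianization (PresentedGroup (Grels e))) :=
    ZMod.lift 3 ⟨zmultiplesHom _ (Additive.ofMul Y), by
      rw [zmultiplesHom_apply, natCast_zsmul, ← ofMul_pow, hY, ofMul_one]⟩
  have hgX : gX 1 = Additive.ofMul X := by
    have := ZMod.lift_coe (3 ^ e) (A := Additive (Abelianization (PresentedGroup (Grels e))))
      ⟨zmultiplesHom _ (Additive.ofMul X), by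
      rw [zmultiplesHom_apply, natCast_zsmul, ← ofMul_pow, hX, ofMul_one]⟩ 1
    simpa using this
  have hgY : gY 1 = Additive.ofMul Y := by
    have := ZMod.lift_coe 3 (A := Additive (Abelianization (PresentedGroup (Grels e))))
      ⟨zmultiplesHom _ (Additive.ofMul Y), by
      rw [zmultiplesHom_apply, natCast_zsmul, ← ofMul_pow, hY, ofMul_one]⟩ 1
    simpa using this
  let g : Multiplicative (ZMod (3 ^ e) × ZMod 3) →* Abelianization (PresentedGroup (Grels e)) :=
    AddMonoidHom.toMultiplicativeLeft (gX.coprod gY)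
  have hg0 : g (Multiplicative.ofAdd (1, 0)) = X := by
    change (gX 1 + gY 0).toMul = X
    rw [map_zero, add_zero, hgX]; rfl
  have hg1 : g (Multiplicative.ofAdd (0, 1)) = Y := by
    change (gX 0 + gY 1).toMul = Y
    rw [map_zero, zero_add, hgY]; rfl
  have hf0 : f X = Multiplicative.ofAdd (1, 0) := by
    change PresentedGroup.toGroup hv (PresentedGroup.of 0) = _
    rw [PresentedGroup.toGroup.of]; rfl
  have hf1 : f Y = Multiplicative.ofAdd (0, 1) := by
    change PresentedGroup.toGroup hv (PresentedGroup.of 1) = _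
    rw [PresentedGroup.toGroup.of]; rfl
  refine ⟨MonoidHom.toMulEquiv f g ?_ ?_⟩
  · apply Abelianization.hom_ext
    apply PresentedGroup.ext
    intro i
    fin_cases i
    · change g (f X) = X
      rw [hf0, hg0]
    · change g (f Y) = Y
      rw [hf1, hg1]
  · apply MonoidHom.ext
    intro z
    obtain ⟨a, ha⟩ := ZMod.natCast_zmod_surjective (n := 3 ^ e) (Multiplicative.toAdd z).1
    obtain ⟨b, hb⟩ := ZMod.natCast_zmod_surjective (n := 3) (Multiplicative.toAdd z).2
    have hz : z = Multiplicative.ofAdd ((1, 0) : ZMod (3 ^ e) × ZMod 3) ^ a *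
        Multiplicative.ofAdd ((0, 1) : ZMod (3 ^ e) × ZMod 3) ^ b := by
      rw [← ofAdd_nsmul, ← ofAdd_nsmul, ← ofAdd_add]
      apply Multiplicative.toAdd.injective
      apply Prod.ext
      · rw [← ha]; simp
      · rw [← hb]; simp
    have hfg : f (g z) = z := by
      rw [hz, map_mul, map_pow, map_pow, hg0, hg1, map_mul, map_pow, map_pow, hf0, hf1]
    exact hfg
end

section
/- For every integer e ≥ 2, the presented group G_e = ⟨x, y ∣ x^{3^{e+1}} = 1, y^3 = 1, [y,x] = x^{3^e}⟩ is not a σ-group: there is no automorphism σ of G_e such that for every g ∈ G_e the image of σ(g) in the abelianization G_e/[G_e,G_e] equals the inverse of the image of g. -/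
theorem perm_model (e : ℕ) (he : 2 ≤ e) :
    ∃ X Y : Equiv.Perm (ZMod (3 ^ (e + 1))), X ^ 3 ^ (e + 1) = 1 ∧ Y ^ 3 = 1 ∧
      Y⁻¹ * X⁻¹ * Y * X * (X ^ 3 ^ e)⁻¹ = 1 ∧ X ^ 3 ^ e ≠ 1 := by
  have h3 : (3 : ZMod (3 ^ (e + 1))) ^ (e + 1) = 0 := by
    have := ZMod.natCast_self (3 ^ (e + 1))
    exact_mod_cast this
  obtain ⟨w, hw⟩ : ∃ w : ZMod (3 ^ (e + 1)), w = 3 ^ e := ⟨_, rfl⟩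
  have hw3 : 3 * w = 0 := by rw [hw, ← h3]; ring
  have hww : w * w = 0 := by
    obtain ⟨k, rfl⟩ : ∃ k, e = k + 1 := ⟨e - 1, by omega⟩
    have : w * w = 3 * w * 3 ^ k := by
      nth_rewrite 1 [hw]
      ring
    rw [this, hw3, zero_mul]
  let X : Equiv.Perm (ZMod (3 ^ (e + 1))) := Equiv.addRight 1
  let Y : Equiv.Perm (ZMod (3 ^ (e + 1))) :=
    { toFun := fun t => (1 + w) * t
      invFun := fun t => (1 - w) * t
      left_inv := fun t => by linear_combination (-t) * hww
      right_inv := fun t => by linear_combination (-t) * hww }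
  have hX : ∀ (n : ℕ) t, (X ^ n) t = t + n := by
    intro n
    induction n with
    | zero => intro t; simp
    | succ k ih =>
      intro t
      rw [pow_succ X k, Equiv.Perm.mul_apply, ih]
      change t + 1 + _ = _
      push_cast; ring
  refine ⟨X, Y, ?_, ?_, ?_, ?_⟩
  · ext1 t
    rw [hX]
    push_cast
    simp [h3]
  · ext1 t
    change (1 + w) * ((1 + w) * ((1 + w) * t)) = t
    linear_combination t * hw3 + (3 + w) * t * hww
  · rw [mul_inv_eq_one]
    ext1 t
    rw [hX]
    change (1 - w) * ((1 + w) * (t + 1) + -1) = _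
    push_cast
    rw [← hw]
    linear_combination (-t - 1) * hww
  · intro h
    have h0 := hX (3 ^ e) 0
    rw [h] at h0
    have h1 : ((3 ^ e : ℕ) : ZMod (3 ^ (e + 1))) = 0 := by simpa using h0.symm
    rw [ZMod.natCast_eq_zero_iff] at h1
    have := (Nat.pow_dvd_pow_iff_le_right (by norm_num : 1 < 3)).1 h1
    omega

theorem generic {G : Type*} [Group G] (e : ℕ) (he : 2 ≤ e) (x y : G)
    (hx : x ^ 3 ^ (e + 1) = 1)
    (hr : y⁻¹ * x⁻¹ * y * x * (x ^ 3 ^ e)⁻¹ = 1)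
    (hg : Subgroup.closure {x, y} = ⊤) (hz : x ^ 3 ^ e ≠ 1) (σ : G ≃* G)
    (hσ : ∀ g, Abelianization.of (σ g) = (Abelianization.of g)⁻¹) : False := by
  obtain ⟨z, hzdef⟩ : ∃ z, z = x ^ 3 ^ e := ⟨_, rfl⟩
  rw [← hzdef] at hz hr
  have hr' : y⁻¹ * x⁻¹ * y * x = z := mul_inv_eq_one.1 hr
  have hz3 : z ^ 3 = 1 := by rw [hzdef, ← pow_mul, ← pow_succ, hx]
  have hzx : Commute z x := by rw [hzdef]; exact (Commute.refl x).pow_left _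
  have hzy : Commute z y := by
    have h1 : y⁻¹ * x⁻¹ * y = z * x⁻¹ := by rw [← hr']; group
    have h2 : (y⁻¹ * x⁻¹ * y) ^ 3 ^ e = y⁻¹ * z⁻¹ * y := by
      have := conj_pow (i := 3 ^ e) (a := y⁻¹) (b := x⁻¹)
      rw [inv_inv] at this
      rw [this, inv_pow, ← hzdef]
    rw [h1, (hzx.inv_right).mul_pow, inv_pow, ← hzdef] at h2
    have h4 : z ^ 3 ^ e = 1 := by
      obtain ⟨k, rfl⟩ : ∃ k, e = k + 1 := ⟨e - 1, by omega⟩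
      rw [pow_succ', pow_mul, hz3, one_pow]
    rw [h4, one_mul] at h2
    have h5 : y * z⁻¹ = z⁻¹ * y := by nth_rewrite 1 [h2]; group
    have : Commute y z⁻¹ := h5
    exact (Commute.inv_right_iff.1 this).symm
  have hcen : ∀ g, Commute z g := by
    have : Subgroup.closure {x, y} ≤ Subgroup.centralizer {z} := by
      rw [Subgroup.closure_le]
      rintro g (rfl | rfl)
      · exact Subgroup.mem_centralizer_singleton_iff.2 hzx.symm.eq
      · exact Subgroup.mem_centralizer_singleton_iff.2 hzy.symm.eq
    intro g
    have hgm : g ∈ Subgroup.centralizer {z} := this (hg ▸ Subgroup.mem_top g)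
    exact (Subgroup.mem_centralizer_singleton_iff.1 hgm).symm
  let K := Subgroup.zpowers z
  have hKc : ∀ c ∈ K, ∀ g, Commute c g := by
    rintro c ⟨n, rfl⟩ g
    exact (hcen g).zpow_left n
  have hK3 : ∀ c ∈ K, c ^ 3 = 1 := by
    rintro c ⟨n, rfl⟩
    change (z ^ n) ^ 3 = 1
    rw [← zpow_natCast, ← zpow_mul, mul_comm, zpow_mul, zpow_natCast, hz3, one_zpow]
  have hKn : K.Normal := ⟨fun c hc g => by
    rw [← (hKc c hc g).eq]; simpa using hc⟩
  have hxy : Commute (QuotientGroup.mk' K x) (QuotientGroup.mk' K y) := by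
    have h1 : QuotientGroup.mk' K z = 1 :=
      (QuotientGroup.eq_one_iff z).2 (Subgroup.mem_zpowers z)
    rw [← hr'] at h1
    simp only [map_mul, map_inv] at h1
    have h2 := congrArg (fun t => QuotientGroup.mk' K x * QuotientGroup.mk' K y * t) h1
    simp only [mul_one] at h2
    rw [commute_iff_eq, ← h2]; group
  have hgen : ∀ a b : G, (∀ g ∈ ({x, y} : Set G), Commute (QuotientGroup.mk' K g) (QuotientGroup.mk' K b)) →
      Commute (QuotientGroup.mk' K a) (QuotientGroup.mk' K b) := by
    intro a b h
    have : Subgroup.closure {x, y} ≤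
        (Subgroup.centralizer {QuotientGroup.mk' K b}).comap (QuotientGroup.mk' K) := by
      rw [Subgroup.closure_le]
      intro g hgm
      exact Subgroup.mem_centralizer_singleton_iff.2 (h g hgm).eq
    exact Subgroup.mem_centralizer_singleton_iff.1 (this (hg ▸ Subgroup.mem_top a))
  have hcomm : ∀ a b : G, Commute (QuotientGroup.mk' K a) (QuotientGroup.mk' K b) := by
    intro a b
    apply hgen
    rintro g (rfl | rfl)
    · refine (hgen _ _ ?_).symm
      rintro g (rfl | rfl)
      · exact Commute.refl _
      · exact hxy.symm
    · refine (hgen _ _ ?_).symm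
      rintro g (rfl | rfl)
      · exact hxy
      · exact Commute.refl _
  have hle : commutator G ≤ K := by
    rw [commutator_def, Subgroup.commutator_le]
    intro a _ b _
    rw [← QuotientGroup.eq_one_iff]
    exact (map_commutatorElement (QuotientGroup.mk' K) a b).trans
      (commutatorElement_eq_one_iff_commute.2 (hcomm a b))
  have hσ' : ∀ g, ∃ c ∈ K, σ g = g⁻¹ * c := by
    intro g
    refine ⟨g * σ g, hle ?_, by group⟩
    rw [← Abelianization.ker_of, MonoidHom.mem_ker, map_mul, hσ, mul_inv_cancel]
  obtain ⟨c, hc, hcx⟩ := hσ' x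
  obtain ⟨d, hd, hdy⟩ := hσ' y
  have hs1 : σ z = z⁻¹ := by
    have h4 : c ^ 3 ^ e = 1 := by
      obtain ⟨k, rfl⟩ : ∃ k, e = k + 1 := ⟨e - 1, by omega⟩
      rw [pow_succ', pow_mul, hK3 c hc, one_pow]
    have h5 : σ z = (x⁻¹ * c) ^ 3 ^ e := by rw [hzdef, map_pow, hcx]
    rw [h5, ((hKc c hc x⁻¹).symm).mul_pow, h4, mul_one, inv_pow, ← hzdef]
  have hyx : y * x = x * y * z := by rw [← hr']; group
  have hs2 : σ z = z := by
    have h1 : σ z = (y⁻¹ * d)⁻¹ * (x⁻¹ * c)⁻¹ * (y⁻¹ * d) * (x⁻¹ * c) := by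
      rw [← hcx, ← hdy, ← map_inv, ← map_inv, ← map_mul, ← map_mul, ← map_mul, hr']
    have h2 : (y⁻¹ * d)⁻¹ * (x⁻¹ * c)⁻¹ * (y⁻¹ * d) * (x⁻¹ * c) = y * x * y⁻¹ * x⁻¹ := by
      have e1 : y⁻¹ * d = d * y⁻¹ := (hKc d hd y⁻¹).eq.symm
      have e2 : (x⁻¹ * c)⁻¹ * (d * y⁻¹) = d * ((x⁻¹ * c)⁻¹ * y⁻¹) := by
        rw [← mul_assoc, ← (hKc d hd _).eq, mul_assoc]
      have e3 : c⁻¹ * (x * y⁻¹ * x⁻¹) * c = x * y⁻¹ * x⁻¹ := by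
        rw [mul_assoc, ← (hKc c hc _).eq, inv_mul_cancel_left]
      calc _ = (d * y⁻¹)⁻¹ * ((x⁻¹ * c)⁻¹ * (d * y⁻¹)) * (x⁻¹ * c) := by rw [e1]; group
        _ = y * (c⁻¹ * (x * y⁻¹ * x⁻¹) * c) := by rw [e2]; group
        _ = _ := by rw [e3]; group
    rw [h1, h2, hyx, mul_assoc, mul_assoc, (hcen _).eq]
    group
  have h6 : z = z⁻¹ := hs2.symm.trans hs1
  apply hz
  have h7 : z * z = 1 := by nth_rewrite 1 [h6]; group
  rw [pow_succ, pow_two, h7, one_mul] at hz3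
  exact hz3

theorem stmt3 (e : ℕ) (he : 2 ≤ e) :
    ¬ ∃ σ : PresentedGroup (Grels e) ≃* PresentedGroup (Grels e),
      ∀ g : PresentedGroup (Grels e),
        Abelianization.of (σ g) = (Abelianization.of g)⁻¹ := by
  rintro ⟨σ, hσ⟩
  have hrel : ∀ r ∈ Grels e, PresentedGroup.mk (Grels e) r = 1 := fun r hr =>
    PresentedGroup.one_of_mem hr
  refine generic e he (PresentedGroup.of 0) (PresentedGroup.of 1) ?_ ?_ ?_ ?_ σ hσ
  · have := hrel (FreeGroup.of 0 ^ 3 ^ (e + 1)) (Or.inl rfl)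
    rw [map_pow] at this
    exact this
  · have := hrel ((FreeGroup.of 1)⁻¹ * (FreeGroup.of 0)⁻¹ * FreeGroup.of 1 * FreeGroup.of 0 *
     (FreeGroup.of 0 ^ 3 ^ e)⁻¹) (Or.inr (Or.inr rfl))
    simp only [map_mul, map_inv, map_pow] at this
    exact this
  · rw [← PresentedGroup.closure_range_of (Grels e)]
    congr 1
    ext g
    simp [Fin.exists_fin_two, eq_comm]
  · obtain ⟨X, Y, h1, h2, h3, h4⟩ := perm_model e he
    have hf : ∀ r ∈ Grels e, FreeGroup.lift ![X, Y] r = 1 := by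
      rintro r (rfl | rfl | rfl)
      · simpa using h1
      · simpa using h2
      · simpa using h3
    intro h
    apply h4
    have := congrArg (PresentedGroup.toGroup hf) h
    simpa [PresentedGroup.toGroup.of] using this
end

section
/- For every integer e ≥ 3, there exists a finite metabelian group T of order 3^{e+4}, generated by two elements x and y satisfying x^{3^{e+1}} = 1, y^3 = s₃, and t₃ = s₃, whose abelianization is isomorphic to (ZMod (3^{e+1})) × (ZMod 3). -/
/-- The commutator `[a,b] = a⁻¹ * b⁻¹ * a * b`. -/
def comm' {G : Type*} [Group G] (a b : G) : G := a⁻¹ * b⁻¹ * a * b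

/-- `s₂ = [y,x]` and `s_j = [s_(j-1), x]` for `j ≥ 3`. -/
def sgen {G : Type*} [Group G] (x y : G) : ℕ → G
  | 0 => 1
  | 1 => 1
  | 2 => comm' y x
  | (n + 3) => comm' (sgen x y (n + 2)) x

/-- `t_j = [s_(j-1), y]` for `j ≥ 3`. -/
def tgenD {G : Type*} [Group G] (x y : G) (j : ℕ) : G := comm' (sgen x y (j - 1)) y

/-- `t₂ = [y,x]` and `t_j = [t_(j-1), y]` for `j ≥ 3`. -/
def tgenB {G : Type*} [Group G] (x y : G) : ℕ → G
  | 0 => 1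
  | 1 => 1
  | 2 => comm' y x
  | (n + 3) => comm' (tgenB x y (n + 2)) y

/-- A σ-group: a group admitting an automorphism acting as inversion on the
abelianization. -/
def IsSigmaGroup (G : Type*) [Group G] : Prop :=
  ∃ σ : G ≃* G, ∀ g : G, Abelianization.of (σ g) = (Abelianization.of g)⁻¹

/-- A group is metabelian if its commutator subgroup is abelian, i.e. the second
derived subgroup is trivial. -/
def IsMetabelian (G : Type*) [Group G] : Prop := derivedSeries G 2 = ⊥

/-- The extraspecial group of order 27 and exponent 9; `(a, b)` stands for `y ^ a * s ^ b`. -/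
def M27 : Type := ZMod 9 × ZMod 3

namespace M27

instance : DecidableEq M27 := inferInstanceAs (DecidableEq (ZMod 9 × ZMod 3))
instance : Fintype M27 := inferInstanceAs (Fintype (ZMod 9 × ZMod 3))

/-- The pairing giving the twist. -/
def kap (b : ZMod 3) (a : ZMod 9) : ZMod 9 := 3 * (b.val : ZMod 9) * a

lemma kap_add_left : ∀ b c a, kap (b + c) a = kap b a + kap c a := by decide
lemma kap_add_right (b a c) : kap b (a + c) = kap b a + kap b c := by
  unfold kap; ring
lemma kap_kap (b c a) : kap b (kap c a) = 0 := by
  unfold kap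
  have h : (9 : ZMod 9) = 0 := by decide
  linear_combination ((b.val : ZMod 9) * c.val * a) * h

instance : Mul M27 := ⟨fun m n => (m.1 + n.1 + kap m.2 n.1, m.2 + n.2)⟩
instance : One M27 := ⟨((0 : ZMod 9), (0 : ZMod 3))⟩
instance : Inv M27 := ⟨fun m => (-m.1 + kap m.2 m.1, -m.2)⟩

lemma mul_def (m n : M27) : m * n = (m.1 + n.1 + kap m.2 n.1, m.2 + n.2) := rfl

instance : Group M27 := Group.ofLeftAxioms
  (by
    intro a b c
    apply Prod.ext
    · change a.1 + b.1 + kap a.2 b.1 + c.1 + kap (a.2 + b.2) c.1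
        = a.1 + (b.1 + c.1 + kap b.2 c.1) + kap a.2 (b.1 + c.1 + kap b.2 c.1)
      simp only [kap_add_left, kap_add_right, kap_kap]; ring
    · exact add_assoc _ _ _)
  (by decide)
  (by decide)

/-- The forward map. -/
def phiFun (m : M27) : M27 := (m.1 + 6 * m.1 * (m.1 - 1) + 3 * (m.2.val : ZMod 9), m.2 + (m.1.val : ZMod 3))

set_option maxRecDepth 100000 in
/-- The automorphism induced by `x`. -/
def phi : M27 ≃* M27 where
  toFun := phiFun
  invFun m := phiFun (phiFun m)
  left_inv := by unfold Function.LeftInverse; decide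
  right_inv := by unfold Function.RightInverse Function.LeftInverse; decide
  map_mul' := by decide

lemma phi_pow : phi ^ 3 = 1 := by
  apply MulEquiv.ext
  intro m
  change phi (phi (phi m)) = m
  exact phi.left_inv m

/-- generators -/
def y : M27 := ((1 : ZMod 9), (0 : ZMod 3))
/-- generators -/
def s : M27 := ((0 : ZMod 9), (1 : ZMod 3))
/-- generators -/
def z : M27 := ((3 : ZMod 9), (0 : ZMod 3))

set_option maxRecDepth 100000 in
lemma eq_pow : ∀ m : M27, m = y ^ m.1.val * s ^ m.2.val := by decide

set_option maxRecDepth 100000 in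
lemma eq_pow' : ∀ m : M27, (m.1.val : ZMod 3) = 0 → m = z ^ (m.1.val / 3) * s ^ m.2.val := by decide

set_option maxRecDepth 100000 in
lemma comm_of : ∀ m n : M27, (m.1.val : ZMod 3) = 0 → (n.1.val : ZMod 3) = 0 → m * n = n * m := by
  decide

set_option maxRecDepth 100000 in
/-- first coordinate mod 3 -/
def pr : M27 →* Multiplicative (ZMod 3) where
  toFun m := Multiplicative.ofAdd (m.1.val : ZMod 3)
  map_one' := by decide
  map_mul' := by decide

set_option maxRecDepth 100000 in
lemma pr_phi : ∀ m, pr (phi m) = pr m := by decide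

/-- The action. -/
def act (e : ℕ) : Multiplicative (ZMod (3 ^ (e + 1))) →* MulAut M27 :=
  AddMonoidHom.toMultiplicativeLeft (ZMod.lift (3 ^ (e + 1))
    ⟨zmultiplesHom (Additive (MulAut M27)) (Additive.ofMul (phi⁻¹ : MulAut M27)), by
      rw [zmultiplesHom_apply, natCast_zsmul, ← ofMul_pow, inv_pow, pow_succ', pow_mul, phi_pow]
      simp⟩)

lemma act_one (e : ℕ) : act e (Multiplicative.ofAdd 1) = (phi⁻¹ : MulAut M27) := by
  have := ZMod.lift_coe (3 ^ (e + 1))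
    (⟨zmultiplesHom (Additive (MulAut M27)) (Additive.ofMul (phi⁻¹ : MulAut M27)), by
      rw [zmultiplesHom_apply, natCast_zsmul, ← ofMul_pow, inv_pow, pow_succ', pow_mul, phi_pow]
      simp⟩ : {f : ℤ →+ Additive (MulAut M27) // f (3 ^ (e + 1) : ℕ) = 0}) 1
  simp only [Int.cast_one] at this
  change Additive.toMul (ZMod.lift _ _ 1) = _
  rw [this]
  simp

lemma ofAdd_eq_pow (n : ℕ) [NeZero n] (c : Multiplicative (ZMod n)) :
    c = (Multiplicative.ofAdd (1 : ZMod n)) ^ (Multiplicative.toAdd c).val := by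
  rw [← ofAdd_nsmul]
  simp

lemma pr_act (e : ℕ) (c) (m : M27) : pr (act e c m) = pr m := by
  have h1 : ∀ m, pr (phi⁻¹ m) = pr m := fun m => by
    conv_rhs => rw [← MulAut.apply_inv_self M27 phi m]
    exact (pr_phi _).symm
  rw [ofAdd_eq_pow _ c, map_pow, act_one]
  generalize (Multiplicative.toAdd c).val = k
  induction k generalizing m with
  | zero => simp
  | succ k ih => rw [pow_succ, MulAut.mul_apply, ih, h1]

/-- The group. -/
abbrev TT (e : ℕ) := M27 ⋊[act e] Multiplicative (ZMod (3 ^ (e + 1)))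

/-- x -/
def X (e : ℕ) : TT e := SemidirectProduct.inr (Multiplicative.ofAdd 1)
/-- y -/
def Y (e : ℕ) : TT e := SemidirectProduct.inl y

lemma comm_X (e : ℕ) (m : M27) :
    comm' (SemidirectProduct.inl m : TT e) (X e) = SemidirectProduct.inl (m⁻¹ * phi m) := by
  have h : (X e)⁻¹ * SemidirectProduct.inl m * X e = SemidirectProduct.inl (phi m) := by
    have := SemidirectProduct.inl_aut_inv (φ := act e) (Multiplicative.ofAdd 1) m
    rw [← map_inv, map_inv (act e), act_one, inv_inv] at this
    rw [this, X, map_inv]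
  unfold comm'
  rw [map_mul, map_inv, ← h]
  group

lemma s2 (e : ℕ) : comm' (Y e) (X e) = SemidirectProduct.inl s := by
  rw [Y, comm_X]; congr 1

lemma s3 (e : ℕ) : comm' (SemidirectProduct.inl s) (X e) = SemidirectProduct.inl z := by
  rw [comm_X]; congr 1

lemma comm'_mem {G : Type*} [Group G] (H : Subgroup G) {a b : G} (ha : a ∈ H) (hb : b ∈ H) :
    comm' a b ∈ H :=
  H.mul_mem (H.mul_mem (H.mul_mem (H.inv_mem ha) (H.inv_mem hb)) ha) hb

lemma comm'_mem_commutator {G : Type*} [Group G] (a b : G) : comm' a b ∈ commutator G := by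
  have := Subgroup.commutator_mem_commutator (Subgroup.mem_top a⁻¹) (Subgroup.mem_top b⁻¹)
  rw [commutatorElement_def, inv_inv, inv_inv] at this
  exact this

lemma closure_XY (e : ℕ) : Subgroup.closure {X e, Y e} = ⊤ := by
  rw [eq_top_iff]
  rintro g -
  have hx : X e ∈ Subgroup.closure {X e, Y e} := Subgroup.subset_closure (by simp)
  have hy : Y e ∈ Subgroup.closure {X e, Y e} := Subgroup.subset_closure (by simp)
  have hs := comm'_mem _ hy hx
  rw [s2] at hs
  rw [← SemidirectProduct.inl_left_mul_inr_right g]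
  refine mul_mem ?_ ?_
  · rw [eq_pow g.left, map_mul, map_pow, map_pow]
    exact mul_mem (pow_mem hy _) (pow_mem hs _)
  · rw [ofAdd_eq_pow _ g.right, map_pow]
    exact pow_mem hx _

/-- The abelianization map. -/
def ab (e : ℕ) : TT e →* Multiplicative (ZMod (3 ^ (e + 1)) × ZMod 3) where
  toFun g := Multiplicative.ofAdd (Multiplicative.toAdd g.right, Multiplicative.toAdd (pr g.left))
  map_one' := by simp
  map_mul' g h := by
    simp only [SemidirectProduct.mul_left, SemidirectProduct.mul_right, map_mul, pr_act]
    rfl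

lemma mem_ker (e : ℕ) (g : TT e) :
    g ∈ (ab e).ker ↔ ∃ m : M27, (m.1.val : ZMod 3) = 0 ∧ g = SemidirectProduct.inl m := by
  rw [MonoidHom.mem_ker]
  constructor
  · intro h
    have h1 := congrArg (fun t => (Multiplicative.toAdd t).1) h
    have h2 := congrArg (fun t => (Multiplicative.toAdd t).2) h
    refine ⟨g.left, h2, SemidirectProduct.ext rfl h1⟩
  · rintro ⟨m, hm, rfl⟩
    exact congrArg (fun t => Multiplicative.ofAdd ((0 : ZMod (3 ^ (e + 1))), t)) hm

lemma ker_eq (e : ℕ) : (ab e).ker = commutator (TT e) := by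
  apply le_antisymm
  · intro g hg
    obtain ⟨m, hm, rfl⟩ := (mem_ker e g).1 hg
    have hs := comm'_mem_commutator (Y e) (X e)
    rw [s2] at hs
    have hz := comm'_mem_commutator (SemidirectProduct.inl s) (X e)
    rw [s3] at hz
    rw [eq_pow' m hm, map_mul, map_pow, map_pow]
    exact mul_mem (pow_mem hz _) (pow_mem hs _)
  · exact Abelianization.commutator_subset_ker _

lemma pr_surj : Function.Surjective pr := by
  intro t
  exact ⟨((Multiplicative.toAdd t).val, 0), by revert t; decide⟩

lemma ab_surj (e : ℕ) : Function.Surjective (ab e) := by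
  intro t
  obtain ⟨m, hm⟩ := pr_surj (Multiplicative.ofAdd (Multiplicative.toAdd t).2)
  refine ⟨⟨m, Multiplicative.ofAdd (Multiplicative.toAdd t).1⟩, ?_⟩
  change Multiplicative.ofAdd ((Multiplicative.toAdd t).1, Multiplicative.toAdd (pr m)) = t
  rw [hm]; rfl

lemma metab (e : ℕ) : IsMetabelian (TT e) := by
  unfold IsMetabelian
  rw [derivedSeries_succ, derivedSeries_one, ← ker_eq, Subgroup.commutator_eq_bot_iff_le_centralizer]
  intro g hg
  rw [Subgroup.mem_centralizer_iff]
  intro h hh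
  obtain ⟨m, hm, rfl⟩ := (mem_ker e g).1 hg
  obtain ⟨n, hn, rfl⟩ := (mem_ker e h).1 hh
  rw [← map_mul, ← map_mul, comm_of _ _ hn hm]

end M27

theorem stmt4 (e : ℕ) (he : 3 ≤ e) :
    ∃ (T : Type) (_ : Group T) (_ : Finite T) (x y : T),
      Subgroup.closure {x, y} = ⊤ ∧
      Nat.card T = 3 ^ (e + 4) ∧
      IsMetabelian T ∧
      x ^ 3 ^ (e + 1) = 1 ∧
      y ^ 3 = sgen x y 3 ∧
      tgenD x y 3 = sgen x y 3 ∧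
      Nonempty (Abelianization T ≃* Multiplicative (ZMod (3 ^ (e + 1)) × ZMod 3)) := by
  refine ⟨M27.TT e, inferInstance, Finite.of_equiv _ SemidirectProduct.equivProd.symm,
    M27.X e, M27.Y e, M27.closure_XY e, ?_, M27.metab e, ?_, ?_, ?_, ?_⟩
  · rw [SemidirectProduct.card]
    have h1 : Nat.card M27 = 27 := by rw [Nat.card_eq_fintype_card]; rfl
    have h2 : Nat.card (Multiplicative (ZMod (3 ^ (e + 1)))) = 3 ^ (e + 1) := Nat.card_zmod _
    rw [h1, h2]; ring
  · rw [M27.X, ← map_pow, ← ofAdd_nsmul]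
    simp
  · change _ = comm' (comm' (M27.Y e) (M27.X e)) (M27.X e)
    rw [M27.s2, M27.s3, M27.Y, ← map_pow]
    congr 1
  · change comm' (comm' (M27.Y e) (M27.X e)) (M27.Y e) = comm' (comm' (M27.Y e) (M27.X e)) (M27.X e)
    rw [M27.s2, M27.s3, M27.Y]
    unfold comm'
    rw [← map_inv, ← map_inv, ← map_mul, ← map_mul, ← map_mul]
    congr 1
  · exact ⟨(QuotientGroup.quotientMulEquivOfEq (M27.ker_eq e).symm).trans
      (QuotientGroup.quotientKerEquivOfSurjective (M27.ab e) (M27.ab_surj e))⟩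
end

section
/- For every integer e ≥ 3 and each i ∈ {2,3}, there exists a finite metabelian σ-group G of order 3^{4+e}, generated by two elements x and y satisfying x^{3^{e+1}} = 1, y^3 = s₃, and t₃ = s₃·x^{(i-1)·3^e}, whose abelianization is isomorphic to (ZMod (3^e)) × (ZMod 3). -/
/-- multiplication by `d` as a map `ZMod 3 → ZMod N`, where `N = d * 3`. -/
def al (d N : ℕ) (h : N = d * 3) : ZMod 3 →+ ZMod N :=
  ZMod.lift 3 ⟨zmultiplesHom (ZMod N) (d : ZMod N), by
    subst h
    simp only [zmultiplesHom_apply]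
    have : ((d * 3 : ℕ) : ZMod (d * 3)) = 0 := ZMod.natCast_self _
    push_cast at this ⊢
    rw [zsmul_eq_mul, ← this]; push_cast; ring⟩

theorem al_nat (d N : ℕ) (h : N = d * 3) (n : ℕ) : al d N h (n : ZMod 3) = (n * d : ℕ) := by
  have := ZMod.lift_coe 3 (A := ZMod N) ⟨zmultiplesHom (ZMod N) (d : ZMod N), by
    subst h
    simp only [zmultiplesHom_apply]
    have : ((d * 3 : ℕ) : ZMod (d * 3)) = 0 := ZMod.natCast_self _
    push_cast at this ⊢
    rw [zsmul_eq_mul, ← this]; push_cast; ring⟩ (n : ℤ)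
  unfold al
  simpa using this

theorem al_ker (d N : ℕ) (h : N = d * 3) (hd : 0 < d) (a : ZMod N)
    (ha : ZMod.castHom (Dvd.intro 3 h.symm) (ZMod d) a = 0) : ∃ z, a = al d N h z := by
  have : NeZero N := ⟨by omega⟩
  obtain ⟨n, rfl⟩ := ZMod.natCast_zmod_surjective a
  rw [map_natCast, ZMod.natCast_eq_zero_iff] at ha
  obtain ⟨c, rfl⟩ := ha
  exact ⟨c, by rw [al_nat, mul_comm]⟩

theorem al_cast (d N r : ℕ) (h : N = d * 3) (hr : r ∣ d) (hN : r ∣ N) (z : ZMod 3) :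
    ZMod.castHom hN (ZMod r) (al d N h z) = 0 := by
  obtain ⟨n, rfl⟩ := ZMod.natCast_zmod_surjective z
  rw [al_nat, map_natCast, ZMod.natCast_eq_zero_iff]
  exact Dvd.dvd.mul_left hr n

/-- normal forms `x^a y^b s^c`; here `e = m + 1` and `t₃ = s₃ w^k`. -/
@[ext] structure DG (m : ℕ) (k : ZMod 3) where
  a : ZMod (3 ^ (m + 2))
  b : ZMod 9
  c : ZMod 3

namespace DG
variable {m : ℕ} {k : ZMod 3}

def A (m : ℕ) : ZMod 3 →+ ZMod (3 ^ (m + 2)) := al (3 ^ (m + 1)) _ (by ring)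
def B : ZMod 3 →+ ZMod 9 := al 3 9 rfl
def P (m : ℕ) : ZMod (3 ^ (m + 2)) →+* ZMod 3 :=
  ZMod.castHom (dvd_pow_self 3 (by omega)) _
def Q : ZMod 9 →+* ZMod 3 := ZMod.castHom (by norm_num) _

@[simp] theorem P_A (z : ZMod 3) : P m (A m z) = 0 :=
  al_cast _ _ _ _ (dvd_pow_self 3 (by omega)) _ z
@[simp] theorem Q_B (z : ZMod 3) : Q (B z) = 0 :=
  al_cast 3 9 3 rfl (by norm_num) _ z

def V (_p q c p' q' : ZMod 3) : ZMod 3 := p' * (q - q ^ 2) + p' * q * q' + c * q'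
def W (p q c p' q' : ZMod 3) : ZMod 3 := V p q c p' q' + q * (p' - p' ^ 2) + c * p'

instance : Mul (DG m k) := ⟨fun g h =>
  ⟨g.a + h.a + A m (k * V (P m g.a) (Q g.b) g.c (P m h.a) (Q h.b)),
   g.b + h.b + B (W (P m g.a) (Q g.b) g.c (P m h.a) (Q h.b)),
   g.c + h.c + P m h.a * Q g.b⟩⟩
instance : One (DG m k) := ⟨⟨0, 0, 0⟩⟩
instance : Inv (DG m k) := ⟨fun g =>
  ⟨-g.a - A m (k * V (-P m g.a) (-Q g.b) (-g.c + P m g.a * Q g.b) (P m g.a) (Q g.b)),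
   -g.b - B (W (-P m g.a) (-Q g.b) (-g.c + P m g.a * Q g.b) (P m g.a) (Q g.b)),
   -g.c + P m g.a * Q g.b⟩⟩

@[simp] theorem mul_a (g h : DG m k) : (g * h).a =
  g.a + h.a + A m (k * V (P m g.a) (Q g.b) g.c (P m h.a) (Q h.b)) := rfl
@[simp] theorem mul_b (g h : DG m k) : (g * h).b =
  g.b + h.b + B (W (P m g.a) (Q g.b) g.c (P m h.a) (Q h.b)) := rfl
@[simp] theorem mul_c (g h : DG m k) : (g * h).c = g.c + h.c + P m h.a * Q g.b := rfl
@[simp] theorem one_a : (1 : DG m k).a = 0 := rfl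
@[simp] theorem one_b : (1 : DG m k).b = 0 := rfl
@[simp] theorem one_c : (1 : DG m k).c = 0 := rfl

theorem coc {M : Type*} [AddCommGroup M] (f : ZMod 3 →+ M) (x y z : M) (u v u' v' : ZMod 3)
    (h : u + v = u' + v') : x + y + f u + z + f v = x + (y + z + f u') + f v' := by
  have : f u + f v = f u' + f v' := by rw [← map_add, h, map_add]
  have e1 : x + y + f u + z + f v = x + y + z + (f u + f v) := by abel
  rw [e1, this]; abel

instance : Group (DG m k) := Group.ofLeftAxioms
  (by
    intro x y z
    ext
    · simp only [mul_a, mul_b, mul_c, map_add, P_A, Q_B, add_zero]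
      apply coc
      simp only [V]
      grind
    · simp only [mul_a, mul_b, mul_c, map_add, P_A, Q_B, add_zero]
      apply coc
      simp only [V, W]
      grind
    · simp only [mul_a, mul_b, mul_c, map_add, P_A, Q_B, add_zero]
      ring)
  (by intro x; ext <;> simp [V, W])
  (by
    intro x
    ext
    · change (-_ - _) + _ + A m (k * V (P m (-_ - _)) (Q (-_ - _)) (-x.c + P m x.a * Q x.b) _ _) = 0
      simp only [map_sub, map_neg, P_A, Q_B, sub_zero]
      abel
    · change (-_ - _) + _ + B (W (P m (-_ - _)) (Q (-_ - _)) (-x.c + P m x.a * Q x.b) _ _) = 0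
      simp only [map_sub, map_neg, P_A, Q_B, sub_zero]
      abel
    · change (-x.c + P m x.a * Q x.b) + x.c + P m x.a * Q (-x.b - _) = 0
      simp only [map_sub, map_neg, Q_B, sub_zero]
      ring)

theorem comm'_eq {G : Type*} [Group G] {g h z : G} (e : g * h = h * g * z) : comm' g h = z := by
  unfold comm'
  have : z = (h * g)⁻¹ * (g * h) := by rw [e]; group
  rw [this]; group

def X : DG m k := ⟨1, 0, 0⟩
def Y : DG m k := ⟨0, 1, 0⟩
def S : DG m k := ⟨0, 0, 1⟩
def U : DG m k := ⟨0, B 1, 0⟩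
def T : DG m k := ⟨A m k, B 1, 0⟩

theorem X_pow (n : ℕ) : (X : DG m k) ^ n = ⟨n, 0, 0⟩ := by
  induction n with
  | zero => ext <;> simp
  | succ n ih => rw [pow_succ, ih]; ext <;> simp [X, V, W]
theorem Y_pow (n : ℕ) : (Y : DG m k) ^ n = ⟨0, n, 0⟩ := by
  induction n with
  | zero => ext <;> simp
  | succ n ih => rw [pow_succ, ih]; ext <;> simp [Y, V, W]
theorem S_pow (n : ℕ) : (S : DG m k) ^ n = ⟨0, 0, n⟩ := by
  induction n with
  | zero => ext <;> simp
  | succ n ih => rw [pow_succ, ih]; ext <;> simp [S, V, W]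

theorem comm_YX : comm' (Y : DG m k) X = S := by
  apply comm'_eq
  ext <;> simp [X, Y, S, V, W]
theorem comm_SX : comm' (S : DG m k) X = U := by
  apply comm'_eq
  ext <;> simp [X, S, U, V, W]
theorem comm_SY : comm' (S : DG m k) Y = T := by
  apply comm'_eq
  ext <;> simp [Y, S, T, V, W]

theorem B_one : B 1 = 3 := by
  have := al_nat 3 9 rfl 1
  simpa [B] using this
theorem A_nat (n : ℕ) : A m (n : ZMod 3) = (n * 3 ^ (m + 1) : ℕ) := al_nat _ _ _ n

theorem nf (g : DG m k) : g = X ^ g.a.val * Y ^ g.b.val * S ^ g.c.val := by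
  rw [X_pow, Y_pow, S_pow]
  ext <;> simp [V, W]

theorem gen : Subgroup.closure {(X : DG m k), Y} = ⊤ := by
  rw [eq_top_iff]
  intro g _
  have hX : (X : DG m k) ∈ Subgroup.closure {(X : DG m k), Y} :=
    Subgroup.subset_closure (by simp)
  have hY : (Y : DG m k) ∈ Subgroup.closure {(X : DG m k), Y} :=
    Subgroup.subset_closure (by simp)
  have hS : (S : DG m k) ∈ Subgroup.closure {(X : DG m k), Y} := by
    rw [← comm_YX]
    exact mul_mem (mul_mem (mul_mem (inv_mem hY) (inv_mem hX)) hY) hX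
  rw [nf g]
  exact mul_mem (mul_mem (pow_mem hX _) (pow_mem hY _)) (pow_mem hS _)

def eqv : DG m k ≃ ZMod (3 ^ (m + 2)) × ZMod 9 × ZMod 3 where
  toFun g := (g.a, g.b, g.c)
  invFun t := ⟨t.1, t.2.1, t.2.2⟩
  left_inv _ := rfl
  right_inv _ := rfl

instance : Finite (DG m k) := Finite.of_equiv _ eqv.symm

theorem card : Nat.card (DG m k) = 3 ^ (m + 5) := by
  rw [Nat.card_congr eqv]
  simp only [Nat.card_prod, Nat.card_zmod]
  ring

def R (m : ℕ) : ZMod (3 ^ (m + 2)) →+* ZMod (3 ^ (m + 1)) :=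
  ZMod.castHom (Dvd.intro 3 (by ring)) _

@[simp] theorem R_A (z : ZMod 3) : R m (A m z) = 0 :=
  al_cast _ _ _ _ dvd_rfl _ z

def F : DG m k →* Multiplicative (ZMod (3 ^ (m + 1)) × ZMod 3) where
  toFun g := Multiplicative.ofAdd (R m g.a, Q g.b)
  map_one' := by simp
  map_mul' g h := by
    rw [← ofAdd_add]; simp

theorem F_surj : Function.Surjective (F : DG m k →* _) := by
  intro t
  obtain ⟨u, hu⟩ := ZMod.castHom_surjective
    (show 3 ^ (m + 1) ∣ 3 ^ (m + 2) from Dvd.intro 3 (by ring)) t.toAdd.1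
  obtain ⟨v, hv⟩ := ZMod.castHom_surjective (show 3 ∣ 9 by norm_num) t.toAdd.2
  exact ⟨⟨u, v, 0⟩, congrArg Multiplicative.ofAdd (Prod.ext hu hv)⟩

theorem mem_ker {g : DG m k} : g ∈ (F : DG m k →* _).ker ↔ R m g.a = 0 ∧ Q g.b = 0 := by
  rw [MonoidHom.mem_ker]
  exact Prod.ext_iff (x := (R m g.a, Q g.b)) (y := (0, 0))

theorem ker_form {g : DG m k} (hg : g ∈ (F : DG m k →* _).ker) :
    ∃ z t, g.a = A m z ∧ g.b = B t := by
  obtain ⟨h1, h2⟩ := mem_ker.1 hg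
  obtain ⟨z, hz⟩ := al_ker (3 ^ (m + 1)) (3 ^ (m + 2)) (by ring) (by positivity) g.a h1
  obtain ⟨t, ht⟩ := al_ker 3 9 rfl (by norm_num) g.b h2
  exact ⟨z, t, hz, ht⟩

theorem comm'_mem {G : Type*} [Group G] (g h : G) : comm' g h ∈ commutator G := by
  have h1 : Abelianization.of (comm' g h) = 1 := by
    simp only [comm', map_mul, map_inv]
    rw [mul_comm (Abelianization.of g)⁻¹]
    simp
  exact (QuotientGroup.eq_one_iff _).1 h1

theorem cen_pow (u : ZMod 3) (v : ZMod 3) (n : ℕ) :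
    (⟨A m u, B v, 0⟩ : DG m k) ^ n = ⟨A m (n * u), B (n * v), 0⟩ := by
  induction n with
  | zero => ext <;> simp
  | succ n ih => rw [pow_succ, ih]; ext <;> simp [V, W, add_mul]

theorem comm_eq_ker (hk : k * k = 1) : commutator (DG m k) = (F : DG m k →* _).ker := by
  apply le_antisymm
  · exact Abelianization.commutator_subset_ker _
  · intro g hg
    obtain ⟨z, t, hz, ht⟩ := ker_form hg
    have hS : (S : DG m k) ∈ commutator (DG m k) := comm_YX (m := m) (k := k) ▸ comm'_mem _ _
    have hU : (U : DG m k) ∈ commutator (DG m k) := comm_SX (m := m) (k := k) ▸ comm'_mem _ _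
    have hT : (T : DG m k) ∈ commutator (DG m k) := comm_SY (m := m) (k := k) ▸ comm'_mem _ _
    have : g = T ^ (z * k).val * U ^ (t - z * k).val * S ^ g.c.val := by
      have hU' : (U : DG m k) = ⟨A m 0, B 1, 0⟩ := by simp [U]
      rw [S_pow, hU', T, cen_pow, cen_pow]
      ext
      · simp [V, W, hz, mul_assoc, hk]
      · simp only [mul_b, ht]
        simp [V, W]
      · simp
    rw [this]
    exact mul_mem (mul_mem (pow_mem hT _) (pow_mem hU _)) (pow_mem hS _)

theorem metab (hk : k * k = 1) : IsMetabelian (DG m k) := by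
  unfold IsMetabelian
  rw [derivedSeries_succ, derivedSeries_one, comm_eq_ker hk, Subgroup.commutator_eq_bot_iff_le_centralizer]
  intro g hg
  rw [Subgroup.mem_centralizer_iff]
  intro h hh
  obtain ⟨z, t, hz, ht⟩ := ker_form hg
  obtain ⟨z', t', hz', ht'⟩ := ker_form hh
  ext <;> simp [hz, ht, hz', ht', V, W, add_comm]

def sg (g : DG m k) : DG m k := ⟨-g.a + A m (-(k * g.c)), -g.b + B g.c, g.c⟩

theorem coc2 {M : Type*} [AddCommGroup M] (f : ZMod 3 →+ M) (x y : M) (u v w r s : ZMod 3)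
    (h : -u + v = r + s + w) : -(x + y + f u) + f v = (-x + f r) + (-y + f s) + f w := by
  have : -f u + f v = f r + f s + f w := by rw [← map_neg, ← map_add, h, map_add, map_add]
  have e1 : -(x + y + f u) + f v = -x + -y + (-f u + f v) := by abel
  rw [e1, this]; abel

theorem sg_mul (g h : DG m k) : sg (g * h) = sg g * sg h := by
  ext
  · simp only [sg, mul_a, mul_b, mul_c]
    apply coc2
    simp only [map_add, map_neg, P_A, Q_B, add_zero, V]
    grind
  · simp only [sg, mul_a, mul_b, mul_c]
    apply coc2
    simp only [map_add, map_neg, P_A, Q_B, add_zero, V, W]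
    grind
  · simp only [sg, mul_a, mul_b, mul_c, map_add, map_neg, P_A, Q_B, add_zero]
    ring

theorem sg_sg (g : DG m k) : sg (sg g) = g := by
  ext
  · simp [sg]
  · simp [sg]
  · simp [sg]

theorem sigma (hk : k * k = 1) : IsSigmaGroup (DG m k) := by
  refine ⟨⟨⟨sg, sg, sg_sg, sg_sg⟩, sg_mul⟩, fun g => ?_⟩
  rw [eq_inv_iff_mul_eq_one, ← map_mul]
  have : sg g * g ∈ commutator (DG m k) := by
    rw [comm_eq_ker hk, mem_ker]
    simp [sg]
  exact (QuotientGroup.eq_one_iff _).2 this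

theorem abel_iso (hk : k * k = 1) :
    Nonempty (Abelianization (DG m k) ≃* Multiplicative (ZMod (3 ^ (m + 1)) × ZMod 3)) :=
  ⟨(QuotientGroup.quotientMulEquivOfEq (comm_eq_ker hk)).trans
    (QuotientGroup.quotientKerEquivOfSurjective F F_surj)⟩

end DG

theorem stmt5 (e i : ℕ) (he : 3 ≤ e) (hi : i = 2 ∨ i = 3) :
    ∃ (G : Type) (_ : Group G) (_ : Finite G) (x y : G),
      Subgroup.closure {x, y} = ⊤ ∧
      Nat.card G = 3 ^ (4 + e) ∧
      IsMetabelian G ∧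
      IsSigmaGroup G ∧
      x ^ 3 ^ (e + 1) = 1 ∧
      y ^ 3 = sgen x y 3 ∧
      tgenD x y 3 = sgen x y 3 * x ^ ((i - 1) * 3 ^ e) ∧
      Nonempty (Abelianization G ≃* Multiplicative (ZMod (3 ^ e) × ZMod 3)) := by
  obtain ⟨m, rfl⟩ : ∃ m, e = m + 1 := ⟨e - 1, by omega⟩
  have hk : (((i - 1 : ℕ) : ZMod 3)) * ((i - 1 : ℕ) : ZMod 3) = 1 := by
    rcases hi with rfl | rfl <;> decide
  have hs2 : sgen (DG.X : DG m ((i - 1 : ℕ) : ZMod 3)) DG.Y 2 = DG.S := DG.comm_YX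
  have hs3 : sgen (DG.X : DG m ((i - 1 : ℕ) : ZMod 3)) DG.Y 3 = DG.U := by
    change comm' (sgen _ _ 2) _ = _
    rw [hs2, DG.comm_SX]
  refine ⟨DG m ((i - 1 : ℕ) : ZMod 3), inferInstance, inferInstance, DG.X, DG.Y, DG.gen, ?_,
    DG.metab hk, DG.sigma hk, ?_, ?_, ?_, DG.abel_iso hk⟩
  · rw [DG.card]; congr 1; ring
  · rw [DG.X_pow]
    ext
    · exact ZMod.natCast_self (3 ^ (m + 2))
    · rfl
    · rfl
  · rw [hs3, DG.Y_pow, DG.U, DG.B_one]; rfl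
  · rw [hs3]
    change comm' (sgen _ _ 2) _ = _
    rw [hs2, DG.comm_SY, DG.X_pow, ← DG.A_nat]
    ext <;> simp [DG.T, DG.U, DG.V, DG.W]
end

section
/- For every integer e ≥ 3, there exist two non-isomorphic finite metabelian σ-groups of order 3^{4+e} with abelianization isomorphic to (ZMod (3^e)) × (ZMod 3): one generated by x, y satisfying x^{3^{e+1}} = 1, y^3 = s₃, t₃ = s₃·x^{3^e}, and the other generated by x, y satisfying x^{3^{e+1}} = 1, y^3 = s₃, t₃ = s₃·x^{2·3^e}. -/
namespace D11

/-- multiplication by `3^n` as a map `ZMod 3 → ZMod (3^(n+1))`. -/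
def up (n : ℕ) : ZMod 3 →+ ZMod (3 ^ (n + 1)) :=
  ZMod.lift 3 ⟨zmultiplesHom _ ((3 : ZMod (3 ^ (n + 1))) ^ n), by
    have h := ZMod.natCast_self (3 ^ (n + 1))
    push_cast at h
    simp only [zmultiplesHom_apply, zsmul_eq_mul]
    push_cast
    rw [← h]; ring⟩

/-- reduction `ZMod (3^(n+1)) → ZMod 3`. -/
def dn (n : ℕ) : ZMod (3 ^ (n + 1)) →+* ZMod 3 :=
  ZMod.castHom (dvd_pow_self 3 (Nat.succ_ne_zero n)) (ZMod 3)

lemma up_intCast (n : ℕ) (z : ℤ) : up n (z : ZMod 3) = z * 3 ^ n := by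
  unfold up
  have := ZMod.lift_coe 3 (A := ZMod (3 ^ (n + 1)))
    ⟨zmultiplesHom _ ((3 : ZMod (3 ^ (n + 1))) ^ n), by
    have h := ZMod.natCast_self (3 ^ (n + 1))
    push_cast at h
    simp only [zmultiplesHom_apply, zsmul_eq_mul]
    push_cast
    rw [← h]; ring⟩ z
  rw [this]
  simp

lemma dn_intCast (n : ℕ) (z : ℤ) : dn n (z : ZMod (3 ^ (n + 1))) = z := map_intCast _ _

lemma dn_up (n : ℕ) (hn : n ≠ 0) (k : ZMod 3) : dn n (up n k) = 0 := by
  obtain ⟨z, rfl⟩ := ZMod.intCast_surjective k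
  rw [up_intCast]
  have : (3 : ZMod 3) = 0 := rfl
  rw [map_mul, map_pow, map_ofNat, this, zero_pow hn, mul_zero]

lemma up_dn (n : ℕ) (a : ZMod (3 ^ (n + 1))) : up n (dn n a) = 3 ^ n * a := by
  obtain ⟨z, rfl⟩ := ZMod.intCast_surjective a
  rw [dn_intCast, up_intCast, mul_comm]

lemma up_inj (n : ℕ) : Function.Injective (up n) := by
  rw [injective_iff_map_eq_zero]
  intro k h
  obtain ⟨z, rfl⟩ := ZMod.intCast_surjective k
  rw [up_intCast] at h
  have h2 : ((z * 3 ^ n : ℤ) : ZMod (3 ^ (n + 1))) = 0 := by exact_mod_cast h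
  rw [ZMod.intCast_zmod_eq_zero_iff_dvd] at h2
  rw [ZMod.intCast_zmod_eq_zero_iff_dvd]
  push_cast at h2 ⊢
  rw [pow_succ, mul_comm z] at h2
  exact (mul_dvd_mul_iff_left (by positivity)).1 h2

lemma three_up (n : ℕ) (k : ZMod 3) : 3 * up n k = 0 := by
  have : (3 : ZMod (3 ^ (n + 1))) * up n k = (3 : ℕ) • up n k := by simp
  rw [this, ← map_nsmul]
  have : (3 : ℕ) • k = 0 := by clear * -; revert k; decide
  simp [this]

lemma dn_surj (n : ℕ) : Function.Surjective (dn n) := fun k => by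
  obtain ⟨z, rfl⟩ := ZMod.intCast_surjective k
  exact ⟨z, dn_intCast n z⟩

/-- cocycle functions -/
def F (i' j k j' : ZMod 3) : ZMod 3 := i' * (j - j ^ 2) + (k + i' * j) * j'
def H (i' j k j' : ZMod 3) : ZMod 3 := k * i' + (i' - i' ^ 2) * j + F i' j k j'

@[ext] structure D (m : ℕ) (ε : ZMod 3) where
  a : ZMod (3 ^ (m + 1 + 1))
  b : ZMod (3 ^ (1 + 1))
  c : ZMod 3

variable {m : ℕ} {ε : ZMod 3}

instance : Mul (D m ε) := ⟨fun u v =>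
  ⟨u.a + v.a + up _ (ε * F (dn _ v.a) (dn _ u.b) u.c (dn _ v.b)),
   u.b + v.b + up _ (H (dn _ v.a) (dn _ u.b) u.c (dn _ v.b)),
   u.c + v.c + dn _ v.a * dn _ u.b⟩⟩
instance : One (D m ε) := ⟨⟨0, 0, 0⟩⟩
instance : Inv (D m ε) := ⟨fun u =>
  ⟨-u.a - up _ (ε * F (dn _ u.a) (-dn _ u.b) (-u.c + dn _ u.a * dn _ u.b) (dn _ u.b)),
   -u.b - up _ (H (dn _ u.a) (-dn _ u.b) (-u.c + dn _ u.a * dn _ u.b) (dn _ u.b)),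
   -u.c + dn _ u.a * dn _ u.b⟩⟩

lemma mul_a (u v : D m ε) : (u * v).a =
  u.a + v.a + up _ (ε * F (dn _ v.a) (dn _ u.b) u.c (dn _ v.b)) := rfl
lemma mul_b (u v : D m ε) : (u * v).b =
  u.b + v.b + up _ (H (dn _ v.a) (dn _ u.b) u.c (dn _ v.b)) := rfl
lemma mul_c (u v : D m ε) : (u * v).c = u.c + v.c + dn _ v.a * dn _ u.b := rfl
lemma one_a : (1 : D m ε).a = 0 := rfl
lemma one_b : (1 : D m ε).b = 0 := rfl
lemma one_c : (1 : D m ε).c = 0 := rfl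
lemma inv_a (u : D m ε) : (u⁻¹).a =
  -u.a - up _ (ε * F (dn _ u.a) (-dn _ u.b) (-u.c + dn _ u.a * dn _ u.b) (dn _ u.b)) := rfl
lemma inv_b (u : D m ε) : (u⁻¹).b =
  -u.b - up _ (H (dn _ u.a) (-dn _ u.b) (-u.c + dn _ u.a * dn _ u.b) (dn _ u.b)) := rfl
lemma inv_c (u : D m ε) : (u⁻¹).c = -u.c + dn _ u.a * dn _ u.b := rfl

lemma dn_mul_a (u v : D m ε) : dn _ (u * v).a = dn _ u.a + dn _ v.a := by
  rw [mul_a, map_add, map_add, dn_up _ (by omega), add_zero]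
lemma dn_mul_b (u v : D m ε) : dn _ (u * v).b = dn _ u.b + dn _ v.b := by
  rw [mul_b, map_add, map_add, dn_up _ (by omega), add_zero]
lemma dn_inv_a (u : D m ε) : dn _ (u⁻¹).a = - dn _ u.a := by
  rw [inv_a, map_sub, map_neg, dn_up _ (by omega), sub_zero]
lemma dn_inv_b (u : D m ε) : dn _ (u⁻¹).b = - dn _ u.b := by
  rw [inv_b, map_sub, map_neg, dn_up _ (by omega), sub_zero]

lemma h3 : (3 : ZMod 3) = 0 := rfl

lemma F_coc (j k i' j' k' i'' j'' : ZMod 3) :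
    F i' j k j' + F i'' (j + j') (k + k' + i' * j) j'' =
    F i'' j' k' j'' + F (i' + i'') j k (j' + j'') := by
  unfold F
  linear_combination (-i''*j*j') * h3

lemma H_coc (j k i' j' k' i'' j'' : ZMod 3) :
    H i' j k j' + H i'' (j + j') (k + k' + i' * j) j'' =
    H i'' j' k' j'' + H (i' + i'') j k (j' + j'') := by
  unfold H F
  linear_combination (-i''*j*j' + i' * i'' * j) * h3

instance : Group (D m ε) := Group.ofLeftAxioms
  (by
    intro u v w
    have e1 := F_coc (dn _ u.b) u.c (dn _ v.a) (dn _ v.b) v.c (dn _ w.a) (dn _ w.b)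
    have e2 := H_coc (dn _ u.b) u.c (dn _ v.a) (dn _ v.b) v.c (dn _ w.a) (dn _ w.b)
    ext
    · rw [mul_a, mul_a u (v * w), dn_mul_a, dn_mul_b, dn_mul_b, mul_c, mul_a, mul_a v]
      have := congrArg (fun t => up (m+1) (ε * t)) e1
      simp only [mul_add, map_add] at this ⊢
      linear_combination this
    · rw [mul_b, mul_b u (v * w), dn_mul_a, dn_mul_b, dn_mul_b, mul_c, mul_b, mul_b v]
      have := congrArg (fun t => up 1 t) e2
      simp only [map_add] at this ⊢
      linear_combination this
    · rw [mul_c, mul_c u, mul_c u, mul_c v, dn_mul_a, dn_mul_b]; ring)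
  (by
    intro u
    ext <;> simp [mul_a, mul_b, mul_c, one_a, one_b, one_c, F, H])
  (by
    intro u
    ext
    · rw [mul_a, dn_inv_b, inv_a, inv_c, one_a]; ring
    · rw [mul_b, dn_inv_b, inv_b, inv_c, one_b]; ring
    · rw [mul_c, dn_inv_b, inv_c, one_c]; ring)

lemma comm_c (u v : D m ε) : (comm' u v).c = dn _ u.b * dn _ v.a - dn _ u.a * dn _ v.b := by
  simp only [comm', mul_c, dn_mul_a, dn_mul_b, dn_inv_a, dn_inv_b, inv_c]; ring

lemma comm_dn_a (u v : D m ε) : dn _ (comm' u v).a = 0 := by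
  simp only [comm', dn_mul_a, dn_inv_a]; ring
lemma comm_dn_b (u v : D m ε) : dn _ (comm' u v).b = 0 := by
  simp only [comm', dn_mul_b, dn_inv_b]; ring

lemma comm_eq_of (u v w : D m ε) (h : u * v = v * u * w) : comm' u v = w := by
  unfold comm'
  have : w = (v * u)⁻¹ * (u * v) := by rw [h]; group
  rw [this]; group

/-- commutators with an element of the derived subgroup -/
lemma comm_s (u v : D m ε) (ha : dn _ u.a = 0) (hb : dn _ u.b = 0) :
    comm' u v = ⟨up _ (ε * (u.c * dn _ v.b)), up _ (u.c * (dn _ v.a + dn _ v.b)), 0⟩ := by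
  apply comm_eq_of
  ext
  · simp only [mul_a, dn_mul_a, dn_mul_b, mul_c, ha, hb, dn_up _ (Nat.succ_ne_zero _),
      dn_up 1 one_ne_zero]
    simp [F]
    ring
  · simp only [mul_b, dn_mul_a, dn_mul_b, mul_c, ha, hb, dn_up _ (Nat.succ_ne_zero _),
      dn_up 1 one_ne_zero]
    simp [H, F, mul_add]
    ring
  · simp only [mul_c, dn_mul_a, dn_mul_b, mul_c, ha, hb, dn_up _ (Nat.succ_ne_zero _),
      dn_up 1 one_ne_zero]
    ring

lemma s3_eq (x y : D m ε) : sgen x y 3 =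
    ⟨up _ (ε * ((dn _ y.b * dn _ x.a - dn _ y.a * dn _ x.b) * dn _ x.b)),
     up _ ((dn _ y.b * dn _ x.a - dn _ y.a * dn _ x.b) * (dn _ x.a + dn _ x.b)), 0⟩ := by
  rw [← comm_c, ← comm_s _ _ (comm_dn_a _ _) (comm_dn_b _ _)]; rfl

lemma t3_eq (x y : D m ε) : tgenD x y 3 =
    ⟨up _ (ε * ((dn _ y.b * dn _ x.a - dn _ y.a * dn _ x.b) * dn _ y.b)),
     up _ ((dn _ y.b * dn _ x.a - dn _ y.a * dn _ x.b) * (dn _ y.a + dn _ y.b)), 0⟩ := by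
  rw [← comm_c, ← comm_s _ _ (comm_dn_a _ _) (comm_dn_b _ _)]; rfl

/-- cubes -/
lemma cube_eq (u : D m ε) : ∃ r s, u ^ 3 = ⟨3 * u.a + up _ r, 3 * u.b + up _ s, 0⟩ ∧
    (dn _ u.a = 0 → r = 0 ∧ s = 0) := by
  refine ⟨ε * F (dn _ u.a) (dn _ u.b) u.c (dn _ u.b) + ε * F (dn _ u.a) (dn _ u.b + dn _ u.b)
    (u.c + u.c + dn _ u.a * dn _ u.b) (dn _ u.b), H (dn _ u.a) (dn _ u.b) u.c (dn _ u.b) +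
    H (dn _ u.a) (dn _ u.b + dn _ u.b) (u.c + u.c + dn _ u.a * dn _ u.b) (dn _ u.b), ?_, ?_⟩
  · rw [pow_succ, pow_two]
    ext
    · rw [mul_a, dn_mul_b, mul_c, mul_a, map_add]; ring
    · rw [mul_b, dn_mul_b, mul_c, mul_b, (up 1).map_add]; ring
    · simp only [mul_c, dn_mul_b]
      linear_combination (u.c + dn _ u.a * dn _ u.b) * h3
  · intro h
    rw [h]
    simp only [F, H]
    constructor
    · linear_combination ε * (u.c * dn _ u.b) * h3
    · linear_combination (u.c * dn _ u.b) * h3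

lemma pow_of_dn (a b) (ha : dn _ a = 0) (hb : dn _ b = 0) (n : ℕ) :
    (⟨a, b, 0⟩ : D m ε) ^ n = ⟨n * a, n * b, 0⟩ := by
  induction n with
  | zero => ext <;> simp [one_a, one_b, one_c]
  | succ n ih =>
    rw [pow_succ, ih]
    ext
    · simp [mul_a, ha, hb, F]; ring
    · simp [mul_b, ha, hb, F, H]; ring
    · simp [mul_c, ha, hb]

lemma nine : (3 : ZMod (3 ^ (1 + 1))) ^ 2 = 0 := rfl

lemma pow_big (hm : 2 ≤ m) (u : D m ε) : u ^ 3 ^ (m + 1) = ⟨up _ (dn _ u.a), 0, 0⟩ := by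
  obtain ⟨r, s, h, -⟩ := cube_eq u
  rw [pow_succ, mul_comm, pow_mul, h, pow_of_dn]
  · obtain ⟨l, rfl⟩ := Nat.exists_eq_add_of_le hm
    have e : (3 : ZMod (3 ^ (1 + 1))) ^ (2 + l) = 0 := by
      linear_combination 3 ^ l * nine
    ext
    · push_cast
      rw [up_dn]
      have := three_up (2 + l + 1) r
      linear_combination (3 ^ (1 + l)) * this
    · push_cast
      simp [e]
    · rfl
  · rw [map_add, dn_up _ (by omega), map_mul, map_ofNat, h3]; ring
  · rw [map_add, dn_up _ (by omega), map_mul, map_ofNat, h3]; ring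


/-- the generators -/
def X : D m ε := ⟨1, 0, 0⟩
def Y : D m ε := ⟨0, 1, 0⟩

lemma X_pow (n : ℕ) : (X : D m ε) ^ n = ⟨n, 0, 0⟩ := by
  induction n with
  | zero => ext <;> simp [one_a, one_b, one_c]
  | succ n ih =>
    rw [pow_succ, ih]
    ext <;> simp [mul_a, mul_b, mul_c, X, F, H]

lemma Y_pow (n : ℕ) : (Y : D m ε) ^ n = ⟨0, n, 0⟩ := by
  induction n with
  | zero => ext <;> simp [one_a, one_b, one_c]
  | succ n ih =>
    rw [pow_succ, ih]
    ext <;> simp [mul_a, mul_b, mul_c, Y, F, H]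

lemma S_pow (n : ℕ) : (⟨0, 0, 1⟩ : D m ε) ^ n = ⟨0, 0, n⟩ := by
  induction n with
  | zero => ext <;> simp [one_a, one_b, one_c]
  | succ n ih =>
    rw [pow_succ, ih]
    ext <;> simp [mul_a, mul_b, mul_c, F, H]

lemma comm_YX : comm' (Y : D m ε) X = ⟨0, 0, 1⟩ := by
  apply comm_eq_of
  ext <;> simp [mul_a, mul_b, mul_c, F, H, X, Y]

lemma normal_form (u : D m ε) : u = X ^ u.a.val * Y ^ u.b.val * (comm' Y X) ^ u.c.val := by
  rw [comm_YX, X_pow, Y_pow, S_pow]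
  ext <;> simp [mul_a, mul_b, mul_c, F, H]

lemma gen : Subgroup.closure {(X : D m ε), Y} = ⊤ := by
  rw [eq_top_iff]
  intro u _
  have hX : (X : D m ε) ∈ Subgroup.closure {(X : D m ε), Y} :=
    Subgroup.subset_closure (by simp)
  have hY : (Y : D m ε) ∈ Subgroup.closure {(X : D m ε), Y} :=
    Subgroup.subset_closure (by simp)
  rw [normal_form u]
  refine mul_mem (mul_mem (pow_mem hX _) (pow_mem hY _)) (pow_mem ?_ _)
  exact mul_mem (mul_mem (mul_mem (inv_mem hY) (inv_mem hX)) hY) hX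

lemma X_pow_one : (X : D m ε) ^ 3 ^ (m + 1 + 1) = 1 := by
  rw [X_pow]
  ext
  · exact ZMod.natCast_self _
  · rfl
  · rfl

lemma up_one (n : ℕ) : up n 1 = 3 ^ n := by
  have := up_intCast n 1
  simpa using this

lemma Y_cube : (Y : D m ε) ^ 3 = sgen X Y 3 := by
  rw [s3_eq, Y_pow]
  ext
  · simp [X, Y]
  · simp only [X, Y, map_zero, map_one]
    norm_num
    rw [up_one, pow_one]
  · rfl

lemma t_rel (n : ℕ) (hn : (n : ZMod 3) = ε) :
    tgenD (X : D m ε) Y 3 = sgen X Y 3 * X ^ (n * 3 ^ (m + 1)) := by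
  rw [s3_eq, t3_eq, X_pow]
  have e1 : ((n * 3 ^ (m + 1) : ℕ) : ZMod (3 ^ (m + 1 + 1))) = up _ ε := by
    have := up_intCast (m + 1) n
    rw [← hn]
    push_cast at this ⊢
    exact this.symm
  rw [e1]
  ext
  · simp [X, Y, mul_a, dn_up, F]
  · simp [X, Y, mul_b, dn_up, F, H]
  · simp [X, Y, mul_c, dn_up]

/-- the underlying set -/
def eqv : D m ε ≃ ZMod (3 ^ (m + 1 + 1)) × ZMod (3 ^ (1 + 1)) × ZMod 3 where
  toFun u := (u.a, u.b, u.c)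
  invFun t := ⟨t.1, t.2.1, t.2.2⟩
  left_inv _ := rfl
  right_inv _ := rfl

instance : Finite (D m ε) := Finite.of_equiv _ eqv.symm

lemma card_D : Nat.card (D m ε) = 3 ^ (4 + (m + 1)) := by
  rw [Nat.card_congr eqv, Nat.card_prod, Nat.card_prod, Nat.card_zmod, Nat.card_zmod,
    Nat.card_zmod]
  ring

/-- The elements with trivial `x`- and `y`-exponents mod 3. -/
def K (m : ℕ) (ε : ZMod 3) : Subgroup (D m ε) where
  carrier := {u | dn _ u.a = 0 ∧ dn _ u.b = 0}
  mul_mem' := by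
    rintro u v ⟨h1, h2⟩ ⟨h3, h4⟩
    exact ⟨by rw [dn_mul_a, h1, h3, add_zero], by rw [dn_mul_b, h2, h4, add_zero]⟩
  one_mem' := ⟨map_zero _, map_zero _⟩
  inv_mem' := by
    rintro u ⟨h1, h2⟩
    exact ⟨by rw [dn_inv_a, h1, neg_zero], by rw [dn_inv_b, h2, neg_zero]⟩

lemma K_comm (u v : D m ε) (hu : u ∈ K m ε) (hv : v ∈ K m ε) : u * v = v * u := by
  obtain ⟨h1, h2⟩ := hu
  obtain ⟨h3, h4⟩ := hv
  ext
  · simp [mul_a, h1, h2, h3, h4, F]; ring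
  · simp [mul_b, h1, h2, h3, h4, F, H]; ring
  · simp [mul_c, h1, h2, h3, h4]; ring

lemma metab : IsMetabelian (D m ε) := by
  unfold IsMetabelian
  have hK : derivedSeries (D m ε) 1 ≤ K m ε := by
    rw [derivedSeries_succ, Subgroup.commutator_le]
    intro u _ v _
    rw [commutatorElement_def]
    constructor
    · simp only [dn_mul_a, dn_inv_a]; ring
    · simp only [dn_mul_b, dn_inv_b]; ring
  rw [derivedSeries_succ, eq_bot_iff, Subgroup.commutator_le]
  intro u hu v hv
  rw [Subgroup.mem_bot, commutatorElement_eq_one_iff_mul_comm]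
  exact K_comm u v (hK hu) (hK hv)

lemma comm_mem (u v : D m ε) : comm' u v ∈ commutator (D m ε) := by
  have h := Subgroup.commutator_mem_commutator (Subgroup.mem_top u⁻¹) (Subgroup.mem_top v⁻¹)
  rw [commutatorElement_def, inv_inv, inv_inv] at h
  exact h

lemma ker_mem (hε : ε * ε = 1) (f g k : ZMod 3) :
    (⟨up _ f, up _ g, k⟩ : D m ε) ∈ commutator (D m ε) := by
  have h1 := comm_mem (⟨0, 0, g - ε * f⟩ : D m ε) X
  have h2 := comm_mem (⟨0, 0, ε * f⟩ : D m ε) Y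
  have h3 := pow_mem (comm_mem (Y : D m ε) X) k.val
  rw [comm_YX, S_pow] at h3
  rw [comm_s _ _ (map_zero _) (map_zero _)] at h1 h2
  convert mul_mem (mul_mem h1 h2) h3 using 1
  have hf : ε * (ε * f) = f := by rw [← mul_assoc, hε, one_mul]
  ext
  · simp [mul_a, X, Y, dn_up, F, hf]
  · simp [mul_b, X, Y, dn_up, F, H]
  · simp [mul_c, X, Y, dn_up]

/-- reduction mod `3^(m+1)` -/
def rd (m : ℕ) : ZMod (3 ^ (m + 1 + 1)) →+* ZMod (3 ^ (m + 1)) :=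
  ZMod.castHom (pow_dvd_pow 3 (Nat.le_succ _)) _

lemma rd_up (k : ZMod 3) : rd m (up _ k) = 0 := by
  obtain ⟨z, rfl⟩ := ZMod.intCast_surjective k
  rw [up_intCast, map_mul, map_pow, map_ofNat]
  have h := ZMod.natCast_self (3 ^ (m + 1))
  push_cast at h
  rw [h, mul_zero]

lemma of_rd (a) (h : rd m a = 0) : ∃ k, a = up _ k := by
  obtain ⟨z, rfl⟩ := ZMod.intCast_surjective a
  rw [map_intCast, ZMod.intCast_zmod_eq_zero_iff_dvd] at h
  obtain ⟨t, rfl⟩ := h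
  refine ⟨t, ?_⟩
  rw [up_intCast]
  push_cast
  ring

lemma of_dn1 (b) (h : dn 1 b = 0) : ∃ k, b = up 1 k := by
  obtain ⟨z, rfl⟩ := ZMod.intCast_surjective b
  rw [map_intCast, ZMod.intCast_zmod_eq_zero_iff_dvd] at h
  obtain ⟨t, rfl⟩ := h
  refine ⟨t, ?_⟩
  rw [up_intCast]
  push_cast
  ring

/-- projection onto the abelianization -/
def pr (m : ℕ) (ε : ZMod 3) : D m ε →* Multiplicative (ZMod (3 ^ (m + 1)) × ZMod 3) where
  toFun u := Multiplicative.ofAdd (rd m u.a, dn 1 u.b)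
  map_one' := by simp [one_a, one_b]
  map_mul' u v := by
    rw [← ofAdd_add, dn_mul_b, mul_a, map_add, map_add, rd_up, add_zero]
    rfl

lemma pr_ker (hε : ε * ε = 1) (u : D m ε) (h : pr m ε u = 1) : u ∈ commutator (D m ε) := by
  have h' : (rd m u.a, dn 1 u.b) = 0 := h
  rw [Prod.mk_eq_zero] at h'
  obtain ⟨f, hf⟩ := of_rd _ h'.1
  obtain ⟨g, hg⟩ := of_dn1 _ h'.2
  have : u = ⟨up _ f, up _ g, u.c⟩ := by ext <;> simp [hf, hg]
  rw [this]
  exact ker_mem hε _ _ _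

lemma abel_iso (hε : ε * ε = 1) :
    Nonempty (Abelianization (D m ε) ≃* Multiplicative (ZMod (3 ^ (m + 1)) × ZMod 3)) := by
  refine ⟨MulEquiv.ofBijective (Abelianization.lift (pr m ε)) ⟨?_, ?_⟩⟩
  · rw [injective_iff_map_eq_one]
    intro t
    obtain ⟨u, rfl⟩ := QuotientGroup.mk_surjective t
    intro h
    exact (QuotientGroup.eq_one_iff _).2 (pr_ker hε u h)
  · intro t
    obtain ⟨b, hb⟩ := dn_surj 1 (Multiplicative.toAdd t).2
    obtain ⟨a, ha⟩ := ZMod.ringHom_surjective (rd m) (Multiplicative.toAdd t).1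
    refine ⟨Abelianization.of ⟨a, b, 0⟩, ?_⟩
    rw [Abelianization.lift_apply_of]
    change Multiplicative.ofAdd (rd m a, dn 1 b) = t
    rw [ha, hb]; rfl

/-- the automorphism -/
def sg (m : ℕ) (ε : ZMod 3) : D m ε ≃* D m ε where
  toFun u := ⟨-u.a + up _ (2 * ε * u.c), -u.b + up _ u.c, u.c⟩
  invFun u := ⟨-u.a + up _ (2 * ε * u.c), -u.b + up _ u.c, u.c⟩
  left_inv u := by ext <;> simp
  right_inv u := by ext <;> simp
  map_mul' u v := by
    ext
    · simp only [mul_a, mul_c, map_add, map_neg, dn_up _ (Nat.succ_ne_zero _), add_zero,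
        dn_up _ one_ne_zero]
      have : 2 * ε * (u.c + v.c + dn _ v.a * dn _ u.b) =
          ε * F (dn _ v.a) (dn _ u.b) u.c (dn _ v.b)
          + ε * F (-dn _ v.a) (-dn _ u.b) u.c (-dn _ v.b) + 2 * ε * u.c + 2 * ε * v.c := by
        unfold F; ring
      rw [this]
      simp only [map_add]
      ring
    · simp only [mul_b, mul_c, map_add, map_neg, dn_up _ (Nat.succ_ne_zero _), add_zero,
        dn_up _ one_ne_zero]
      have : dn _ v.a * dn _ u.b =
          H (dn _ v.a) (dn _ u.b) u.c (dn _ v.b)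
          + H (-dn _ v.a) (-dn _ u.b) u.c (-dn _ v.b) := by
        unfold H F; linear_combination (- dn _ v.a * dn _ u.b) * h3
      rw [this]
      simp only [map_add]
      ring
    · simp only [mul_c, map_add, map_neg, dn_up _ (Nat.succ_ne_zero _), add_zero,
        dn_up _ one_ne_zero]
      ring

lemma sigma (hε : ε * ε = 1) : IsSigmaGroup (D m ε) := by
  refine ⟨sg m ε, fun g => ?_⟩
  rw [eq_inv_iff_mul_eq_one, ← map_mul]
  refine (QuotientGroup.eq_one_iff _).2 (pr_ker hε _ ?_)
  rw [map_mul]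
  change Multiplicative.ofAdd (rd m (-g.a + up _ (2 * ε * g.c)), dn 1 (-g.b + up _ g.c)) *
    Multiplicative.ofAdd (rd m g.a, dn 1 g.b) = 1
  rw [← ofAdd_add, (rd m).map_add, (dn 1).map_add, rd_up, dn_up _ one_ne_zero]
  simp

lemma rigid (hm : 2 ≤ m) (x y : D m 2) (hc : Subgroup.closure {x, y} = ⊤)
    (hy : y ^ 3 = sgen x y 3) (ht : tgenD x y 3 = sgen x y 3 * x ^ (3 ^ (m + 1))) : False := by
  obtain ⟨r, s, hq, hrs⟩ := cube_eq y
  rw [s3_eq] at hy ht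
  rw [t3_eq, pow_big hm] at ht
  rw [hq] at hy
  have ya : dn _ y.a = 0 := by
    have h := congrArg D.a hy
    simp only at h
    apply up_inj
    rw [up_dn, map_zero]
    obtain ⟨l, rfl⟩ := Nat.exists_eq_add_of_le hm
    have h1 := three_up (2 + l + 1) r
    have h2 := three_up (2 + l + 1)
      (2 * ((dn _ y.b * dn _ x.a - dn _ y.a * dn _ x.b) * dn _ x.b))
    linear_combination 3 ^ (2 + l) * h - 3 ^ (1 + l) * h1 + 3 ^ (1 + l) * h2
  have xa : dn _ x.a ≠ 0 := by
    intro xa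
    have : Subgroup.closure {x, y} ≤ (⟨⟨⟨{u : D m 2 | dn _ u.a = 0}, by
        intro u v hu hv
        change dn _ (u * v).a = 0
        rw [dn_mul_a, show dn _ u.a = 0 from hu, show dn _ v.a = 0 from hv, add_zero]⟩,
        map_zero _⟩, by
        intro u hu
        change dn _ (u⁻¹).a = 0
        rw [dn_inv_a, show dn _ u.a = 0 from hu, neg_zero]⟩ : Subgroup (D m 2)) := by
      rw [Subgroup.closure_le]
      rintro u (rfl | rfl)
      · exact xa
      · exact ya
    have hX := this (hc ▸ Subgroup.mem_top (X : D m 2))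
    have hX' : dn (m + 1) 1 = 0 := hX
    rw [map_one] at hX'
    exact absurd hX' (by decide)
  have h1 := congrArg D.b hy
  have h2 := congrArg D.a ht
  have h3 := congrArg D.b ht
  simp only [(hrs ya).2] at h1
  have h4 := up_dn 1 y.b
  rw [pow_one] at h4
  rw [← h4, map_zero, add_zero] at h1
  replace h1 := up_inj _ h1
  simp only [mul_a, dn_up _ (Nat.succ_ne_zero _), map_zero, dn_up _ one_ne_zero] at h2
  simp only [mul_b, dn_up _ (Nat.succ_ne_zero _), map_zero, dn_up _ one_ne_zero] at h3
  rw [← map_add, ← map_add] at h2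
  rw [add_zero, ← map_add] at h3
  replace h2 := up_inj _ h2
  replace h3 := up_inj _ h3
  rw [ya] at h1 h2 h3
  generalize dn _ x.a = i at *
  generalize dn _ x.b = j at *
  generalize dn _ y.b = j' at *
  clear * - h1 h2 h3 xa
  revert i j j'
  unfold H F
  decide

lemma map_comm {G G' : Type*} [Group G] [Group G'] (f : G ≃* G') (a b : G) :
    f (comm' a b) = comm' (f a) (f b) := by
  simp [comm']

end D11

theorem stmt6 (e : ℕ) (he : 3 ≤ e) :
    ∃ (G₁ : Type) (_ : Group G₁) (_ : Finite G₁)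
      (G₂ : Type) (_ : Group G₂) (_ : Finite G₂),
      IsEmpty (G₁ ≃* G₂) ∧
      (∃ x y : G₁,
        Subgroup.closure {x, y} = ⊤ ∧
        x ^ 3 ^ (e + 1) = 1 ∧ y ^ 3 = sgen x y 3 ∧ tgenD x y 3 = sgen x y 3 * x ^ (3 ^ e)) ∧
      (∃ x y : G₂,
        Subgroup.closure {x, y} = ⊤ ∧
        x ^ 3 ^ (e + 1) = 1 ∧ y ^ 3 = sgen x y 3 ∧ tgenD x y 3 = sgen x y 3 * x ^ (2 * 3 ^ e)) ∧
      Nat.card G₁ = 3 ^ (4 + e) ∧ Nat.card G₂ = 3 ^ (4 + e) ∧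
      IsMetabelian G₁ ∧ IsMetabelian G₂ ∧
      IsSigmaGroup G₁ ∧ IsSigmaGroup G₂ ∧
      Nonempty (Abelianization G₁ ≃* Multiplicative (ZMod (3 ^ e) × ZMod 3)) ∧
      Nonempty (Abelianization G₂ ≃* Multiplicative (ZMod (3 ^ e) × ZMod 3)) := by
  obtain ⟨m, rfl⟩ : ∃ m, e = m + 1 := ⟨e - 1, by omega⟩
  refine ⟨D11.D m 1, inferInstance, inferInstance, D11.D m 2, inferInstance, inferInstance,
    ⟨fun f => ?_⟩, ⟨D11.X, D11.Y, D11.gen, D11.X_pow_one, D11.Y_cube, ?_⟩,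
    ⟨D11.X, D11.Y, D11.gen, D11.X_pow_one, D11.Y_cube, ?_⟩, D11.card_D, D11.card_D,
    D11.metab, D11.metab, D11.sigma (by decide), D11.sigma (by decide),
    D11.abel_iso (by decide), D11.abel_iso (by decide)⟩
  · refine D11.rigid (by omega) (f D11.X) (f D11.Y) ?_ ?_ ?_
    · have h := congrArg (Subgroup.map f.toMonoidHom) (D11.gen (m := m) (ε := 1))
      rw [MonoidHom.map_closure, Set.image_pair] at h
      rw [show Subgroup.map f.toMonoidHom ⊤ = ⊤ from
        Subgroup.map_top_of_surjective _ f.surjective] at h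
      exact h
    · have h := congrArg f (D11.Y_cube (m := m) (ε := 1))
      simpa only [map_pow, sgen, D11.map_comm] using h
    · have h := congrArg f (D11.t_rel (m := m) (ε := 1) 1 (by simp))
      simpa only [map_mul, map_pow, sgen, tgenD, D11.map_comm, one_mul, Nat.reduceSub] using h
  · have h := D11.t_rel (m := m) (ε := 1) 1 (by simp)
    rwa [one_mul] at h
  · exact D11.t_rel (m := m) (ε := 2) 2 (by simp)
end

section
/- For every integer e ≥ 5 and each i ∈ {2,3}, there exists a finite metabelian σ-group M of order 3^{6+e}, generated by two elements x and y satisfying w^3 = 1, y^3 = s₅, s₂^3 = s₄^2 s₅, s₃^3 = s₅^2, t₃ = s₃ w^{i-1}, t₄ = s₄, and t₅ = s₅, whose abelianization is isomorphic to (ZMod (3^e)) × (ZMod 3). -/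
/-! The group is realised on `ZMod (3^(f+2)) × ZMod 3 × ZMod 9 × ZMod 9` with `e = f + 1`;
the tuple `(a,b,u,v)` stands for `x^a y^b s₂^u s₃^v`. -/

namespace DTen

/-- Reduction of the `x`-exponent modulo 3. -/
def rho (f : ℕ) : ZMod (3 ^ (f + 2)) →+* ZMod 3 :=
  ZMod.castHom (Dvd.intro_left (3 ^ (f + 1)) (by ring)) (ZMod 3)

/-- Reduction of the `x`-exponent modulo `3^e`. -/
def pie (f : ℕ) : ZMod (3 ^ (f + 2)) →+* ZMod (3 ^ (f + 1)) :=
  ZMod.castHom (Dvd.intro 3 (by ring)) (ZMod (3 ^ (f + 1)))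

/-- Reduction modulo 3 of the `s₂`-exponent. -/
def red : ZMod 9 →+* ZMod 3 := ZMod.castHom (by norm_num) (ZMod 3)

lemma top_zero (f : ℕ) : (3 : ZMod (3 ^ (f + 2))) ^ (f + 1) * 3 = 0 := by
  have h := ZMod.natCast_self (3 ^ (f + 2))
  push_cast at h
  rw [← h]; ring

lemma top_mod (f n : ℕ) : (3 : ZMod (3 ^ (f + 2))) ^ (f + 1) * ((n % 3 : ℕ) : ZMod (3 ^ (f + 2)))
    = 3 ^ (f + 1) * (n : ZMod (3 ^ (f + 2))) := by
  conv_rhs => rw [← Nat.mod_add_div n 3]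
  push_cast
  linear_combination (-((n / 3 : ℕ) : ZMod (3 ^ (f + 2)))) * top_zero f

/-- The exponent of `x` representing the `k`-th power of `w = x^(3^e)`. -/
def om (f : ℕ) : ZMod 3 →+ ZMod (3 ^ (f + 2)) :=
  AddMonoidHom.mk' (fun k => 3 ^ (f + 1) * (k.val : ZMod (3 ^ (f + 2)))) (by
    intro a b
    rw [ZMod.val_add, top_mod]
    push_cast
    ring)

lemma om_nat (f n : ℕ) : om f (n : ZMod 3) = 3 ^ (f + 1) * (n : ZMod (3 ^ (f + 2))) := by
  change 3 ^ (f + 1) * (((n : ZMod 3).val : ℕ) : ZMod (3 ^ (f + 2))) = _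
  rw [ZMod.val_natCast, top_mod]

lemma rho_om (f : ℕ) (k : ZMod 3) : rho f (om f k) = 0 := by
  change rho f (3 ^ (f + 1) * (k.val : ZMod (3 ^ (f + 2)))) = 0
  rw [map_mul, map_pow]
  have : rho f 3 = 0 := by rw [map_ofNat]; decide
  rw [this]; simp

lemma pie_om (f : ℕ) (k : ZMod 3) : pie f (om f k) = 0 := by
  change pie f (3 ^ (f + 1) * (k.val : ZMod (3 ^ (f + 2)))) = 0
  rw [map_mul, map_pow, map_ofNat]
  have h := ZMod.natCast_self (3 ^ (f + 1))
  push_cast at h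
  rw [h, zero_mul]

lemma exists_om (f : ℕ) (a : ZMod (3 ^ (f + 2))) (h : pie f a = 0) : ∃ k, a = om f k := by
  have ha : ((a.val : ℕ) : ZMod (3 ^ (f + 2))) = a := ZMod.natCast_zmod_val a
  rw [← ha, map_natCast, ZMod.natCast_eq_zero_iff] at h
  obtain ⟨m, hm⟩ := h
  refine ⟨(m : ZMod 3), ?_⟩
  rw [om_nat, ← ha, hm]
  push_cast
  ring

def p (k : ZMod 3) : ZMod 9 := (![1, 1, 7] : Fin 3 → ZMod 9) k
def q (k : ZMod 3) : ZMod 9 := (![0, 6, 3] : Fin 3 → ZMod 9) k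
def r (k : ZMod 3) : ZMod 9 := (![0, 1, 8] : Fin 3 → ZMod 9) k
def s (k : ZMod 3) : ZMod 9 := (![1, 7, 1] : Fin 3 → ZMod 9) k
def E1 (a b : ZMod 3) : ZMod 9 :=
  (![![0, 0, 0], ![0, 1, 2], ![0, 2, 1]] : Fin 3 → Fin 3 → ZMod 9) a b
def E2 (a b : ZMod 3) : ZMod 9 :=
  (![![0, 0, 0], ![0, 0, 1], ![0, 1, 1]] : Fin 3 → Fin 3 → ZMod 9) a b
def carry (a b : ZMod 3) : ZMod 9 :=
  (![![0, 0, 0], ![0, 0, 6], ![0, 6, 6]] : Fin 3 → Fin 3 → ZMod 9) a b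
def K1 (b a b2 : ZMod 3) : ZMod 9 := p b2 * E1 a b + q b2 * E2 a b
def K2 (b a b2 : ZMod 3) : ZMod 9 := r b2 * E1 a b + s b2 * E2 a b + carry b b2
def gg (b : ZMod 3) : ZMod 9 := (![0, 3, 3] : Fin 3 → ZMod 9) b

lemma p_add : ∀ j k, p (j + k) = p k * p j + q k * r j := by decide
lemma q_add : ∀ j k, q (j + k) = p k * q j + q k * s j := by decide
lemma r_add : ∀ j k, r (j + k) = r k * p j + s k * r j := by decide
lemma s_add : ∀ j k, s (j + k) = r k * q j + s k * s j := by decide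
lemma red_p : ∀ k, red (p k) = 1 := by decide
lemma red_q : ∀ k, red (q k) = 0 := by decide
lemma red_K1 : ∀ b a b2, red (K1 b a b2) = a * b := by decide
set_option maxRecDepth 100000 in
lemma K1_coc : ∀ b a2 b2 a3 b3, p (a3 + b3) * K1 b a2 b2 + q (a3 + b3) * K2 b a2 b2
    + K1 (b + b2) a3 b3 = K1 b2 a3 b3 + K1 b (a2 + a3) (b2 + b3) := by decide +kernel
set_option maxRecDepth 100000 in
lemma K2_coc : ∀ b a2 b2 a3 b3, r (a3 + b3) * K1 b a2 b2 + s (a3 + b3) * K2 b a2 b2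
    + K2 (b + b2) a3 b3 = K2 b2 a3 b3 + K2 b (a2 + a3) (b2 + b3) := by decide +kernel
lemma K1_zero : ∀ a b, K1 0 a b = 0 := by decide
lemma K2_zero : ∀ a b, K2 0 a b = 0 := by decide
lemma K1_zero' : ∀ b, K1 b 0 0 = 0 := by decide
lemma K2_zero' : ∀ b, K2 b 0 0 = 0 := by decide
lemma p_zero : p 0 = 1 := rfl
lemma q_zero : q 0 = 0 := rfl
lemma r_zero : r 0 = 0 := rfl
lemma s_zero : s 0 = 1 := rfl

end DTen

open DTen in
/-- The underlying set of the group. -/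
@[ext] structure DM (f : ℕ) (c : ZMod 3) where
  a : ZMod (3 ^ (f + 2))
  b : ZMod 3
  u : ZMod 9
  v : ZMod 9

namespace DM
open DTen

variable {f : ℕ} {c : ZMod 3}

/-- The exponent of `w` produced by a multiplication. -/
def W (c u b a2 b2 : ZMod 3) : ZMod 3 := c * (u * b2 + a2 * (b - b ^ 2) + a2 * b * b2)

instance : Mul (DM f c) := ⟨fun g h =>
  ⟨g.a + h.a + om f (W c (red g.u) g.b (rho f h.a) h.b), g.b + h.b,
    p (rho f h.a + h.b) * g.u + q (rho f h.a + h.b) * g.v + h.u + K1 g.b (rho f h.a) h.b,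
    r (rho f h.a + h.b) * g.u + s (rho f h.a + h.b) * g.v + h.v + K2 g.b (rho f h.a) h.b⟩⟩

instance : One (DM f c) := ⟨⟨0, 0, 0, 0⟩⟩

instance : Inv (DM f c) := ⟨fun g =>
  ⟨-g.a - om f (W c (red g.u) g.b (-rho f g.a) (-g.b)), -g.b,
    -(p (-rho f g.a + -g.b) * g.u + q (-rho f g.a + -g.b) * g.v + K1 g.b (-rho f g.a) (-g.b)),
    -(r (-rho f g.a + -g.b) * g.u + s (-rho f g.a + -g.b) * g.v + K2 g.b (-rho f g.a) (-g.b))⟩⟩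

lemma mul_def (g h : DM f c) : g * h =
  ⟨g.a + h.a + om f (W c (red g.u) g.b (rho f h.a) h.b), g.b + h.b,
    p (rho f h.a + h.b) * g.u + q (rho f h.a + h.b) * g.v + h.u + K1 g.b (rho f h.a) h.b,
    r (rho f h.a + h.b) * g.u + s (rho f h.a + h.b) * g.v + h.v + K2 g.b (rho f h.a) h.b⟩ := rfl

lemma one_def : (1 : DM f c) = ⟨0, 0, 0, 0⟩ := rfl

lemma inv_def (g : DM f c) : g⁻¹ =
  ⟨-g.a - om f (W c (red g.u) g.b (-rho f g.a) (-g.b)), -g.b,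
    -(p (-rho f g.a + -g.b) * g.u + q (-rho f g.a + -g.b) * g.v + K1 g.b (-rho f g.a) (-g.b)),
    -(r (-rho f g.a + -g.b) * g.u + s (-rho f g.a + -g.b) * g.v
      + K2 g.b (-rho f g.a) (-g.b))⟩ := rfl

lemma W_coc (c u u2 b a2 b2 a3 b3 : ZMod 3) :
    W c u b a2 b2 + W c (u + u2 + a2 * b) (b + b2) a3 b3
      = W c u2 b2 a3 b3 + W c u b (a2 + a3) (b2 + b3) := by
  have h3 : (3 : ZMod 3) = 0 := by decide
  simp only [W]
  linear_combination (-c * a3 * b * b2) * h3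

instance : Group (DM f c) := Group.ofRightAxioms
  (by
    intro g h k
    ext
    · have hW := congrArg (om f) (W_coc c (red g.u) (red h.u) g.b (rho f h.a) h.b (rho f k.a) k.b)
      simp only [map_add] at hW
      simp only [mul_def, map_add, map_mul, rho_om, red_p, red_q, red_K1, one_mul, zero_mul,
        add_zero]
      linear_combination hW
    · simp only [mul_def]; ring
    · have h1 := K1_coc g.b (rho f h.a) h.b (rho f k.a) k.b
      simp only [mul_def, map_add, rho_om, add_zero]
      rw [show rho f h.a + rho f k.a + (h.b + k.b) = (rho f h.a + h.b) + (rho f k.a + k.b) by ring,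
        p_add (rho f h.a + h.b), q_add (rho f h.a + h.b)]
      linear_combination h1
    · have h1 := K2_coc g.b (rho f h.a) h.b (rho f k.a) k.b
      simp only [mul_def, map_add, rho_om, add_zero]
      rw [show rho f h.a + rho f k.a + (h.b + k.b) = (rho f h.a + h.b) + (rho f k.a + k.b) by ring,
        r_add (rho f h.a + h.b), s_add (rho f h.a + h.b)]
      linear_combination h1)
  (by
    intro g
    ext <;> simp [mul_def, one_def, W, p_zero, q_zero, r_zero, s_zero, K1_zero', K2_zero'])
  (by
    intro g
    ext <;> simp [mul_def, one_def, inv_def, rho_om] <;> ring)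

/-- The underlying product. -/
def equivProd : DM f c ≃ ZMod (3 ^ (f + 2)) × ZMod 3 × ZMod 9 × ZMod 9 where
  toFun g := (g.a, g.b, g.u, g.v)
  invFun t := ⟨t.1, t.2.1, t.2.2.1, t.2.2.2⟩
  left_inv _ := rfl
  right_inv _ := rfl

instance : Finite (DM f c) := Finite.of_equiv _ equivProd.symm

lemma card_eq : Nat.card (DM f c) = 3 ^ (6 + (f + 1)) := by
  rw [Nat.card_congr equivProd]
  simp only [Nat.card_prod, Nat.card_zmod]
  ring

/-- The map onto the abelianization. -/
def phi : DM f c →* Multiplicative (ZMod (3 ^ (f + 1)) × ZMod 3) where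
  toFun g := Multiplicative.ofAdd (pie f g.a, g.b)
  map_one' := by simp [one_def]
  map_mul' g h := by
    rw [← ofAdd_add]
    simp [mul_def, pie_om]

lemma phi_surj : Function.Surjective (phi : DM f c →* _) := by
  intro t
  obtain ⟨a, ha⟩ := ZMod.castHom_surjective (Dvd.intro 3 (by ring) : 3 ^ (f + 1) ∣ 3 ^ (f + 2))
    (Multiplicative.toAdd t).1
  exact ⟨⟨a, (Multiplicative.toAdd t).2, 0, 0⟩, by
    apply Multiplicative.toAdd.injective
    exact Prod.ext ha rfl⟩

lemma mem_ker (g : DM f c) : g ∈ (phi : DM f c →* _).ker ↔ (∃ k, g.a = om f k) ∧ g.b = 0 := by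
  rw [MonoidHom.mem_ker]
  have : phi g = 1 ↔ pie f g.a = 0 ∧ g.b = 0 := by
    change Multiplicative.ofAdd (pie f g.a, g.b) = Multiplicative.ofAdd 0 ↔ _
    rw [Multiplicative.ofAdd.injective.eq_iff, Prod.ext_iff]
    rfl
  rw [this]
  refine and_congr_left fun _ => ⟨exists_om f _, ?_⟩
  rintro ⟨k, hk⟩
  rw [hk, pie_om]

/-- The generator `x`. -/
def X : DM f c := ⟨1, 0, 0, 0⟩
/-- The generator `y`. -/
def Y : DM f c := ⟨0, 1, 0, 0⟩
/-- Elements `s₂^u s₃^v`. -/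
def S (u v : ZMod 9) : DM f c := ⟨0, 0, u, v⟩

lemma S_mul (u v u' v' : ZMod 9) : (S u v * S u' v' : DM f c) = S (u + u') (v + v') := by
  ext <;> simp [mul_def, S, W, p_zero, q_zero, r_zero, s_zero, K1_zero, K2_zero]

lemma S_pow (u v : ZMod 9) (n : ℕ) : (S u v : DM f c) ^ n = S (n * u) (n * v) := by
  induction n with
  | zero => simp [S, one_def]
  | succ n ih => rw [pow_succ, ih, S_mul]; push_cast; congr 1 <;> ring

lemma X_pow (n : ℕ) : (X : DM f c) ^ n = ⟨n, 0, 0, 0⟩ := by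
  induction n with
  | zero => simp [one_def]
  | succ n ih =>
    rw [pow_succ, ih]
    ext <;> simp [mul_def, X, W, K1_zero, K2_zero]

lemma w_eq (n : ℕ) : ((X : DM f c) ^ 3 ^ (f + 1)) ^ n = ⟨om f n, 0, 0, 0⟩ := by
  rw [← pow_mul, X_pow, om_nat]; push_cast; rfl

lemma comm_eq {G : Type*} [Group G] {a b z : G} (h : a * b = b * a * z) : comm' a b = z := by
  unfold comm'
  rw [mul_assoc, h]; group

lemma S_X (u v : ZMod 9) : comm' (S u v) (X : DM f c) = S (6 * v) (u + 6 * v) := by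
  apply comm_eq
  ext
  · simp [mul_def, S, X, W]
  · simp [mul_def, S, X]
  · simp [mul_def, S, X, K1_zero, p_zero, q_zero]
    rw [show p 1 = 1 from rfl, show q 1 = 6 from rfl]; ring
  · simp [mul_def, S, X, K2_zero, r_zero, s_zero]
    rw [show r 1 = 1 from rfl, show s 1 = 7 from rfl]; ring

lemma S_Y (u v : ZMod 9) : comm' (S u v) (Y : DM f c) =
    ⟨om f (c * red u), 0, 6 * v, u + 6 * v⟩ := by
  apply comm_eq
  ext
  · simp [mul_def, S, Y, W, rho_om]
  · simp [mul_def, S, Y]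
  · simp [mul_def, S, Y, K1_zero, p_zero, q_zero, rho_om, K1_zero']
    rw [show p 1 = 1 from rfl, show q 1 = 6 from rfl]; ring
  · simp [mul_def, S, Y, K2_zero, r_zero, s_zero, rho_om, K2_zero']
    rw [show r 1 = 1 from rfl, show s 1 = 7 from rfl]; ring

lemma s2_eq : sgen (X : DM f c) Y 2 = S 1 0 := by
  apply comm_eq
  ext
  · simp [mul_def, S, X, Y, W]
  · simp [mul_def, S, X, Y]
  · simp [mul_def, S, X, Y, K1_zero, K1_zero']; decide
  · simp [mul_def, S, X, Y, K2_zero, K2_zero']; decide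

lemma s3_eq : sgen (X : DM f c) Y 3 = S 0 1 := by
  change comm' (sgen X Y 2) X = _
  rw [s2_eq, S_X]; congr 1

lemma s4_eq : sgen (X : DM f c) Y 4 = S 6 6 := by
  change comm' (sgen X Y 3) X = _
  rw [s3_eq, S_X]; congr 1

lemma s5_eq : sgen (X : DM f c) Y 5 = S 0 6 := by
  change comm' (sgen X Y 4) X = _
  rw [s4_eq, S_X]; congr 1

lemma Y_sq : (Y : DM f c) ^ 2 = ⟨0, 2, 0, 0⟩ := by
  rw [pow_two]
  ext
  · simp [mul_def, Y, W]
  · simp [mul_def, Y]; decide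
  · simp [mul_def, Y]; decide
  · simp [mul_def, Y]; decide

lemma Y_cube : (Y : DM f c) ^ 3 = S 0 6 := by
  rw [pow_succ, Y_sq]
  ext
  · simp [mul_def, Y, W, S]
  · simp [mul_def, Y, S]; decide
  · simp [mul_def, Y, S]; decide
  · simp [mul_def, Y, S]; decide

lemma decomp (g : DM f c) : g = ⟨g.a, 0, 0, 0⟩ * (⟨0, g.b, 0, 0⟩ * S g.u g.v) := by
  ext
  · simp [mul_def, W, S]
  · simp [mul_def, S]
  · simp [mul_def, S, K1_zero, K1_zero']
  · simp [mul_def, S, K2_zero, K2_zero']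

lemma S_mem (H : Subgroup (DM f c)) (h2 : S 1 0 ∈ H) (h3 : S 0 1 ∈ H) (u v : ZMod 9) :
    S u v ∈ H := by
  have := H.mul_mem (H.pow_mem h2 u.val) (H.pow_mem h3 v.val)
  rw [S_pow, S_pow, S_mul] at this
  simpa using this

lemma comm_mem {G : Type*} [Group G] (H : Subgroup G) {a b : G} (ha : a ∈ H) (hb : b ∈ H) :
    comm' a b ∈ H :=
  H.mul_mem (H.mul_mem (H.mul_mem (H.inv_mem ha) (H.inv_mem hb)) ha) hb

lemma closure_top : Subgroup.closure {(X : DM f c), Y} = ⊤ := by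
  rw [eq_top_iff]
  intro g _
  have hX : X ∈ Subgroup.closure {(X : DM f c), Y} := Subgroup.subset_closure (by simp)
  have hY : Y ∈ Subgroup.closure {(X : DM f c), Y} := Subgroup.subset_closure (by simp)
  have h2 := comm_mem _ hY hX
  have h3 := comm_mem _ h2 hX
  rw [show comm' Y X = S 1 0 from s2_eq] at h2
  rw [show comm' (comm' Y X) X = S 0 1 from s3_eq] at h3
  rw [decomp g]
  refine Subgroup.mul_mem _ ?_ (Subgroup.mul_mem _ ?_ (S_mem _ h2 h3 _ _))
  · have := Subgroup.pow_mem _ hX g.a.val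
    rw [X_pow, ZMod.natCast_zmod_val] at this
    exact this
  · have hb : g.b = 0 ∨ g.b = 1 ∨ g.b = 2 := by
      generalize g.b = b
      revert b; decide
    rcases hb with h | h | h <;> rw [h]
    · exact Subgroup.one_mem _
    · exact hY
    · rw [← Y_sq]; exact Subgroup.pow_mem _ hY 2

lemma comm_mem_commutator {G : Type*} [Group G] (a b : G) : comm' a b ∈ commutator G := by
  have := Subgroup.commutator_mem_commutator (Subgroup.mem_top a⁻¹) (Subgroup.mem_top b⁻¹)
  simpa [commutatorElement_def, comm', commutator_def] using this

lemma ker_eq (hc : c * c = 1) : (phi : DM f c →* _).ker = commutator (DM f c) := by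
  apply le_antisymm
  · intro g hg
    rw [mem_ker] at hg
    obtain ⟨⟨k, hk⟩, hb⟩ := hg
    have h2 : S 1 0 ∈ commutator (DM f c) := by
      rw [← s2_eq]; exact comm_mem_commutator _ _
    have h3 : S 0 1 ∈ commutator (DM f c) := by
      rw [← s3_eq]; exact comm_mem_commutator _ _
    have hw : (⟨om f c, 0, 0, 0⟩ : DM f c) ∈ commutator (DM f c) := by
      have h := Subgroup.mul_mem _ (comm_mem_commutator (S 1 0) (Y : DM f c))
        (S_mem _ h2 h3 0 (-1))
      rw [S_Y] at h
      convert h using 1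
      ext <;> simp [mul_def, S, W, p_zero, q_zero, r_zero, s_zero, K1_zero, K2_zero]
    have hwn : ∀ n : ℕ, (⟨om f c, 0, 0, 0⟩ : DM f c) ^ n = ⟨om f (n * c), 0, 0, 0⟩ := by
      intro n
      induction n with
      | zero => simp [one_def]
      | succ n ih =>
        rw [pow_succ, ih]
        ext <;> simp [mul_def, W, K1_zero, K2_zero, add_mul]
    rw [decomp g, hb, hk]
    refine Subgroup.mul_mem _ ?_ (Subgroup.mul_mem _ (Subgroup.one_mem _) (S_mem _ h2 h3 _ _))
    have := Subgroup.pow_mem _ hw (k * c).val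
    rw [hwn, ZMod.natCast_zmod_val, mul_assoc, hc, mul_one] at this
    exact this
  · exact Abelianization.commutator_subset_ker _

lemma metab (hc : c * c = 1) : IsMetabelian (DM f c) := by
  unfold IsMetabelian
  rw [derivedSeries_succ, derivedSeries_one, Subgroup.commutator_eq_bot_iff_le_centralizer,
    ← ker_eq hc]
  intro g hg
  rw [Subgroup.mem_centralizer_iff]
  intro h hh
  obtain ⟨⟨k, hk⟩, hb⟩ := (mem_ker g).1 hg
  obtain ⟨⟨k', hk'⟩, hb'⟩ := (mem_ker h).1 hh
  ext <;> simp [mul_def, hk, hk', hb, hb', rho_om, W, p_zero, q_zero, r_zero, s_zero, K1_zero,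
    K2_zero, add_comm]

lemma sig_p : ∀ k, p (-k) = p k + q k := by decide
lemma sig_q : ∀ k, q (-k) = - q k := by decide
lemma sig_K1 : ∀ b a b2, p (-a + -b2) * 0 + q (-a + -b2) * gg b + K1 (-b) (-a) (-b2)
    = K1 b a b2 := by decide
lemma sig_r : ∀ k, r (-k) + s (-k) = p k - r k := by decide
lemma sig_s : ∀ k, - s (-k) = q k - s k := by decide
lemma sig_K2 : ∀ b a b2, s (-a + -b2) * gg b + gg b2 + K2 (-b) (-a) (-b2)
    = K1 b a b2 - K2 b a b2 + gg (b + b2) := by decide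

/-- The map underlying the automorphism inverting the abelianization. -/
def sig (g : DM f c) : DM f c := ⟨-g.a - om f (c * red g.u), -g.b, g.u, g.u - g.v + gg g.b⟩

lemma sig_sig (g : DM f c) : sig (sig g) = g := by
  have : ∀ b, gg (-b) = gg b := by decide
  ext <;> simp [sig, this] <;> ring

lemma sig_mul (g h : DM f c) : sig (g * h) = sig g * sig h := by
  ext
  · have hW : -W c (red g.u) g.b (rho f h.a) h.b
          - c * (red g.u + red h.u + rho f h.a * g.b)
        = -(c * red g.u) - c * red h.u + W c (red g.u) (-g.b) (-rho f h.a) (-h.b) := by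
      have h3 : (3 : ZMod 3) = 0 := by decide
      simp only [W]
      linear_combination (-c * rho f h.a * g.b) * h3
    have := congrArg (om f) hW
    simp only [map_add, map_sub, map_neg] at this
    simp only [sig, mul_def, map_add, map_mul, map_sub, map_neg, rho_om, red_p, red_q, red_K1,
      one_mul, zero_mul, add_zero, sub_zero]
    linear_combination this
  · simp only [sig, mul_def]; ring
  · simp only [sig, mul_def, map_sub, map_neg, rho_om, sub_zero]
    have h1 := sig_K1 g.b (rho f h.a) h.b
    have h2 := sig_p (rho f h.a + h.b)
    have h3 := sig_q (rho f h.a + h.b)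
    rw [neg_add] at h2 h3
    linear_combination (-1) * h1 - g.u * h2 - (g.u - g.v) * h3
  · simp only [sig, mul_def, map_sub, map_neg, rho_om, sub_zero]
    have h1 := sig_K2 g.b (rho f h.a) h.b
    have h2 := sig_r (rho f h.a + h.b)
    have h3 := sig_s (rho f h.a + h.b)
    rw [neg_add] at h2 h3
    linear_combination (-1) * h1 - g.u * h2 - g.v * h3

lemma isSigma (hc : c * c = 1) : IsSigmaGroup (DM f c) := by
  refine ⟨⟨⟨sig, sig, sig_sig, sig_sig⟩, sig_mul⟩, fun g => ?_⟩
  change Abelianization.of (sig g) = _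
  rw [eq_inv_iff_mul_eq_one, ← map_mul, ← MonoidHom.mem_ker, Abelianization.ker_of, ← ker_eq hc,
    MonoidHom.mem_ker, map_mul, mul_eq_one_iff_eq_inv]
  apply Multiplicative.toAdd.injective
  change (pie f (sig g).a, (sig g).b) = -(pie f g.a, g.b)
  simp [sig, pie_om]

lemma abel (hc : c * c = 1) :
    Nonempty (Abelianization (DM f c) ≃* Multiplicative (ZMod (3 ^ (f + 1)) × ZMod 3)) :=
  ⟨(QuotientGroup.quotientMulEquivOfEq (ker_eq hc).symm).trans
    (QuotientGroup.quotientKerEquivOfSurjective phi phi_surj)⟩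

end DM

theorem stmt7 (e i : ℕ) (he : 5 ≤ e) (hi : i = 2 ∨ i = 3) :
    ∃ (M : Type) (_ : Group M) (_ : Finite M) (x y : M),
      Subgroup.closure {x, y} = ⊤ ∧
      Nat.card M = 3 ^ (6 + e) ∧
      IsMetabelian M ∧
      IsSigmaGroup M ∧
      (x ^ 3 ^ e) ^ 3 = 1 ∧
      y ^ 3 = sgen x y 5 ∧
      sgen x y 2 ^ 3 = sgen x y 4 ^ 2 * sgen x y 5 ∧
      sgen x y 3 ^ 3 = sgen x y 5 ^ 2 ∧
      tgenD x y 3 = sgen x y 3 * (x ^ 3 ^ e) ^ (i - 1) ∧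
      tgenD x y 4 = sgen x y 4 ∧
      tgenD x y 5 = sgen x y 5 ∧
      Nonempty (Abelianization M ≃* Multiplicative (ZMod (3 ^ e) × ZMod 3)) := by
  obtain ⟨f, rfl⟩ : ∃ f, e = f + 1 := ⟨e - 1, by omega⟩
  have hc : ((i - 1 : ℕ) : ZMod 3) * ((i - 1 : ℕ) : ZMod 3) = 1 := by
    rcases hi with rfl | rfl <;> decide
  refine ⟨DM f ((i - 1 : ℕ) : ZMod 3), inferInstance, inferInstance, DM.X, DM.Y, DM.closure_top,
    DM.card_eq, DM.metab hc, DM.isSigma hc, ?_, ?_, ?_, ?_, ?_, ?_, ?_, DM.abel hc⟩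
  · rw [DM.w_eq]
    rw [show ((3 : ℕ) : ZMod 3) = 0 from by decide, map_zero]; rfl
  · rw [DM.Y_cube, DM.s5_eq]
  · rw [DM.s2_eq, DM.s4_eq, DM.s5_eq, DM.S_pow, DM.S_pow, DM.S_mul]
    congr 1
  · rw [DM.s3_eq, DM.s5_eq, DM.S_pow, DM.S_pow]
    congr 1
  · change comm' (sgen DM.X DM.Y 2) DM.Y = _
    rw [DM.s2_eq, DM.S_Y, DM.s3_eq, DM.w_eq]
    ext <;> simp [DM.mul_def, DM.S, DM.W, DTen.rho_om, DTen.p_zero, DTen.q_zero, DTen.r_zero,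
      DTen.s_zero, DTen.K1_zero, DTen.K2_zero]
  · change comm' (sgen DM.X DM.Y 3) DM.Y = _
    rw [DM.s3_eq, DM.S_Y, DM.s4_eq, map_zero, mul_zero, map_zero]
    rfl
  · change comm' (sgen DM.X DM.Y 4) DM.Y = _
    rw [DM.s4_eq, DM.S_Y, DM.s5_eq, show DTen.red 6 = 0 from by decide, mul_zero, map_zero]
    rfl
end

section
/- For every integer e ≥ 5 and each i ∈ {2,3}, there exists a finite group G of order 3^{7+e} whose abelianization is isomorphic to (ZMod (3^e)) × (ZMod 3), which admits an automorphism σ such that for every g ∈ G the image of σ(g) in the abelianization equals the inverse of the image of g, whose second derived subgroup G'' is nontrivial and whose third derived subgroup is trivial (derived length exactly 3), and whose quotient G/G'' is isomorphic to a metabelian group of order 3^{6+e} generated by x, y satisfying w^3 = 1, y^3 = s₅, s₂^3 = s₄^2 s₅, s₃^3 = s₅^2, t₃ = s₃ w^{i-1}, t₄ = s₄, t₅ = s₅. -/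
namespace D10

open scoped commutatorElement

/-- The finite module `ℤ/27 × ℤ/9`, elements `a + bN`. -/
abbrev Q := ZMod 27 × ZMod 9

def six : ZMod 9 →+ ZMod 27 where
  toFun b := 6 * (b.val : ZMod 27)
  map_zero' := by decide
  map_add' := by decide

def red : ZMod 27 →+* ZMod 9 := ZMod.castHom (by norm_num) (ZMod 9)

def red3 : ZMod 27 →+* ZMod 3 := ZMod.castHom (by norm_num) (ZMod 3)

theorem six_red : ∀ a, six (red a) = 6 * a := by decide
theorem red_six : ∀ b, red (six b) = 6 * b := by decide
theorem red3_six : ∀ b, red3 (six b) = 0 := by decide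

def p : Q →+ ZMod 3 := (red3 : ZMod 27 →+ ZMod 3).comp (AddMonoidHom.fst _ _)

theorem p_mk (a : ZMod 27) (b : ZMod 9) : p (a, b) = red3 a := rfl

def X (i : ZMod 3) (q : Q) : Q :=
  if i = 0 then q else if i = 1 then (q.1 + six q.2, red q.1 - 2 * q.2)
  else (7 * q.1 - six q.2, q.2 - red q.1)

theorem X_zero (q : Q) : X 0 q = q := rfl
theorem X_one (q : Q) : X 1 q = (q.1 + six q.2, red q.1 - 2 * q.2) := rfl
theorem X_two (q : Q) : X 2 q = (7 * q.1 - six q.2, q.2 - red q.1) := rfl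

theorem six_mul_two (b : ZMod 9) : six (2 * b) = 2 * six b := by
  rw [two_mul, map_add, two_mul]

theorem zmod3_cases (i : ZMod 3) : i = 0 ∨ i = 1 ∨ i = 2 := by revert i; decide

theorem n27 : (27 : ZMod 27) = 0 := by decide
theorem n9 : (9 : ZMod 9) = 0 := by decide

theorem nine_six (b : ZMod 9) : 9 * six b = 0 := by revert b; decide

theorem X_add (i : ZMod 3) (q r : Q) : X i (q + r) = X i q + X i r := by
  obtain ⟨a, b⟩ := q
  obtain ⟨c, d⟩ := r
  rcases zmod3_cases i with rfl | rfl | rfl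
  · rfl
  · simp only [X_one, Prod.mk_add_mk, map_add, Prod.mk.injEq]
    constructor <;> ring
  · simp only [X_two, Prod.mk_add_mk, map_add, Prod.mk.injEq]
    constructor <;> ring

theorem X_11 (q : Q) : X 1 (X 1 q) = X 2 q := by
  obtain ⟨a, b⟩ := q
  simp only [X_one, X_two, map_add, map_sub, six_red, red_six, six_mul_two, Prod.mk.injEq]
  constructor
  · ring
  · linear_combination b * n9

theorem X_12 (q : Q) : X 1 (X 2 q) = q := by
  obtain ⟨a, b⟩ := q
  simp only [X_one, X_two, map_sub, map_mul, six_red, red_six,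
    Prod.mk.injEq, map_ofNat]
  constructor
  · ring
  · linear_combination (red a - b) * n9

theorem X_21 (q : Q) : X 2 (X 1 q) = q := by
  rw [← X_11 (X 1 q), X_11 q, X_12]

theorem X_22 (q : Q) : X 2 (X 2 q) = X 1 q := by
  rw [← X_11 (X 2 q), X_12]

theorem X_comp (i j : ZMod 3) (q : Q) : X i (X j q) = X (i + j) q := by
  rcases zmod3_cases i with rfl | rfl | rfl <;> rcases zmod3_cases j with rfl | rfl | rfl
  · rfl
  · rfl
  · rfl
  · rfl
  · exact X_11 q
  · exact X_12 q
  · rfl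
  · exact X_21 q
  · exact X_22 q

theorem X_z (i : ZMod 3) : X i 0 = 0 := by
  have := X_add i 0 0
  simpa using this

theorem X_neg (i : ZMod 3) (q : Q) : X i (-q) = - X i q := by
  have := X_add i q (-q)
  rw [add_neg_cancel, X_z] at this
  exact (neg_eq_of_add_eq_zero_right this.symm).symm

theorem p_X (i : ZMod 3) (q : Q) : p (X i q) = p q := by
  obtain ⟨a, b⟩ := q
  rcases zmod3_cases i with rfl | rfl | rfl
  · rfl
  · simp [X_one, p_mk, red3_six]
  · simp only [X_two, p_mk, map_sub, red3_six, map_mul, map_ofNat, sub_zero]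
    have : (7 : ZMod 3) = 1 := by decide
    rw [this, one_mul]

def B (q r : Q) : ZMod 9 := red q.1 * r.2 - q.2 * red r.1

theorem B_add_left (q q' r : Q) : B (q + q') r = B q r + B q' r := by
  simp only [B, Prod.fst_add, Prod.snd_add, map_add]; ring
theorem B_add_right (q r r' : Q) : B q (r + r') = B q r + B q r' := by
  simp only [B, Prod.fst_add, Prod.snd_add, map_add]; ring
theorem B_neg_right (q r : Q) : B q (-r) = - B q r := by
  simp only [B, Prod.fst_neg, Prod.snd_neg, map_neg]; ring
theorem B_neg_left (q r : Q) : B (-q) r = - B q r := by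
  simp only [B, Prod.fst_neg, Prod.snd_neg, map_neg]; ring
theorem B_self (q : Q) : B q q = 0 := by
  simp only [B]; ring
theorem B_swap (q r : Q) : B r q = - B q r := by
  simp only [B]; ring
theorem B_zero_left (r : Q) : B 0 r = 0 := by simp [B]
theorem B_zero_right (r : Q) : B r 0 = 0 := by simp [B]

theorem B_X1 (q r : Q) : B (X 1 q) (X 1 r) = B q r := by
  obtain ⟨a, b⟩ := q
  obtain ⟨c, d⟩ := r
  simp only [B, X_one, map_add, red_six]
  linear_combination (b * red c - red a * d) * n9

theorem B_X (i : ZMod 3) (q r : Q) : B (X i q) (X i r) = B q r := by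
  rcases zmod3_cases i with rfl | rfl | rfl
  · rfl
  · exact B_X1 q r
  · rw [← X_11, ← X_11, B_X1, B_X1]

/-- The involution. -/
def theta (q : Q) : Q := (-q.1 + (3 - 9) * (q.2.val : ZMod 27), q.2)

theorem theta_eq (q : Q) : theta q = (-q.1 - six q.2, q.2) := by
  simp only [theta, six, AddMonoidHom.coe_mk, ZeroHom.coe_mk, Prod.mk.injEq, and_true]; ring

theorem theta_add (q r : Q) : theta (q + r) = theta q + theta r := by
  simp only [theta_eq, Prod.fst_add, Prod.snd_add, map_add, Prod.mk_add_mk, Prod.mk.injEq, and_true]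
  ring

theorem theta_theta (q : Q) : theta (theta q) = q := by
  simp [theta_eq]

theorem theta_X1 (q : Q) : theta (X 1 q) = X 2 (theta q) := by
  obtain ⟨a, b⟩ := q
  simp only [theta_eq, X_one, X_two, map_sub, map_neg, six_red, red_six, six_mul_two,
    Prod.mk.injEq]
  constructor
  · linear_combination nine_six b
  · linear_combination (-b) * n9

theorem theta_X (i : ZMod 3) (q : Q) : theta (X i q) = X (-i) (theta q) := by
  rcases zmod3_cases i with rfl | rfl | rfl
  · rfl
  · exact theta_X1 q
  · rw [← X_11, theta_X1, theta_X1, X_22]; rfl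

theorem p_theta (q : Q) : p (theta q) = - p q := by
  obtain ⟨a, b⟩ := q
  simp [theta_eq, p_mk, red3_six]

theorem B_theta (q r : Q) : B (theta q) (theta r) = - B q r := by
  simp only [B, theta_eq, map_sub, map_neg, red_six]
  ring

/-- Data for the twisted group. -/
structure Dat (C : Type) [AddCommGroup C] where
  emb : ZMod 9 →+ C
  pr : C →+ ZMod 3
  h : ∀ t, pr (emb t) = 0

variable {C : Type} [AddCommGroup C]

@[ext]
structure Gp (D : Dat C) where
  q : Q
  c : C

namespace Gp
variable {D : Dat C}

def j (g : Gp D) : ZMod 3 := D.pr g.c + p g.q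

instance : Mul (Gp D) := ⟨fun g h => ⟨g.q + X g.j h.q, g.c + h.c + D.emb (B g.q (X g.j h.q))⟩⟩
instance : One (Gp D) := ⟨⟨0, 0⟩⟩
instance : Inv (Gp D) := ⟨fun g => ⟨- X (-g.j) g.q, -g.c⟩⟩

theorem mul_q (g h : Gp D) : (g * h).q = g.q + X g.j h.q := rfl
theorem mul_c (g h : Gp D) : (g * h).c = g.c + h.c + D.emb (B g.q (X g.j h.q)) := rfl
theorem one_q : (1 : Gp D).q = 0 := rfl
theorem one_c : (1 : Gp D).c = 0 := rfl
theorem inv_q (g : Gp D) : (g⁻¹).q = - X (-g.j) g.q := rfl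
theorem inv_c (g : Gp D) : (g⁻¹).c = - g.c := rfl
theorem one_j : (1 : Gp D).j = 0 := by simp [j, one_q, one_c]
theorem mul_j (g h : Gp D) : (g * h).j = g.j + h.j := by
  simp only [j, mul_q, mul_c, map_add, D.h, p_X]; ring

instance : Group (Gp D) := Group.ofLeftAxioms
  (by
    intro a b c
    ext1
    · simp only [mul_q, mul_j, X_add, X_comp, add_assoc]
    · simp only [mul_q, mul_c, mul_j, X_add, X_comp, B_add_left, B_add_right, map_add]
      rw [← X_comp a.j b.j c.q, B_X]
      abel)
  (by
    intro a
    ext1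
    · simp [mul_q, one_q, one_j, X_zero]
    · simp [mul_c, one_q, one_c, one_j, X_zero, B_zero_left])
  (by
    intro a
    have hj : (a⁻¹).j = - a.j := by
      simp only [j, inv_q, inv_c, map_neg, p_X]; ring
    ext1
    · simp [mul_q, inv_q, hj, one_q]
    · simp [mul_c, inv_q, inv_c, hj, one_c, B_neg_left, B_self])

theorem mk_j (q : Q) (c : C) : (⟨q, c⟩ : Gp D).j = D.pr c + p q := rfl

def equiv : Gp D ≃ Q × C where
  toFun g := (g.q, g.c)
  invFun g := ⟨g.1, g.2⟩
  left_inv _ := rfl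
  right_inv _ := rfl

theorem card [Finite C] : Nat.card (Gp D) = 243 * Nat.card C := by
  rw [Nat.card_congr (equiv (D := D)), Nat.card_prod, Nat.card_prod, Nat.card_zmod, Nat.card_zmod]

instance [Finite C] : Finite (Gp D) := Finite.of_equiv _ (equiv (D := D)).symm

/-- The automorphism inducing inversion on the abelianization. -/
def sig : Gp D ≃* Gp D where
  toFun g := ⟨theta g.q, -g.c⟩
  invFun g := ⟨theta g.q, -g.c⟩
  left_inv g := by ext1 <;> simp [theta_theta]
  right_inv g := by ext1 <;> simp [theta_theta]
  map_mul' g h := by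
    have hj : (⟨theta g.q, -g.c⟩ : Gp D).j = - g.j := by
      simp only [j, map_neg, p_theta]; ring
    ext1
    · simp only [mul_q, hj, theta_add, theta_X]
    · simp only [mul_c, hj, ← theta_X, B_theta, map_neg]
      abel

/-- Functoriality in the data. -/
def map {C' : Type} [AddCommGroup C'] {D' : Dat C'} (f : C →+ C')
    (h1 : ∀ t, f (D.emb t) = D'.emb t) (h2 : ∀ c, D'.pr (f c) = D.pr c) : Gp D →* Gp D' where
  toFun g := ⟨g.q, f g.c⟩
  map_one' := by ext1 <;> simp [one_q, one_c]
  map_mul' g h := by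
    have hj : (⟨g.q, f g.c⟩ : Gp D').j = g.j := by
      simp only [j, h2]
    ext1
    · simp only [mul_q, hj]
    · simp only [mul_c, hj, map_add, h1]

/-- The abelianization map. -/
def alpha {E : Type} [AddCommGroup E] (f : C →+ E) (h : ∀ t, f (D.emb t) = 0) :
    Gp D →* Multiplicative (E × ZMod 3) where
  toFun g := Multiplicative.ofAdd (f g.c, p g.q)
  map_one' := by simp [one_q, one_c]
  map_mul' g g' := by
    rw [← ofAdd_add]
    simp only [mul_q, mul_c, map_add, h, p_X, add_zero, Prod.mk_add_mk]

theorem mul_zero_q (g : Gp D) (c : C) : g * ⟨0, c⟩ = ⟨g.q, g.c + c⟩ := by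
  ext1
  · simp [mul_q, X_z]
  · simp [mul_c, X_z, B_zero_right]

theorem zero_q_mul (c : C) (h : Gp D) : ⟨0, c⟩ * h = ⟨X (D.pr c) h.q, c + h.c⟩ := by
  ext1
  · simp [mul_q, mk_j]
  · simp [mul_c, B_zero_left]

theorem mul_of_j {g h : Gp D} (hg : g.j = 0) :
    g * h = ⟨g.q + h.q, g.c + h.c + D.emb (B g.q h.q)⟩ := by
  ext1
  · simp [mul_q, hg, X_zero]
  · simp [mul_c, hg, X_zero]

theorem comm_eq_of {g h k : Gp D} (e : g * h = k * (h * g)) : ⁅g, h⁆ = k := by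
  rw [commutatorElement_def, e]; group

theorem comm_of_j {g h : Gp D} (hg : g.j = 0) (hh : h.j = 0) :
    ⁅g, h⁆ = ⟨0, D.emb (2 * B g.q h.q)⟩ := by
  apply comm_eq_of
  rw [mul_of_j hg, mul_of_j hh, zero_q_mul, D.h, X_zero]
  ext1
  · simp only; abel
  · simp only [B_swap g.q h.q, two_mul, map_add, map_neg]; abel

theorem exists_N : ∀ a : ZMod 27, red3 a = 0 → ∃ b : ZMod 9, six b = a := by decide
theorem red_surj : ∀ b : ZMod 9, ∃ a : ZMod 27, red a = b := by decide
theorem red_three : ∀ a : ZMod 27, red3 a = 0 → ∃ b : ZMod 9, red a = 3 * b := by decide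

theorem B_three {q r : Q} (hq : p q = 0) (hr : p r = 0) : ∃ t, B q r = 3 * t := by
  obtain ⟨s, hs⟩ := red_three q.1 hq
  obtain ⟨t, ht⟩ := red_three r.1 hr
  refine ⟨s * r.2 - q.2 * t, ?_⟩
  rw [B, hs, ht]; ring

theorem emb_mem (u : C) (hu : D.pr u = 1) (t : ZMod 9) :
    (⟨0, D.emb t⟩ : Gp D) ∈ commutator (Gp D) := by
  have h1 : (⟨(1, 0), -u⟩ : Gp D).j = 0 := by
    rw [mk_j, map_neg, hu]; decide
  have h2 : (⟨(0, 5 * t), 0⟩ : Gp D).j = 0 := by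
    rw [mk_j, map_zero, p_mk, map_zero, add_zero]
  have h := comm_of_j h1 h2
  have e : 2 * B ((1, 0) : Q) (0, 5 * t) = t := by
    simp only [B, map_one, map_zero]
    linear_combination t * n9
  simp only [e] at h
  rw [← h]
  exact Subgroup.commutator_mem_commutator (Subgroup.mem_top _) (Subgroup.mem_top _)

theorem mem_comm (u : C) (hu : D.pr u = 1) (q : Q) (hq : p q = 0) (t : ZMod 9) :
    (⟨q, D.emb t⟩ : Gp D) ∈ commutator (Gp D) := by
  obtain ⟨b', hb'⟩ := exists_N q.1 hq
  obtain ⟨a', ha'⟩ := red_surj (q.2 + 3 * b')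
  have e1 : X 1 (a', b') = q + (a', b') := by
    rw [X_one]
    ext1
    · simp only [Prod.fst_add, hb']; ring
    · simp only [Prod.snd_add, ha']; ring
  have key : ⁅(⟨0, u⟩ : Gp D), (⟨(a', b'), 0⟩ : Gp D)⁆ = ⟨q, - D.emb (B q (a', b'))⟩ := by
    apply comm_eq_of
    have hj : (⟨q, - D.emb (B q (a', b'))⟩ : Gp D).j = 0 := by
      rw [mk_j, map_neg, D.h, hq]; rfl
    rw [mul_of_j hj, mul_zero_q, zero_q_mul, hu]
    ext1
    · exact e1
    · simp only; abel
  have : (⟨q, D.emb t⟩ : Gp D) = ⁅(⟨0, u⟩ : Gp D), (⟨(a', b'), 0⟩ : Gp D)⁆ *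
      ⟨0, D.emb (B q (a', b') + t)⟩ := by
    rw [key, mul_zero_q]
    ext1
    · rfl
    · simp
  rw [this]
  exact mul_mem (Subgroup.commutator_mem_commutator (Subgroup.mem_top _) (Subgroup.mem_top _))
    (emb_mem u hu _)

theorem mem_d2 (u : C) (hu : D.pr u = 1) (t : ZMod 9) :
    (⟨0, D.emb (3 * t)⟩ : Gp D) ∈ derivedSeries (Gp D) 2 := by
  have m1 : (⟨(3, 0), D.emb 0⟩ : Gp D) ∈ derivedSeries (Gp D) 1 := by
    rw [derivedSeries_one]; exact mem_comm u hu _ (by decide) _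
  have m2 : (⟨(0, 5 * t), D.emb 0⟩ : Gp D) ∈ derivedSeries (Gp D) 1 := by
    rw [derivedSeries_one]
    exact mem_comm u hu _ (by rw [p_mk, map_zero]) _
  have h1 : (⟨(3, 0), D.emb 0⟩ : Gp D).j = 0 := by
    rw [mk_j, map_zero, map_zero]; decide
  have h2 : (⟨(0, 5 * t), D.emb 0⟩ : Gp D).j = 0 := by
    rw [mk_j, map_zero, map_zero, p_mk, map_zero, add_zero]
  have h := comm_of_j h1 h2
  have e : 2 * B ((3, 0) : Q) (0, 5 * t) = 3 * t := by
    simp only [B, map_zero, map_ofNat]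
    linear_combination 3 * t * n9
  simp only [e] at h
  rw [← h]
  exact Subgroup.commutator_mem_commutator m1 m2


def red93 : ZMod 9 →+* ZMod 3 := ZMod.castHom (by norm_num) (ZMod 3)

theorem red93_ker : ∀ t : ZMod 9, red93 t = 0 → t = 0 ∨ t = 3 ∨ t = 3 + 3 := by decide

theorem emb_congr (h3 : D.emb 3 = 0) {s t : ZMod 9} (h : red93 s = red93 t) : D.emb s = D.emb t := by
  rw [← sub_eq_zero, ← map_sub]
  have : red93 (s - t) = 0 := by rw [map_sub, h, sub_self]
  rcases red93_ker _ this with h | h | h <;> rw [h]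
  · exact map_zero _
  · exact h3
  · rw [map_add, h3, add_zero]

theorem comm_of (h3 : D.emb 3 = 0) {q q' r : Q} {c c' d : C} {i i' : ZMod 3} {t : ZMod 9}
    (hi : D.pr c + p q = i) (hi' : D.pr c' + p q' = i') (hd : d = D.emb t)
    (hq : q + X i q' = (q' + X i' q) + X (i' + i) r)
    (ht : red93 (B q (X i q')) = red93 (B q' (X i' q) + t + B (q' + X i' q) (X (i' + i) r))) :
    comm' (⟨q, c⟩ : Gp D) ⟨q', c'⟩ = ⟨r, d⟩ := by
  have h : (⟨q, c⟩ : Gp D) * ⟨q', c'⟩ = ⟨q', c'⟩ * ⟨q, c⟩ * ⟨r, d⟩ := by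
    ext1
    · simp only [mul_q, mul_j, mk_j, hi, hi', hq]
    · simp only [mul_q, mul_c, mul_j, mk_j, hi, hi']
      rw [emb_congr h3 ht, map_add, map_add, hd]
      abel
  rw [comm', mul_assoc, h]; group

theorem cube_of {q : Q} {c : C} {i : ZMod 3} (hi : D.pr c + p q = i) :
    (⟨q, c⟩ : Gp D) ^ 3 = ⟨q + X i q + X (i + i) q,
      c + c + c + D.emb (B q (X i q) + B (q + X i q) (X (i + i) q))⟩ := by
  rw [pow_succ, pow_two]
  ext1
  · simp only [mul_q, mul_j, mk_j, hi]
  · simp only [mul_q, mul_c, mul_j, mk_j, hi, map_add]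
    abel

theorem sq_of {q : Q} (hi : p q = 0) :
    (⟨q, 0⟩ : Gp D) ^ 2 = ⟨q + q, 0⟩ := by
  have hj : (⟨q, 0⟩ : Gp D).j = 0 := by rw [mk_j, map_zero, hi, add_zero]
  rw [pow_two, mul_of_j hj]
  ext1
  · rfl
  · simp [B_self]


theorem s2 (h3 : D.emb 3 = 0) {u v : C} (hu : D.pr u = 1) (hv : D.pr v = 0) :
    sgen (⟨0, u⟩ : Gp D) ⟨(1, 0), v⟩ 2 = ⟨(21, 2), D.emb 1⟩ := by
  rw [sgen]
  exact comm_of (i := 1) (i' := 1) (t := 1) h3 (by rw [hv]; decide) (by rw [hu]; decide) rfl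
    (by decide) (by decide)

theorem s3 (h3 : D.emb 3 = 0) {u v : C} (hu : D.pr u = 1) (hv : D.pr v = 0) :
    sgen (⟨0, u⟩ : Gp D) ⟨(1, 0), v⟩ 3 = ⟨(6, 6), 0⟩ := by
  rw [sgen, s2 h3 hu hv]
  exact comm_of (i := 0) (i' := 1) (t := 0) h3 (by rw [D.h]; decide) (by rw [hu]; decide)
    (map_zero _).symm (by decide) (by decide)

theorem s4 (h3 : D.emb 3 = 0) {u v : C} (hu : D.pr u = 1) (hv : D.pr v = 0) :
    sgen (⟨0, u⟩ : Gp D) ⟨(1, 0), v⟩ 4 = ⟨(0, 3), 0⟩ := by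
  rw [sgen, s3 h3 hu hv]
  exact comm_of (i := 0) (i' := 1) (t := 0) h3 (by rw [map_zero]; decide) (by rw [hu]; decide)
    (map_zero _).symm (by decide) (by decide)

theorem s5 (h3 : D.emb 3 = 0) {u v : C} (hu : D.pr u = 1) (hv : D.pr v = 0) :
    sgen (⟨0, u⟩ : Gp D) ⟨(1, 0), v⟩ 5 = ⟨(9, 0), 0⟩ := by
  rw [sgen, s4 h3 hu hv]
  exact comm_of (i := 0) (i' := 1) (t := 0) h3 (by rw [map_zero]; decide) (by rw [hu]; decide)
    (map_zero _).symm (by decide) (by decide)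

theorem t3 (h3 : D.emb 3 = 0) {u v : C} (hu : D.pr u = 1) (hv : D.pr v = 0) :
    tgenD (⟨0, u⟩ : Gp D) ⟨(1, 0), v⟩ 3 = ⟨(6, 6), D.emb 2⟩ := by
  rw [tgenD, s2 h3 hu hv]
  exact comm_of (i := 0) (i' := 1) (t := 2) h3 (by rw [D.h]; decide) (by rw [hv]; decide)
    rfl (by decide) (by decide)

theorem t4 (h3 : D.emb 3 = 0) {u v : C} (hu : D.pr u = 1) (hv : D.pr v = 0) :
    tgenD (⟨0, u⟩ : Gp D) ⟨(1, 0), v⟩ 4 = ⟨(0, 3), 0⟩ := by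
  rw [tgenD, s3 h3 hu hv]
  exact comm_of (i := 0) (i' := 1) (t := 0) h3 (by rw [map_zero]; decide) (by rw [hv]; decide)
    (map_zero _).symm (by decide) (by decide)

theorem t5 (h3 : D.emb 3 = 0) {u v : C} (hu : D.pr u = 1) (hv : D.pr v = 0) :
    tgenD (⟨0, u⟩ : Gp D) ⟨(1, 0), v⟩ 5 = ⟨(9, 0), 0⟩ := by
  rw [tgenD, s4 h3 hu hv]
  exact comm_of (i := 0) (i' := 1) (t := 0) h3 (by rw [map_zero]; decide) (by rw [hv]; decide)
    (map_zero _).symm (by decide) (by decide)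


theorem y_cube (h3 : D.emb 3 = 0) {v : C} (hv : D.pr v = 0) (hv3 : v + v + v = D.emb 2) :
    (⟨(1, 0), v⟩ : Gp D) ^ 3 = ⟨(9, 0), 0⟩ := by
  rw [cube_of (i := 1) (by rw [hv]; decide), hv3, ← map_add]
  ext1
  · simp only; decide
  · simp only
    rw [← map_zero D.emb]
    exact emb_congr h3 (by decide)

theorem s2_cube (h3 : D.emb 3 = 0) :
    (⟨(21, 2), D.emb 1⟩ : Gp D) ^ 3 = ⟨(0, 3), 0⟩ ^ 2 * ⟨(9, 0), 0⟩ := by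
  have hj : (⟨(0, 3) + (0, 3), 0⟩ : Gp D).j = 0 := by rw [mk_j, map_zero]; decide
  rw [cube_of (i := 0) (by rw [D.h]; decide), sq_of (by decide), mul_of_j hj]
  simp only [← map_add, add_zero, zero_add]
  ext1
  · simp only; decide
  · exact emb_congr h3 (by decide)

theorem s3_cube (h3 : D.emb 3 = 0) :
    (⟨(6, 6), 0⟩ : Gp D) ^ 3 = ⟨(9, 0), 0⟩ ^ 2 := by
  rw [cube_of (i := 0) (by rw [map_zero]; decide), sq_of (by decide)]
  simp only [add_zero, zero_add]
  ext1
  · simp only; decide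
  · rw [← map_zero D.emb]
    exact emb_congr h3 (by decide)

theorem zero_pow (c : C) (n : ℕ) : (⟨0, c⟩ : Gp D) ^ n = ⟨0, n • c⟩ := by
  induction n with
  | zero => rw [pow_zero, zero_smul]; rfl
  | succ n ih => rw [pow_succ, ih, mul_zero_q, succ_nsmul]

theorem closure_top {u v : C} (hu : D.pr u = 1) (hgen : ∀ c : C, ∃ n : ℕ, c = n • u) :
    Subgroup.closure {(⟨0, u⟩ : Gp D), ⟨(1, 0), v⟩} = ⊤ := by
  set S := Subgroup.closure {(⟨0, u⟩ : Gp D), ⟨(1, 0), v⟩} with hS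
  have hx : (⟨0, u⟩ : Gp D) ∈ S := Subgroup.subset_closure (by simp)
  have hy : (⟨(1, 0), v⟩ : Gp D) ∈ S := Subgroup.subset_closure (by simp)
  have hz : ∀ c, (⟨0, c⟩ : Gp D) ∈ S := by
    intro c
    obtain ⟨n, rfl⟩ := hgen c
    rw [← zero_pow]
    exact pow_mem hx n
  have hsh : ∀ q c d, (⟨q, c⟩ : Gp D) ∈ S → (⟨q, d⟩ : Gp D) ∈ S := by
    intro q c d h
    have : (⟨q, d⟩ : Gp D) = ⟨q, c⟩ * ⟨0, d - c⟩ := by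
      rw [mul_zero_q]; ext1 <;> simp
    rw [this]
    exact mul_mem h (hz _)
  let T : AddSubmonoid Q :=
    { carrier := {q | (⟨q, 0⟩ : Gp D) ∈ S}
      zero_mem' := hz 0
      add_mem' := by
        intro a b ha hb
        have hj : (⟨a, -((p a).val • u)⟩ : Gp D).j = 0 := by
          rw [mk_j, map_neg, map_nsmul, hu, nsmul_eq_mul, mul_one, ZMod.natCast_zmod_val,
            neg_add_cancel]
        have := mul_mem (hsh a 0 (-((p a).val • u)) ha) hb
        rw [mul_of_j hj] at this
        exact hsh _ _ _ this }
  have hT1 : ((1, 0) : Q) ∈ T := hsh _ _ _ hy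
  have hT2 : ((1, 1) : Q) ∈ T := by
    have := mul_mem hx hT1
    rw [zero_q_mul, hu] at this
    have e : X 1 ((1, 0) : Q) = (1, 1) := by decide
    simp only [e] at this
    exact hsh _ _ _ this
  have hT3 : ((0, 1) : Q) ∈ T := by
    have := T.add_mem hT2 (T.nsmul_mem hT1 26)
    have e : ((1, 1) : Q) + 26 • (1, 0) = (0, 1) := by decide
    rwa [e] at this
  rw [eq_top_iff]
  rintro ⟨q, c⟩ -
  apply hsh q 0
  have : q = q.1.val • ((1, 0) : Q) + q.2.val • ((0, 1) : Q) := by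
    ext1 <;> simp
  have h := T.add_mem (T.nsmul_mem hT1 q.1.val) (T.nsmul_mem hT3 q.2.val)
  rw [← this] at h
  exact h

end Gp


theorem dat_aux {e n : ℕ} (k : ℕ) (hn : n ≤ e + 2) :
    zmultiplesHom (ZMod (3 ^ n)) ((k : ZMod (3 ^ n)) * 3 ^ e) ((9 : ℕ) : ℤ) = 0 := by
  rw [zmultiplesHom_apply, natCast_zsmul, nsmul_eq_mul]
  have h : ((9 * k * 3 ^ e : ℕ) : ZMod (3 ^ n)) = 0 := by
    rw [ZMod.natCast_eq_zero_iff]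
    have h1 : 3 ^ n ∣ 3 ^ (e + 2) := pow_dvd_pow 3 hn
    exact h1.trans ⟨k, by ring⟩
  push_cast at h ⊢
  linear_combination h

/-- The concrete data. -/
def dat (e k n : ℕ) (he : 1 ≤ e) (hn0 : 1 ≤ n) (hn : n ≤ e + 2) : Dat (ZMod (3 ^ n)) where
  emb := ZMod.lift 9 ⟨zmultiplesHom (ZMod (3 ^ n)) ((k : ZMod (3 ^ n)) * 3 ^ e), dat_aux k hn⟩
  pr := (ZMod.castHom (dvd_pow_self 3 (by omega)) (ZMod 3) : ZMod (3 ^ n) →+* ZMod 3)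
  h t := by
    obtain ⟨z, rfl⟩ := ZMod.intCast_surjective t
    rw [ZMod.lift_coe]
    simp only [zmultiplesHom_apply, zsmul_eq_mul, AddMonoidHom.coe_coe, map_mul, map_pow,
      map_intCast, map_natCast, map_ofNat]
    have : (3 : ZMod 3) = 0 := by decide
    rw [this, zero_pow (by omega)]
    ring

section
variable {e k n : ℕ} {he : 1 ≤ e} {hn0 : 1 ≤ n} {hn : n ≤ e + 2}

theorem emb_nat (m : ℕ) : (dat e k n he hn0 hn).emb (m : ZMod 9) = (m * k * 3 ^ e : ℕ) := by
  have : (m : ZMod 9) = ((m : ℤ) : ZMod 9) := by simp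
  rw [this]
  change ZMod.lift 9 _ _ = _
  rw [ZMod.lift_coe]
  simp [mul_assoc]

theorem pr_nat (m : ℕ) : (dat e k n he hn0 hn).pr (m : ZMod (3 ^ n)) = m := by
  exact map_natCast (ZMod.castHom (dvd_pow_self 3 (by omega) : 3 ∣ 3 ^ n) (ZMod 3)) m

theorem cast_zero {m : ℕ} (h : 3 ^ m ∣ 3 ^ n) (c : ZMod (3 ^ n))
    (hc : ZMod.castHom h (ZMod (3 ^ m)) c = 0) : ∃ s : ℕ, c = (3 ^ m * s : ℕ) := by
  have : NeZero (3 ^ n) := ⟨by positivity⟩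
  rw [← ZMod.natCast_zmod_val c, map_natCast, ZMod.natCast_eq_zero_iff] at hc
  obtain ⟨s, hs⟩ := hc
  exact ⟨s, by rw [← hs, ZMod.natCast_zmod_val]⟩

end

theorem exists_inv (k : ℕ) (hk : k = 1 ∨ k = 2) : ∃ k' m : ℕ, k' * k = 1 + 9 * m := by
  rcases hk with rfl | rfl
  · exact ⟨1, 0, rfl⟩
  · exact ⟨5, 1, rfl⟩

theorem nat_cast_eq {n : ℕ} {a b c : ℕ} (h : a = b + 3 ^ n * c) : (a : ZMod (3 ^ n)) = b := by
  rw [h, Nat.cast_add, Nat.cast_mul, ZMod.natCast_self, zero_mul, add_zero]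

theorem main (e i : ℕ) (he : 5 ≤ e) (hi : i = 2 ∨ i = 3) :
    ∃ (G : Type) (_ : Group G) (_ : Finite G),
      Nat.card G = 3 ^ (7 + e) ∧
      Nonempty (Abelianization G ≃* Multiplicative (ZMod (3 ^ e) × ZMod 3)) ∧
      (∃ σ : G ≃* G, ∀ g : G, Abelianization.of (σ g) = (Abelianization.of g)⁻¹) ∧
      derivedSeries G 2 ≠ ⊥ ∧
      derivedSeries G 3 = ⊥ ∧
      ∃ (M : Type) (_ : Group M) (_ : Finite M) (x y : M),
        Subgroup.closure {x, y} = ⊤ ∧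
        Nat.card M = 3 ^ (6 + e) ∧
        IsMetabelian M ∧
        (x ^ 3 ^ e) ^ 3 = 1 ∧
          y ^ 3 = sgen x y 5 ∧
          sgen x y 2 ^ 3 = sgen x y 4 ^ 2 * sgen x y 5 ∧
          sgen x y 3 ^ 3 = sgen x y 5 ^ 2 ∧
          tgenD x y 3 = sgen x y 3 * (x ^ 3 ^ e) ^ (i - 1) ∧
          tgenD x y 4 = sgen x y 4 ∧
          tgenD x y 5 = sgen x y 5 ∧
        ∃ φ : G →* M, Function.Surjective φ ∧ φ.ker = derivedSeries G 2 := by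
  obtain ⟨k, hk, hk12⟩ : ∃ k, k + i = 4 ∧ (k = 1 ∨ k = 2) := ⟨4 - i, by omega, by omega⟩
  obtain ⟨k', m, hk'⟩ := exists_inv k hk12
  have : NeZero (3 ^ (e + 2)) := ⟨by positivity⟩
  have : NeZero (3 ^ (e + 1)) := ⟨by positivity⟩
  set D := dat e k (e + 2) (by omega) (by omega) le_rfl with hD
  set D' := dat e k (e + 1) (by omega) (by omega) (by omega) with hD'
  have hemb : ∀ t : ℕ, D.emb (t : ZMod 9) = (t * k * 3 ^ e : ℕ) := fun t => emb_nat t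
  have hemb' : ∀ t : ℕ, D'.emb (t : ZMod 9) = (t * k * 3 ^ e : ℕ) := fun t => emb_nat t
  have hpr : ∀ t : ℕ, D.pr (t : ZMod (3 ^ (e + 2))) = t := fun t => pr_nat t
  have hpr' : ∀ t : ℕ, D'.pr (t : ZMod (3 ^ (e + 1))) = t := fun t => pr_nat t
  have nat9 : ∀ t : ZMod 9, ∃ s : ℕ, t = s := fun t => ⟨t.val, (ZMod.natCast_zmod_val t).symm⟩
  have hu : D.pr 1 = 1 := by simpa using hpr 1
  have hu' : D'.pr 1 = 1 := by simpa using hpr' 1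
  let f : ZMod (3 ^ (e + 2)) →+* ZMod (3 ^ (e + 1)) :=
    ZMod.castHom (pow_dvd_pow 3 (by omega)) _
  have hf1 : ∀ t, (f : ZMod (3 ^ (e + 2)) →+ ZMod (3 ^ (e + 1))) (D.emb t) = D'.emb t := by
    intro t
    obtain ⟨s, rfl⟩ := nat9 t
    rw [hemb, hemb', AddMonoidHom.coe_coe, map_natCast]
  have hf2 : ∀ c, D'.pr ((f : ZMod (3 ^ (e + 2)) →+ ZMod (3 ^ (e + 1))) c) = D.pr c := by
    intro c
    rw [← ZMod.natCast_zmod_val c, hpr, AddMonoidHom.coe_coe, map_natCast, hpr']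
  let φ : Gp D →* Gp D' := Gp.map (f : ZMod (3 ^ (e + 2)) →+ ZMod (3 ^ (e + 1))) hf1 hf2
  have hφs : Function.Surjective φ := by
    rintro ⟨q, c⟩
    obtain ⟨d, hd⟩ := ZMod.castHom_surjective (pow_dvd_pow 3 (by omega) : 3 ^ (e + 1) ∣ 3 ^ (e + 2)) c
    exact ⟨⟨q, d⟩, Gp.ext rfl hd⟩
  let g : ZMod (3 ^ (e + 2)) →+* ZMod (3 ^ e) := ZMod.castHom (pow_dvd_pow 3 (by omega)) _
  have hg : ∀ t, (g : ZMod (3 ^ (e + 2)) →+ ZMod (3 ^ e)) (D.emb t) = 0 := by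
    intro t
    obtain ⟨s, rfl⟩ := nat9 t
    rw [hemb, AddMonoidHom.coe_coe, map_natCast, ZMod.natCast_eq_zero_iff]
    exact Dvd.intro_left _ rfl
  let α : Gp D →* Multiplicative (ZMod (3 ^ e) × ZMod 3) :=
    Gp.alpha (g : ZMod (3 ^ (e + 2)) →+ ZMod (3 ^ e)) hg
  have hαs : Function.Surjective α := by
    intro z
    obtain ⟨d, hd⟩ := ZMod.castHom_surjective (pow_dvd_pow 3 (by omega) : 3 ^ e ∣ 3 ^ (e + 2))
      (Multiplicative.toAdd z).1
    have h3 : ∀ b : ZMod 3, ∃ a : ZMod 27, red3 a = b := by decide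
    obtain ⟨a, ha⟩ := h3 (Multiplicative.toAdd z).2
    exact ⟨⟨(a, 0), d⟩, Multiplicative.toAdd.injective (Prod.ext hd ha)⟩
  have hαmem : ∀ z : Gp D, z ∈ α.ker ↔ g z.c = 0 ∧ p z.q = 0 := by
    intro z
    rw [MonoidHom.mem_ker]
    exact Multiplicative.toAdd.injective.eq_iff.symm.trans Prod.mk_eq_zero
  have hemb_mul : ∀ s : ℕ, D.emb ((k' * s : ℕ) : ZMod 9) = (3 ^ e * s : ℕ) := by
    intro s
    rw [hemb]
    apply nat_cast_eq (c := m * s)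
    calc k' * s * k * 3 ^ e = (k' * k) * s * 3 ^ e := by ring
      _ = _ := by rw [hk']; ring
  have hαker : α.ker = commutator (Gp D) := by
    apply le_antisymm
    · intro z hz
      obtain ⟨h1, h2⟩ := (hαmem z).1 hz
      obtain ⟨s, hs⟩ := cast_zero _ _ h1
      rw [← hemb_mul] at hs
      obtain ⟨q, c⟩ := z
      simp only at hs h2
      rw [hs]
      exact Gp.mem_comm 1 hu q h2 _
    · exact Abelianization.commutator_subset_ker α
  have hφmem : ∀ z : Gp D, z ∈ φ.ker ↔ z.q = 0 ∧ f z.c = 0 := by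
    intro z
    rw [MonoidHom.mem_ker, Gp.ext_iff]
    rfl
  have h3 : D'.emb 3 = 0 := by
    have := hemb' 3
    rw [Nat.cast_ofNat] at this
    rw [this, ZMod.natCast_eq_zero_iff]
    exact ⟨k, by ring⟩
  have hφker : φ.ker = derivedSeries (Gp D) 2 := by
    apply le_antisymm
    · intro z hz
      obtain ⟨h1, h2⟩ := (hφmem z).1 hz
      obtain ⟨s, hs⟩ := cast_zero _ _ h2
      obtain ⟨q, c⟩ := z
      simp only at hs h1
      have : c = D.emb (3 * ((k' * s : ℕ) : ZMod 9)) := by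
        rw [hs, show (3 : ZMod 9) * ((k' * s : ℕ) : ZMod 9) = ((k' * (3 * s) : ℕ) : ZMod 9) by
          push_cast; ring, hemb_mul]
        congr 1; ring
      rw [this, h1]
      exact Gp.mem_d2 1 hu _
    · rw [derivedSeries_succ, derivedSeries_one, ← hαker, Subgroup.commutator_le]
      intro a ha b hb
      obtain ⟨ha1, ha2⟩ := (hαmem a).1 ha
      obtain ⟨hb1, hb2⟩ := (hαmem b).1 hb
      have hj : ∀ z : Gp D, g z.c = 0 → p z.q = 0 → z.j = 0 := by
        intro z h1 h2
        obtain ⟨s, hs⟩ := cast_zero _ _ h1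
        rw [Gp.j, hs, ← hemb_mul, D.h, h2, add_zero]
      rw [Gp.comm_of_j (hj a ha1 ha2) (hj b hb1 hb2), hφmem]
      refine ⟨rfl, ?_⟩
      obtain ⟨t, ht⟩ := Gp.B_three ha2 hb2
      refine (hf1 _).trans ?_
      rw [ht, ← map_zero D'.emb]
      apply Gp.emb_congr h3
      rw [map_mul, map_mul, show Gp.red93 3 = 0 by decide, zero_mul, mul_zero, map_zero]
  refine ⟨Gp D, inferInstance, inferInstance, ?_, ?_, ⟨Gp.sig, ?_⟩, ?_, ?_, Gp D', inferInstance,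
    inferInstance, ⟨0, 1⟩, ⟨(1, 0), ((i - 1) * 3 ^ (e - 1) : ℕ)⟩, ?_⟩
  · rw [Gp.card, Nat.card_zmod]; ring
  · exact ⟨(QuotientGroup.quotientMulEquivOfEq hαker.symm).trans
      (QuotientGroup.quotientKerEquivOfSurjective α hαs)⟩
  · intro z
    rw [← map_inv]
    have : (Gp.sig z) * z ∈ α.ker := by
      rw [MonoidHom.mem_ker, map_mul]
      apply Multiplicative.toAdd.injective
      change ((g (-z.c), p (theta z.q)) + (g z.c, p z.q) : ZMod (3 ^ e) × ZMod 3) = 0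
      rw [map_neg, p_theta, Prod.mk_add_mk, neg_add_cancel, neg_add_cancel]; rfl
    rw [hαker] at this
    rw [map_inv, eq_inv_iff_mul_eq_one, ← map_mul]
    exact (QuotientGroup.eq_one_iff _).2 this
  · intro hbot
    have h := Gp.mem_d2 (D := D) 1 hu 1
    rw [hbot, Subgroup.mem_bot, Gp.ext_iff] at h
    have h2 := h.2
    have := hemb 3
    rw [Nat.cast_ofNat] at this
    rw [mul_one, this, Gp.one_c, ZMod.natCast_eq_zero_iff] at h2
    have h4 : 3 ^ e * 3 * 3 ∣ 3 ^ e * 3 * k := by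
      rw [show 3 ^ e * 3 * 3 = 3 ^ (e + 2) by ring, show 3 ^ e * 3 * k = 3 * k * 3 ^ e by ring]
      exact h2
    have := Nat.dvd_of_mul_dvd_mul_left (by positivity) h4
    omega
  · rw [derivedSeries_succ, ← hφker, Subgroup.commutator_eq_bot_iff_le_centralizer]
    intro a ha
    rw [Subgroup.mem_centralizer_iff]
    intro b hb
    obtain ⟨ha1, ha2⟩ := (hφmem a).1 ha
    obtain ⟨hb1, hb2⟩ := (hφmem b).1 hb
    obtain ⟨q, c⟩ := a
    obtain ⟨q', c'⟩ := b
    simp only at ha1 hb1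
    rw [ha1, hb1, Gp.mul_zero_q, Gp.mul_zero_q]
    ext1
    · rfl
    · exact add_comm _ _
  have hv : D'.pr (((i - 1) * 3 ^ (e - 1) : ℕ) : ZMod (3 ^ (e + 1))) = 0 := by
    rw [hpr', ZMod.natCast_eq_zero_iff]
    exact Dvd.dvd.mul_left (dvd_pow_self 3 (by omega)) _
  have hpe : 3 ^ e = 3 ^ (e - 1) * 3 := by
    rw [← pow_succ]; congr 1; omega
  have hw : (((i - 1) * 3 ^ e : ℕ) : ZMod (3 ^ (e + 1))) = D'.emb 2 := by
    have := hemb' 2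
    rw [Nat.cast_ofNat] at this
    rw [this]
    symm
    apply nat_cast_eq (c := k - 1)
    rcases hk12 with rfl | rfl
    · have : i = 3 := by omega
      subst this; simp
    · have : i = 2 := by omega
      subst this; simp; ring
  have hv3 : (((i - 1) * 3 ^ (e - 1) : ℕ) : ZMod (3 ^ (e + 1))) + ((i - 1) * 3 ^ (e - 1) : ℕ) +
      ((i - 1) * 3 ^ (e - 1) : ℕ) = D'.emb 2 := by
    rw [← hw, ← Nat.cast_add, ← Nat.cast_add]
    congr 1
    rw [hpe]; ring
  refine ⟨Gp.closure_top hu' ?_, ?_, ?_, ?_, ?_, ?_, ?_, ?_, ?_, ?_, φ, hφs, hφker⟩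
  · intro c
    exact ⟨c.val, by rw [nsmul_eq_mul, mul_one, ZMod.natCast_zmod_val]⟩
  · rw [Gp.card, Nat.card_zmod]; ring
  · rw [IsMetabelian, ← map_derivedSeries_eq hφs, ← hφker, Subgroup.map_eq_bot_iff]
  · rw [← pow_mul, ← pow_succ, Gp.zero_pow, nsmul_eq_mul, ZMod.natCast_self, zero_mul]; rfl
  · rw [Gp.s5 h3 hu' hv, Gp.y_cube h3 hv hv3]
  · rw [Gp.s2 h3 hu' hv, Gp.s4 h3 hu' hv, Gp.s5 h3 hu' hv, Gp.s2_cube h3]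
  · rw [Gp.s3 h3 hu' hv, Gp.s5 h3 hu' hv, Gp.s3_cube h3]
  · rw [Gp.t3 h3 hu' hv, Gp.s3 h3 hu' hv, ← pow_mul, Gp.zero_pow, Gp.mul_zero_q, ← hw,
      nsmul_eq_mul, mul_one, mul_comm]
    ext1
    · rfl
    · simp
  · rw [Gp.t4 h3 hu' hv, Gp.s4 h3 hu' hv]
  · rw [Gp.t5 h3 hu' hv, Gp.s5 h3 hu' hv]

end D10

theorem stmt8 (e i : ℕ) (he : 5 ≤ e) (hi : i = 2 ∨ i = 3) :
    ∃ (G : Type) (_ : Group G) (_ : Finite G),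
      Nat.card G = 3 ^ (7 + e) ∧
      Nonempty (Abelianization G ≃* Multiplicative (ZMod (3 ^ e) × ZMod 3)) ∧
      (∃ σ : G ≃* G, ∀ g : G, Abelianization.of (σ g) = (Abelianization.of g)⁻¹) ∧
      derivedSeries G 2 ≠ ⊥ ∧
      derivedSeries G 3 = ⊥ ∧
      ∃ (M : Type) (_ : Group M) (_ : Finite M) (x y : M),
        Subgroup.closure {x, y} = ⊤ ∧
        Nat.card M = 3 ^ (6 + e) ∧
        IsMetabelian M ∧
        (x ^ 3 ^ e) ^ 3 = 1 ∧
          y ^ 3 = sgen x y 5 ∧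
          sgen x y 2 ^ 3 = sgen x y 4 ^ 2 * sgen x y 5 ∧
          sgen x y 3 ^ 3 = sgen x y 5 ^ 2 ∧
          tgenD x y 3 = sgen x y 3 * (x ^ 3 ^ e) ^ (i - 1) ∧
          tgenD x y 4 = sgen x y 4 ∧
          tgenD x y 5 = sgen x y 5 ∧
        ∃ φ : G →* M, Function.Surjective φ ∧ φ.ker = derivedSeries G 2 := by
  exact D10.main e i he hi
end

section
/- For every integer e ≥ 5 and each i ∈ {2,3}, there exists a finite metabelian σ-group M of order 3^{6+e}, generated by two elements x and y satisfying w^3 = 1, y^3 = s₅, s₂^3 = s₄^2 s₅, s₃^3 = s₅^2, t₃ = s₃ s₅ w^{i-1}, t₄ = s₄, and t₅ = s₅, whose abelianization is isomorphic to (ZMod (3^e)) × (ZMod 3); moreover there exists a finite group G of order 3^{7+e} with the same abelianization, admitting a σ-automorphism, with second derived subgroup nontrivial and third derived subgroup trivial (derived length exactly 3), such that G/G'' is isomorphic to M. -/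
@[ext] structure BB where
  a : ZMod 9
  b : ZMod 9
  c : ZMod 9

namespace BB

instance : DecidableEq BB := fun p q =>
  decidable_of_iff (p.a = q.a ∧ p.b = q.b ∧ p.c = q.c)
    ⟨fun h => BB.ext h.1 h.2.1 h.2.2, fun h => by subst h; exact ⟨rfl, rfl, rfl⟩⟩

instance : Mul BB := ⟨fun p q => ⟨p.a + q.a, p.b + q.b, p.c + q.c + 6 * (q.a * p.b - p.a * q.b)⟩⟩
instance : One BB := ⟨⟨0, 0, 0⟩⟩
instance : Inv BB := ⟨fun p => ⟨-p.a, -p.b, -p.c⟩⟩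

@[simp] lemma mul_a (p q : BB) : (p * q).a = p.a + q.a := rfl
@[simp] lemma mul_b (p q : BB) : (p * q).b = p.b + q.b := rfl
@[simp] lemma mul_c (p q : BB) :
    (p * q).c = p.c + q.c + 6 * (q.a * p.b - p.a * q.b) := rfl
@[simp] lemma one_a : (1 : BB).a = 0 := rfl
@[simp] lemma one_b : (1 : BB).b = 0 := rfl
@[simp] lemma one_c : (1 : BB).c = 0 := rfl
@[simp] lemma inv_a (p : BB) : (p⁻¹).a = -p.a := rfl
@[simp] lemma inv_b (p : BB) : (p⁻¹).b = -p.b := rfl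
@[simp] lemma inv_c (p : BB) : (p⁻¹).c = -p.c := rfl

instance : Group BB :=
  Group.ofLeftAxioms
    (by intro p q r; ext <;> simp <;> ring)
    (by intro p; ext <;> simp)
    (by intro p; ext <;> simp)


/-- action of powers of `x` on the derived group -/
def X (k : ZMod 3) (p : BB) : BB :=
  if k = 0 then p
  else if k = 1 then ⟨p.a + 6 * p.b, p.a + 7 * p.b, p.c + 3 * p.a + 6 * p.b⟩
  else ⟨7 * p.a + 3 * p.b, 8 * p.a + p.b, p.c + 3 * p.a + 3 * p.b⟩

/-- action of powers of `y` on the derived group -/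
def Y (j : ZMod 3) (p : BB) : BB :=
  if j = 0 then p
  else if j = 1 then ⟨p.a + 6 * p.b, 7 * p.a + 7 * p.b, p.c + 4 * p.a⟩
  else ⟨7 * p.a + 3 * p.b, 2 * p.a + p.b, p.c + 8 * p.a + 6 * p.b⟩

/-- `(y^j)^(x^k) = y^j * f j k` -/
def f (j k : ZMod 3) : BB :=
  if j = 1 then (if k = 1 then ⟨1, 0, 0⟩ else if k = 2 then ⟨2, 1, 6⟩ else 1)
  else if j = 2 then (if k = 1 then ⟨2, 7, 1⟩ else if k = 2 then ⟨1, 4, 8⟩ else 1)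
  else 1

/-- carry cocycle -/
def chi (i j : ZMod 3) : BB :=
  if i = 1 ∧ j = 1 then ⟨0, 6, 0⟩ else if i = 2 ∧ j = 2 then ⟨0, 3, 0⟩ else 1

/-- the involution -/
def S (p : BB) : BB := ⟨p.a, 4 * p.a - p.b, 8 * p.a - p.c⟩

lemma cases3 (k : ZMod 3) : k = 0 ∨ k = 1 ∨ k = 2 := by revert k; decide

lemma X_mul (k : ZMod 3) (p q : BB) : X k (p * q) = X k p * X k q := by
  rcases cases3 k with rfl | rfl | rfl <;> ext <;> simp [X, show (2 : ZMod 3) ≠ 0 by decide, show (2 : ZMod 3) ≠ 1 by decide] <;> grind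

lemma Y_mul (k : ZMod 3) (p q : BB) : Y k (p * q) = Y k p * Y k q := by
  rcases cases3 k with rfl | rfl | rfl <;> ext <;> simp [Y, show (2 : ZMod 3) ≠ 0 by decide, show (2 : ZMod 3) ≠ 1 by decide] <;> grind

lemma S_mul (p q : BB) : S (p * q) = S p * S q := by
  ext <;> simp [S] <;> grind

lemma S_S (p : BB) : S (S p) = p := by
  ext <;> simp [S]

lemma X_add (k l : ZMod 3) (p : BB) : X (k + l) p = X l (X k p) := by
  rcases cases3 k with rfl | rfl | rfl <;> rcases cases3 l with rfl | rfl | rfl <;> ext <;>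
    simp [X, show (2 : ZMod 3) ≠ 0 by decide, show (2 : ZMod 3) ≠ 1 by decide,
     show (1 : ZMod 3) + 1 = 2 by decide, show (1 : ZMod 3) + 2 = 0 by decide, show (2 : ZMod 3) + 1 = 0 by decide, show (2 : ZMod 3) + 2 = 1 by decide] <;> grind

lemma Y_add (k l : ZMod 3) (p : BB) : Y (k + l) p = Y l (Y k p) := by
  rcases cases3 k with rfl | rfl | rfl <;> rcases cases3 l with rfl | rfl | rfl <;> ext <;>
    simp [Y, show (2 : ZMod 3) ≠ 0 by decide, show (2 : ZMod 3) ≠ 1 by decide,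
     show (1 : ZMod 3) + 1 = 2 by decide, show (1 : ZMod 3) + 2 = 0 by decide, show (2 : ZMod 3) + 1 = 0 by decide, show (2 : ZMod 3) + 2 = 1 by decide] <;> grind

lemma neg_two : -(2 : ZMod 3) = 1 := by decide
lemma neg_one' : -(1 : ZMod 3) = 2 := by decide

lemma S_X (k : ZMod 3) (p : BB) : S (X k p) = X (-k) (S p) := by
  rcases cases3 k with rfl | rfl | rfl <;> ext <;> simp [X, S, neg_two, neg_one', show (2 : ZMod 3) ≠ 0 by decide, show (2 : ZMod 3) ≠ 1 by decide] <;> grind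

lemma S_Y (k : ZMod 3) (p : BB) : S (Y k p) = Y (-k) (S p) := by
  rcases cases3 k with rfl | rfl | rfl <;> ext <;> simp [Y, S, neg_two, neg_one', show (2 : ZMod 3) ≠ 0 by decide, show (2 : ZMod 3) ≠ 1 by decide] <;> grind

lemma S_f : ∀ j k : ZMod 3, S (f j k) = f (-j) (-k) := by decide
lemma S_chi : ∀ j k : ZMod 3, S (chi j k) = chi (-j) (-k) := by decide
lemma X_chi : ∀ i j k : ZMod 3, X k (chi i j) = chi i j := by decide
lemma Y_chi : ∀ i j k : ZMod 3, Y k (chi i j) = chi i j := by decide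
lemma chi_assoc : ∀ i j k : ZMod 3, chi (i + j) k * chi i j = chi i (j + k) * chi j k := by decide
lemma chi_comm (i j : ZMod 3) (p : BB) : p * chi i j = chi i j * p := by
  unfold chi
  split_ifs
  · ext <;> simp <;> grind
  · ext <;> simp <;> grind
  · simp

lemma f_addk : ∀ j k l : ZMod 3, f j l * X l (f j k) = f j (k + l) := by decide
lemma f_addj : ∀ i j k : ZMod 3, Y j (f i k) * f j k = f (i + j) k := by decide

lemma f_conj (j k : ZMod 3) (p : BB) : f j k * X k (Y j p) = Y j (X k p) * f j k := by
  rcases cases3 k with rfl | rfl | rfl <;> rcases cases3 j with rfl | rfl | rfl <;> ext <;>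
    simp [X, Y, f, show (2 : ZMod 3) ≠ 0 by decide, show (2 : ZMod 3) ≠ 1 by decide, show (1 : ZMod 3) ≠ 2 by decide, show (0 : ZMod 3) ≠ 2 by decide] <;> grind

/-- the product in the last coordinate -/
def T (k j l : ZMod 3) (p q : BB) : BB := chi j l * (Y l (f j k * X k p) * q)

lemma T_assoc (j k' j' k'' j'' : ZMod 3) (p q r : BB) :
    T k'' (j + j') j'' (T k' j j' p q) r = T (k' + k'') j (j' + j'') p (T k'' j' j'' q r) := by
  have key : f (j + j') k'' * X k'' (Y j' (f j k' * X k' p) * q)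
      = Y j' (f j (k' + k'') * X (k' + k'') p) * (f j' k'' * X k'' q) := by
    rw [X_mul, ← f_addj, ← f_addk, X_add, mul_assoc, ← mul_assoc (f j' k''), f_conj, X_mul]
    simp only [Y_mul, mul_assoc]
  unfold T
  rw [X_mul k'' (chi j j'), X_chi, ← mul_assoc (f (j + j') k''), chi_comm, mul_assoc (chi j j'), key,
    Y_mul, Y_mul j'' (Y _ _), Y_chi, ← Y_add]
  simp only [← mul_assoc]
  rw [chi_assoc, chi_comm _ _ (chi j (j' + j'') * _), ← mul_assoc, chi_comm j' j'' (chi j (j' + j''))]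

end BB

/-- the group of order `3^(d+8)`; here `e = d+1`. -/
@[ext] structure GG (d u : ℕ) where
  k : ZMod (3 ^ (d + 3))
  j : ZMod 3
  a : ZMod 9
  b : ZMod 9

namespace GG

open BB

variable {d u : ℕ}

lemma nine_zero (d : ℕ) : (3 ^ (d + 1) * 9 : ZMod (3 ^ (d + 3))) = 0 := by
  have h : ((3 ^ (d + 3) : ℕ) : ZMod (3 ^ (d + 3))) = 0 := ZMod.natCast_self _
  push_cast at h
  rw [← h]; ring

/-- the embedding of `ℤ/9` -/
def emb (d u : ℕ) : ZMod 9 →+ ZMod (3 ^ (d + 3)) :=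
  ZMod.lift 9 ⟨zmultiplesHom _ ((3 ^ (d + 1) * u : ZMod (3 ^ (d + 3)))), by
    have h := nine_zero d
    simp only [zmultiplesHom_apply, zsmul_eq_mul]
    push_cast
    linear_combination (u : ZMod (3 ^ (d + 3))) * h⟩

lemma emb_nat (n : ℕ) : emb d u (n : ZMod 9) = n * (3 ^ (d + 1) * u) := by
  have h := ZMod.lift_coe 9 ⟨zmultiplesHom _ ((3 ^ (d + 1) * u : ZMod (3 ^ (d + 3)))), by
    have h := nine_zero d
    simp only [zmultiplesHom_apply, zsmul_eq_mul]
    push_cast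
    linear_combination (u : ZMod (3 ^ (d + 3))) * h⟩ (n : ℤ)
  simpa [emb] using h

/-- reduction mod 3 -/
def pr (d : ℕ) : ZMod (3 ^ (d + 3)) →+* ZMod 3 :=
  ZMod.castHom (dvd_pow_self 3 (by omega)) _

/-- reduction mod `3^e` -/
def pe (d : ℕ) : ZMod (3 ^ (d + 3)) →+* ZMod (3 ^ (d + 1)) :=
  ZMod.castHom (pow_dvd_pow 3 (by omega)) _

lemma exists_nat (c : ZMod 9) : ∃ n : ℕ, c = (n : ZMod 9) := ⟨c.val, by simp⟩

@[simp] lemma pr_emb (c : ZMod 9) : pr d (emb d u c) = 0 := by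
  obtain ⟨n, rfl⟩ := exists_nat c
  rw [emb_nat]
  have h3 : (3 : ZMod 3) = 0 := by decide
  have h4 : pr d 3 = 3 := map_ofNat _ 3
  simp [h4, h3]

@[simp] lemma pe_emb (c : ZMod 9) : pe d (emb d u c) = 0 := by
  obtain ⟨n, rfl⟩ := exists_nat c
  rw [emb_nat]
  have h3 : (3 ^ (d + 1) : ZMod (3 ^ (d + 1))) = 0 := by
    have h : ((3 ^ (d + 1) : ℕ) : ZMod (3 ^ (d + 1))) = 0 := ZMod.natCast_self _
    push_cast at h; exact h
  have h4 : pe d 3 = 3 := map_ofNat _ 3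
  simp [h4, h3]

/-- general element `x^k y^j p` -/
def mk' (k : ZMod (3 ^ (d + 3))) (j : ZMod 3) (p : BB) : GG d u := ⟨k + emb d u p.c, j, p.a, p.b⟩

/-- the part in the big group -/
def bp (g : GG d u) : BB := ⟨g.a, g.b, 0⟩

instance : Mul (GG d u) :=
  ⟨fun g h => mk' (g.k + h.k) (g.j + h.j) (T (pr d h.k) g.j h.j g.bp h.bp)⟩
instance : One (GG d u) := ⟨mk' 0 0 1⟩

lemma mk'_self (g : GG d u) : mk' g.k g.j g.bp = g := by
  ext <;> simp [mk', bp]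

lemma exists_mk' (g : GG d u) : ∃ k j p, g = mk' k j p := ⟨_, _, _, (mk'_self g).symm⟩

/-- central elements of `BB` -/
def vv (c : ZMod 9) : BB := ⟨0, 0, c⟩

lemma vv_comm (c : ZMod 9) (p : BB) : p * vv c = vv c * p := by
  ext <;> simp [vv] <;> ring

lemma X_vv (k : ZMod 3) (c : ZMod 9) : X k (vv c) = vv c := by
  unfold X vv; split_ifs <;> simp
lemma Y_vv (k : ZMod 3) (c : ZMod 9) : Y k (vv c) = vv c := by
  unfold Y vv; split_ifs <;> simp

lemma T_vv (k j l : ZMod 3) (p q : BB) (c c' : ZMod 9) :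
    T k j l (vv c * p) (vv c' * q) = vv (c + c') * T k j l p q := by
  have h : vv (c + c') = vv c * vv c' := by ext <;> simp [vv]
  unfold T
  rw [X_mul, X_vv, ← mul_assoc (f j k), vv_comm, mul_assoc, Y_mul, Y_vv, h]
  simp only [← mul_assoc]
  rw [vv_comm c]
  simp only [mul_assoc]
  rw [← mul_assoc _ (vv c') q, vv_comm]
  simp only [← mul_assoc]
  congr 2
  simp only [mul_assoc]
  rw [vv_comm]

lemma mk'_vv (k : ZMod (3 ^ (d + 3))) (j : ZMod 3) (c : ZMod 9) (p : BB) :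
    (mk' k j (vv c * p) : GG d u) = mk' (k + emb d u c) j p := by
  ext <;> simp [mk', vv]; ring

lemma mk'_mul (k k' : ZMod (3 ^ (d + 3))) (j j' : ZMod 3) (p q : BB) :
    (mk' k j p * mk' k' j' q : GG d u) = mk' (k + k') (j + j') (T (pr d k') j j' p q) := by
  have h : ∀ p : BB, p = vv p.c * ⟨p.a, p.b, 0⟩ := by intro p; ext <;> simp [vv]
  change mk' ((k + emb d u p.c) + (k' + emb d u q.c)) (j + j')
    (T (pr d (k' + emb d u q.c)) j j' ⟨p.a, p.b, 0⟩ ⟨q.a, q.b, 0⟩) = _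
  conv_rhs => rw [h p, h q, T_vv, mk'_vv]
  rw [map_add, pr_emb, add_zero, map_add]
  congr 1
  ring

lemma one_def : (1 : GG d u) = mk' 0 0 1 := rfl

lemma T_one_left (k l : ZMod 3) (q : BB) : T k 0 l 1 q = q := by
  have h1 : ∀ k l : ZMod 3, chi 0 l * Y l (f 0 k * X k 1) = 1 := by decide
  unfold T
  rw [← mul_assoc, h1, one_mul]

instance : Inv (GG d u) := ⟨fun g =>
  mk' (-g.k) (-g.j) (X (-(pr d g.k)) ((f (-g.j) (pr d g.k))⁻¹ * Y (-g.j) g.bp⁻¹))⟩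

lemma inv_T (k j : ZMod 3) (p : BB) :
    T k (-j) j (X (-k) ((f (-j) k)⁻¹ * Y (-j) p⁻¹)) p = 1 := by
  have h1 : ∀ j : ZMod 3, chi (-j) j = 1 := by decide
  have hX : ∀ p, X 0 p = p := fun p => by simp [X]
  have hY : ∀ p, Y 0 p = p := fun p => by simp [Y]
  unfold T
  rw [h1, ← X_add, neg_add_cancel, hX, mul_inv_cancel_left, ← Y_add, neg_add_cancel, hY]
  simp

instance : Group (GG d u) :=
  Group.ofLeftAxioms
    (by
      intro g h l
      obtain ⟨k, j, p, rfl⟩ := exists_mk' g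
      obtain ⟨k', j', q, rfl⟩ := exists_mk' h
      obtain ⟨k'', j'', r, rfl⟩ := exists_mk' l
      simp only [mk'_mul]
      rw [T_assoc, map_add, add_assoc, add_assoc])
    (by
      intro g
      obtain ⟨k, j, p, rfl⟩ := exists_mk' g
      rw [one_def, mk'_mul, T_one_left, zero_add, zero_add])
    (by
      intro g
      have h : g⁻¹ = mk' (-g.k) (-g.j)
        (X (-(pr d g.k)) ((f (-g.j) (pr d g.k))⁻¹ * Y (-g.j) g.bp⁻¹)) := rfl
      conv_lhs => rw [h, ← mk'_self g]
      rw [mk'_mul]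
      simp only [mk'_self]
      rw [inv_T, neg_add_cancel, neg_add_cancel, one_def])

/-- equivalence with a product -/
def eqv (d u : ℕ) : GG d u ≃ ZMod (3 ^ (d + 3)) × ZMod 3 × ZMod 9 × ZMod 9 where
  toFun g := (g.k, g.j, g.a, g.b)
  invFun t := ⟨t.1, t.2.1, t.2.2.1, t.2.2.2⟩
  left_inv _ := rfl
  right_inv _ := rfl

instance : Finite (GG d u) := by
  have : NeZero (3 ^ (d + 3)) := ⟨by positivity⟩
  exact Finite.of_equiv _ (eqv d u).symm

lemma card : Nat.card (GG d u) = 3 ^ (d + 8) := by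
  rw [Nat.card_congr (eqv d u)]
  simp only [Nat.card_prod, Nat.card_zmod]
  ring

/-- the inclusion of the derived group -/
def psi (d u : ℕ) : BB →* GG d u where
  toFun p := mk' 0 0 p
  map_one' := rfl
  map_mul' p q := by
    have h1 : chi 0 0 = 1 := by decide
    have h2 : ∀ k, f 0 k = 1 := by decide
    rw [mk'_mul, map_zero, add_zero, add_zero]
    simp [T, h1, h2, X, Y]

lemma psi_apply (p : BB) : psi d u p = mk' 0 0 p := rfl

/-- the involution -/
def sg (g : GG d u) : GG d u := mk' (-g.k) (-g.j) (S g.bp)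

lemma sg_mk' (k : ZMod (3 ^ (d + 3))) (j : ZMod 3) (p : BB) :
    sg (mk' k j p : GG d u) = mk' (-k) (-j) (S p) := by
  ext
  · simp [sg, mk', bp, S]; ring
  · simp [sg, mk']
  · simp [sg, mk', bp, S]
  · simp [sg, mk', bp, S]

lemma S_T (k j l : ZMod 3) (p q : BB) : S (T k j l p q) = T (-k) (-j) (-l) (S p) (S q) := by
  unfold T
  simp only [S_mul, S_chi, S_Y, S_f, S_X]

/-- the involution as an automorphism -/
def sig (d u : ℕ) : GG d u ≃* GG d u where
  toFun := sg
  invFun := sg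
  left_inv g := by
    obtain ⟨k, j, p, rfl⟩ := exists_mk' g
    simp [sg_mk', S_S]
  right_inv g := by
    obtain ⟨k, j, p, rfl⟩ := exists_mk' g
    simp [sg_mk', S_S]
  map_mul' g h := by
    obtain ⟨k, j, p, rfl⟩ := exists_mk' g
    obtain ⟨k', j', q, rfl⟩ := exists_mk' h
    simp only [mk'_mul, sg_mk', S_T, map_neg]
    congr 1 <;> ring

/-- the abelianization map -/
def al (d u : ℕ) : GG d u →* Multiplicative (ZMod (3 ^ (d + 1)) × ZMod 3) where
  toFun g := Multiplicative.ofAdd (pe d g.k, g.j)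
  map_one' := by
    change Multiplicative.ofAdd (pe d (0 + emb d u 0), (0 : ZMod 3)) = 1
    simp
  map_mul' g h := by
    change Multiplicative.ofAdd (pe d (g.k + h.k + emb d u _), g.j + h.j) = _
    rw [map_add, pe_emb, add_zero, map_add]; rfl

lemma al_mk' (k : ZMod (3 ^ (d + 3))) (j : ZMod 3) (p : BB) :
    al d u (mk' k j p) = Multiplicative.ofAdd (pe d k, j) := by
  change Multiplicative.ofAdd (pe d (k + emb d u _), j) = _
  rw [map_add, pe_emb, add_zero]

lemma al_surj : Function.Surjective (al d u) := by
  intro t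
  obtain ⟨k, hk⟩ := ZMod.castHom_surjective (pow_dvd_pow 3 (show d + 1 ≤ d + 3 by omega)) t.toAdd.1
  refine ⟨mk' k t.toAdd.2 1, ?_⟩
  rw [al_mk']
  have : pe d k = t.toAdd.1 := hk
  rw [this]; rfl

lemma al_sig (g : GG d u) : al d u (sig d u g) = (al d u g)⁻¹ := by
  obtain ⟨k, j, p, rfl⟩ := exists_mk' g
  change al d u (sg _) = _
  rw [sg_mk', al_mk', al_mk', map_neg]; rfl

lemma pe_ker (hu : u = 1 ∨ u = 2) (k : ZMod (3 ^ (d + 3))) (h : pe d k = 0) :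
    ∃ c, k = emb d u c := by
  have : NeZero (3 ^ (d + 3)) := ⟨by positivity⟩
  have hk : ((k.val : ℕ) : ZMod (3 ^ (d + 3))) = k := by simp
  rw [← hk, map_natCast, ZMod.natCast_eq_zero_iff] at h
  obtain ⟨m, hm⟩ := h
  rw [hm] at hk
  have h9 := nine_zero d
  rcases hu with rfl | rfl
  · refine ⟨(m : ℕ), ?_⟩
    rw [emb_nat, ← hk]; push_cast; ring
  · refine ⟨((5 * m : ℕ) : ZMod 9), ?_⟩
    rw [emb_nat, ← hk]; push_cast
    linear_combination (-m : ZMod (3 ^ (d + 3))) * h9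

lemma ker_al (hu : u = 1 ∨ u = 2) (g : GG d u) (h : al d u g = 1) : ∃ p, g = psi d u p := by
  obtain ⟨k, j, p, rfl⟩ := exists_mk' g
  rw [al_mk'] at h
  have h1 : pe d k = 0 := congrArg (fun t => (Multiplicative.toAdd t).1) h
  have h2 : j = 0 := congrArg (fun t => (Multiplicative.toAdd t).2) h
  obtain ⟨c, rfl⟩ := pe_ker hu k h1
  subst h2
  refine ⟨vv c * p, ?_⟩
  rw [psi_apply, mk'_vv, zero_add]

end GG

open scoped commutatorElement

section general

lemma comm'_eq {G : Type*} [Group G] {a b c : G} (h : a * b = b * a * c) : comm' a b = c := by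
  have : c = (b * a)⁻¹ * (a * b) := by rw [h]; group
  rw [this, comm']; group

lemma comm'_map {G H : Type*} [Group G] [Group H] (φ : G →* H) (a b : G) :
    comm' (φ a) (φ b) = φ (comm' a b) := by simp [comm']

lemma sgen_map {G H : Type*} [Group G] [Group H] (φ : G →* H) (x y : G) (n : ℕ) :
    sgen (φ x) (φ y) (n + 2) = φ (sgen x y (n + 2)) := by
  induction n with
  | zero => exact comm'_map φ y x
  | succ n ih =>
    change comm' (sgen (φ x) (φ y) (n + 2)) (φ x) = φ (comm' (sgen x y (n + 2)) x)
    rw [ih, comm'_map]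

lemma comm'_mem {G : Type*} [Group G] (a b : G) : comm' a b ∈ commutator G := by
  have : comm' a b = ⁅a⁻¹, b⁻¹⁆ := by simp [comm', commutatorElement_def]
  rw [this]
  exact Subgroup.commutator_mem_commutator (Subgroup.mem_top _) (Subgroup.mem_top _)

lemma abel_equiv {G A : Type*} [Group G] [CommGroup A] (α : G →* A)
    (hs : Function.Surjective α) (hk : α.ker ≤ commutator G) :
    Nonempty (Abelianization G ≃* A) := by
  have h : commutator G = α.ker := le_antisymm (Abelianization.commutator_subset_ker α) hk
  exact ⟨(QuotientGroup.quotientMulEquivOfEq h).trans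
    (QuotientGroup.quotientKerEquivOfSurjective α hs)⟩

end general

namespace GG

open BB

variable {d u : ℕ}

/-- generator -/
def gx (d u : ℕ) : GG d u := mk' 1 0 1
/-- generator -/
def gy (d u : ℕ) : GG d u := mk' 0 1 1

lemma yx : gy d u * gx d u = gx d u * gy d u * psi d u ⟨1, 0, 0⟩ := by
  rw [gx, gy, psi_apply]; simp only [mk'_mul, map_one, map_zero, add_zero, zero_add]
  congr 1

lemma psi_x (p q : BB) (h : T 1 0 0 p 1 = T 0 0 0 1 q) :
    comm' (psi d u p) (gx d u) = psi d u (p⁻¹ * q) := by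
  apply comm'_eq
  rw [mul_assoc, ← map_mul, mul_inv_cancel_left]
  rw [gx, psi_apply, psi_apply]; simp only [mk'_mul, map_one, map_zero, add_zero, zero_add]
  rw [h]

lemma psi_y (p q : BB) (h : T 0 0 1 p 1 = T 0 1 0 1 q) :
    comm' (psi d u p) (gy d u) = psi d u (p⁻¹ * q) := by
  apply comm'_eq
  rw [mul_assoc, ← map_mul, mul_inv_cancel_left]
  rw [gy, psi_apply, psi_apply]; simp only [mk'_mul, map_zero, add_zero, zero_add]
  rw [h]

lemma s2 : sgen (gx d u) (gy d u) 2 = psi d u ⟨1, 0, 0⟩ := comm'_eq yx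
lemma s3 : sgen (gx d u) (gy d u) 3 = psi d u ⟨0, 1, 0⟩ := by
  change comm' (sgen (gx d u) (gy d u) 2) _ = _
  rw [s2, psi_x ⟨1, 0, 0⟩ ⟨1, 1, 3⟩ (by decide)]; congr 1
lemma s4 : sgen (gx d u) (gy d u) 4 = psi d u ⟨6, 6, 6⟩ := by
  change comm' (sgen (gx d u) (gy d u) 3) _ = _
  rw [s3, psi_x ⟨0, 1, 0⟩ ⟨6, 7, 6⟩ (by decide)]; congr 1
lemma s5 : sgen (gx d u) (gy d u) 5 = psi d u ⟨0, 6, 0⟩ := by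
  change comm' (sgen (gx d u) (gy d u) 4) _ = _
  rw [s4, psi_x ⟨6, 6, 6⟩ ⟨6, 3, 6⟩ (by decide)]; congr 1
lemma t3 : tgenD (gx d u) (gy d u) 3 = psi d u ⟨0, 7, 1⟩ := by
  change comm' (sgen (gx d u) (gy d u) 2) _ = _
  rw [s2, psi_y ⟨1, 0, 0⟩ ⟨1, 7, 4⟩ (by decide)]; congr 1
lemma t4 : tgenD (gx d u) (gy d u) 4 = psi d u ⟨6, 6, 0⟩ := by
  change comm' (sgen (gx d u) (gy d u) 3) _ = _
  rw [s3, psi_y ⟨0, 1, 0⟩ ⟨6, 7, 0⟩ (by decide)]; congr 1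
lemma t5 : tgenD (gx d u) (gy d u) 5 = psi d u ⟨0, 6, 6⟩ := by
  change comm' (sgen (gx d u) (gy d u) 4) _ = _
  rw [s4, psi_y ⟨6, 6, 6⟩ ⟨6, 3, 3⟩ (by decide)]; congr 1

lemma y3 : gy d u ^ 3 = psi d u ⟨0, 6, 0⟩ := by
  rw [pow_succ, pow_two, gy, psi_apply]
  simp only [mk'_mul, map_zero, add_zero]
  congr 1

lemma x_pow (n : ℕ) : gx d u ^ n = mk' n 0 1 := by
  induction n with
  | zero => rw [pow_zero, one_def, Nat.cast_zero]
  | succ n ih =>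
    have : T 1 0 0 1 1 = 1 := by decide
    rw [pow_succ, ih, gx, mk'_mul, map_one, add_zero, this, Nat.cast_succ]

lemma psi_vv (c : ZMod 9) : psi d u (vv c) = mk' (emb d u c) 0 1 := by
  have := mk'_vv (d := d) (u := u) 0 0 c 1
  rwa [mul_one, zero_add] at this

lemma w_u : (gx d u ^ 3 ^ (d + 1)) ^ u = psi d u ⟨0, 0, 1⟩ := by
  have h := emb_nat (d := d) (u := u) 1
  rw [← pow_mul, x_pow]
  have := psi_vv (d := d) (u := u) 1
  rw [vv] at this
  rw [this]
  congr 1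
  rw [Nat.cast_one] at h
  rw [h]; push_cast; ring

lemma BB_pow (p : BB) (n : ℕ) : p ^ n = ⟨n * p.a, n * p.b, n * p.c⟩ := by
  induction n with
  | zero => rw [pow_zero]; ext <;> simp
  | succ n ih => rw [pow_succ, ih]; ext <;> simp <;> ring

lemma BB_gen (H : Subgroup BB) (h1 : ⟨1, 0, 0⟩ ∈ H) (h2 : ⟨0, 1, 0⟩ ∈ H) (h3 : ⟨0, 7, 1⟩ ∈ H)
    (p : BB) : p ∈ H := by
  have h4 : (⟨0, 0, 1⟩ : BB) ∈ H := by
    have h := H.mul_mem (H.pow_mem h2 2) h3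
    have e : (⟨0, 1, 0⟩ : BB) ^ 2 * ⟨0, 7, 1⟩ = ⟨0, 0, 1⟩ := by decide
    rwa [e] at h
  have h := H.mul_mem (H.mul_mem (H.pow_mem h1 p.a.val) (H.pow_mem h2 p.b.val))
    (H.pow_mem h4 (p.c + 6 * p.a * p.b).val)
  convert h using 1
  simp only [BB_pow]
  ext <;> simp; ring

lemma psi_mem (H : Subgroup (GG d u)) (h1 : psi d u ⟨1, 0, 0⟩ ∈ H) (h2 : psi d u ⟨0, 1, 0⟩ ∈ H)
    (h3 : psi d u ⟨0, 7, 1⟩ ∈ H) (p : BB) : psi d u p ∈ H :=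
  BB_gen (H.comap (psi d u)) h1 h2 h3 p

lemma psi_comm (p : BB) : psi d u p ∈ commutator (GG d u) := by
  apply psi_mem
  · rw [← s2]; exact comm'_mem _ _
  · rw [← s3]; exact comm'_mem _ _
  · rw [← t3]; exact comm'_mem _ _

lemma ker_le (hu : u = 1 ∨ u = 2) : (al d u).ker ≤ commutator (GG d u) := by
  intro g hg
  obtain ⟨p, rfl⟩ := ker_al hu g hg
  exact psi_comm p

lemma comm'_mem' {G : Type*} [Group G] (H : Subgroup G) {a b : G} (ha : a ∈ H) (hb : b ∈ H) :
    comm' a b ∈ H :=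
  H.mul_mem (H.mul_mem (H.mul_mem (H.inv_mem ha) (H.inv_mem hb)) ha) hb

lemma closure_top : Subgroup.closure {gx d u, gy d u} = ⊤ := by
  have hx : gx d u ∈ Subgroup.closure {gx d u, gy d u} := Subgroup.subset_closure (by simp)
  have hy : gy d u ∈ Subgroup.closure {gx d u, gy d u} := Subgroup.subset_closure (by simp)
  set C := Subgroup.closure {gx d u, gy d u}
  have h2 : psi d u ⟨1, 0, 0⟩ ∈ C := by rw [← s2]; exact comm'_mem' C hy hx
  have h3 : psi d u ⟨0, 1, 0⟩ ∈ C := by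
    rw [← s3]; exact comm'_mem' C (a := sgen (gx d u) (gy d u) 2) (by rw [s2]; exact h2) hx
  have h4 : psi d u ⟨0, 7, 1⟩ ∈ C := by
    rw [← t3]; exact comm'_mem' C (a := sgen (gx d u) (gy d u) 2) (by rw [s2]; exact h2) hy
  have hp := psi_mem C h2 h3 h4
  rw [eq_top_iff]
  rintro g -
  obtain ⟨k, j, p, rfl⟩ := exists_mk' g
  have : NeZero (3 ^ (d + 3)) := ⟨by positivity⟩
  have hk : (mk' k 0 1 : GG d u) ∈ C := by
    have := C.pow_mem hx k.val
    rw [x_pow] at this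
    simpa using this
  have hj : (mk' 0 j 1 : GG d u) ∈ C := by
    rcases cases3 j with rfl | rfl | rfl
    · exact C.one_mem
    · exact hy
    · have e : (mk' 0 2 1 : GG d u) * gy d u = 1 := by
        rw [gy, mk'_mul, map_zero, add_zero, one_def]
        congr 1
      rw [eq_inv_of_mul_eq_one_left e]
      exact C.inv_mem hy
  have e : (mk' k j p : GG d u) = mk' k 0 1 * mk' 0 j 1 * psi d u p := by
    have e1 : ∀ j, T 0 0 j 1 1 = 1 := by decide
    have e2 : T 0 j 0 1 p = p := by
      have : ∀ j : ZMod 3, chi j 0 * Y 0 (f j 0 * X 0 1) = 1 := by decide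
      unfold T
      rw [← mul_assoc, this, one_mul]
    rw [psi_apply, mk'_mul, mk'_mul, map_zero, e1, zero_add, e2]
    simp
  rw [e]
  exact C.mul_mem (C.mul_mem hk hj) (hp p)

/-- generator of the second derived group -/
def gz (d u : ℕ) : GG d u := psi d u ⟨0, 0, 6⟩

lemma gz_mem : gz d u ∈ derivedSeries (GG d u) 2 := by
  have h : comm' (⟨1, 0, 0⟩ : BB) ⟨0, 1, 0⟩ = ⟨0, 0, 6⟩ := by decide
  have h' : gz d u = comm' (psi d u ⟨1, 0, 0⟩) (psi d u ⟨0, 1, 0⟩) := by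
    rw [gz, ← h, comm'_map]
  rw [h', show comm' (psi d u ⟨1, 0, 0⟩) (psi d u ⟨0, 1, 0⟩)
    = ⁅(psi d u ⟨1, 0, 0⟩)⁻¹, (psi d u ⟨0, 1, 0⟩)⁻¹⁆ by simp [comm', commutatorElement_def]]
  rw [derivedSeries_succ, derivedSeries_one]
  exact Subgroup.commutator_mem_commutator (inv_mem (psi_comm _)) (inv_mem (psi_comm _))

lemma commutator_exists (hu : u = 1 ∨ u = 2) {g : GG d u} (hg : g ∈ commutator (GG d u)) :
    ∃ p, g = psi d u p :=
  ker_al hu g (Abelianization.commutator_subset_ker (al d u) hg)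

lemma vv_mem (n : ℕ) : psi d u ⟨0, 0, 6 * (n : ZMod 9)⟩ ∈ Subgroup.zpowers (gz d u) := by
  have : psi d u ⟨0, 0, 6 * (n : ZMod 9)⟩ = gz d u ^ n := by
    rw [gz, ← map_pow, BB_pow]
    congr 1
    ext <;> simp; ring
  rw [this]
  exact Subgroup.npow_mem_zpowers _ _

lemma derived_two (hu : u = 1 ∨ u = 2) :
    derivedSeries (GG d u) 2 = Subgroup.zpowers (gz d u) := by
  apply le_antisymm
  · rw [derivedSeries_succ, derivedSeries_one, Subgroup.commutator_le]
    intro g hg h hh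
    obtain ⟨p, rfl⟩ := commutator_exists hu hg
    obtain ⟨q, rfl⟩ := commutator_exists hu hh
    rw [← map_commutatorElement]
    have e : ⁅p, q⁆ = ⟨0, 0, 6 * (((2 * (q.a * p.b - p.a * q.b)).val : ℕ) : ZMod 9)⟩ := by
      rw [commutatorElement_def]
      ext <;> simp; ring
    rw [e]
    exact vv_mem _
  · rw [Subgroup.zpowers_le]; exact gz_mem

lemma gz_cube : gz d u ^ 3 = 1 := by
  rw [gz, ← map_pow, show (⟨0, 0, 6⟩ : BB) ^ 3 = 1 by decide, map_one]

lemma gz_ne (hu : u = 1 ∨ u = 2) : gz d u ≠ 1 := by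
  intro h
  have h1 : (gz d u).k = (1 : GG d u).k := by rw [h]
  have h2 : emb d u ((6 : ℕ) : ZMod 9) = 0 := by
    have e1 : (gz d u).k = 0 + emb d u 6 := rfl
    have e2 : (1 : GG d u).k = 0 + emb d u 0 := rfl
    rw [e1, e2, map_zero, zero_add, zero_add] at h1
    exact_mod_cast h1
  rw [emb_nat] at h2
  have h3 : ((6 * (3 ^ (d + 1) * u) : ℕ) : ZMod (3 ^ (d + 3))) = 0 := by push_cast; exact_mod_cast h2
  rw [ZMod.natCast_eq_zero_iff] at h3
  have h4 : 3 ^ (d + 1) * 9 ∣ 3 ^ (d + 1) * (6 * u) := by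
    convert h3 using 1 <;> ring
  have h5 := Nat.dvd_of_mul_dvd_mul_left (by positivity) h4
  rcases hu with rfl | rfl <;> omega

lemma card_two (hu : u = 1 ∨ u = 2) : Nat.card (derivedSeries (GG d u) 2) = 3 := by
  rw [derived_two hu, Nat.card_zpowers]
  have : Fact (Nat.Prime 3) := ⟨Nat.prime_three⟩
  exact orderOf_eq_prime gz_cube (gz_ne hu)

lemma vv3_mem : psi d u ⟨0, 0, 3⟩ ∈ derivedSeries (GG d u) 2 := by
  have : psi d u ⟨0, 0, 3⟩ = gz d u ^ 2 := by
    rw [gz, ← map_pow]; congr 1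
  rw [this]; exact Subgroup.pow_mem _ gz_mem 2

lemma w_cube (hu : u = 1 ∨ u = 2) :
    (gx d u ^ 3 ^ (d + 1)) ^ 3 ∈ derivedSeries (GG d u) 2 := by
  have h := w_u (d := d) (u := u)
  have h9 : (gx d u ^ 3 ^ (d + 1)) ^ 9 = 1 := by
    rw [← pow_mul, x_pow, one_def]
    congr 1
    push_cast
    exact nine_zero d
  have h3 : (gx d u ^ 3 ^ (d + 1)) ^ (u * 3) ∈ derivedSeries (GG d u) 2 := by
    rw [pow_mul, h, ← map_pow, show (⟨0, 0, 1⟩ : BB) ^ 3 = ⟨0, 0, 3⟩ by decide]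
    exact vv3_mem
  rcases hu with rfl | rfl
  · simpa using h3
  · have := Subgroup.pow_mem _ h3 2
    rw [← pow_mul, show 2 * 3 * 2 = 9 + 3 by norm_num, pow_add, h9, one_mul] at this
    exact this

lemma sigma : ∀ (hu : u = 1 ∨ u = 2) (g : GG d u),
    Abelianization.of (sig d u g) = (Abelianization.of g)⁻¹ := by
  intro hu g
  have h : sig d u g * g ∈ commutator (GG d u) := by
    apply ker_le hu
    rw [MonoidHom.mem_ker, map_mul, al_sig, inv_mul_cancel]
  rw [← Abelianization.ker_of, MonoidHom.mem_ker, map_mul] at h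
  exact eq_inv_of_mul_eq_one_left h

lemma derived_three (hu : u = 1 ∨ u = 2) : derivedSeries (GG d u) 3 = ⊥ := by
  rw [derivedSeries_succ, derived_two hu, Subgroup.commutator_eq_bot_iff_le_centralizer]
  exact Subgroup.le_centralizer _

end GG

theorem stmt9 (e i : ℕ) (he : 5 ≤ e) (hi : i = 2 ∨ i = 3) :
    ∃ (M : Type) (_ : Group M) (_ : Finite M) (x y : M),
      Subgroup.closure {x, y} = ⊤ ∧
      Nat.card M = 3 ^ (6 + e) ∧
      IsMetabelian M ∧
      IsSigmaGroup M ∧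
      (x ^ 3 ^ e) ^ 3 = 1 ∧
      y ^ 3 = sgen x y 5 ∧
      sgen x y 2 ^ 3 = sgen x y 4 ^ 2 * sgen x y 5 ∧
      sgen x y 3 ^ 3 = sgen x y 5 ^ 2 ∧
      tgenD x y 3 = sgen x y 3 * sgen x y 5 * (x ^ 3 ^ e) ^ (i - 1) ∧
      tgenD x y 4 = sgen x y 4 ∧
      tgenD x y 5 = sgen x y 5 ∧
      Nonempty (Abelianization M ≃* Multiplicative (ZMod (3 ^ e) × ZMod 3)) ∧
      ∃ (G : Type) (_ : Group G) (_ : Finite G),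
        Nat.card G = 3 ^ (7 + e) ∧
        Nonempty (Abelianization G ≃* Multiplicative (ZMod (3 ^ e) × ZMod 3)) ∧
        IsSigmaGroup G ∧
        derivedSeries G 2 ≠ ⊥ ∧
        derivedSeries G 3 = ⊥ ∧
        ∃ φ : G →* M, Function.Surjective φ ∧ φ.ker = derivedSeries G 2 := by
  obtain ⟨d, rfl⟩ : ∃ d, e = d + 1 := ⟨e - 1, by omega⟩
  obtain ⟨u, hu', hu⟩ : ∃ u, i - 1 = u ∧ (u = 1 ∨ u = 2) := ⟨i - 1, rfl, by omega⟩
  rw [hu']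
  let D := derivedSeries (GG d u) 2
  let q : GG d u →* GG d u ⧸ D := QuotientGroup.mk' D
  have hq : Function.Surjective q := QuotientGroup.mk'_surjective D
  have hker : q.ker = D := QuotientGroup.ker_mk' D
  have hD : ∀ a b c : GG d u, c ∈ D → a = b * c → q a = q b := by
    intro a b c hc hab
    have : q c = 1 := by rw [← MonoidHom.mem_ker, hker]; exact hc
    rw [hab, map_mul, this, mul_one]
  have hsg : ∀ n, sgen (q (GG.gx d u)) (q (GG.gy d u)) (n + 2) = q (sgen (GG.gx d u) (GG.gy d u) (n + 2)) :=
    sgen_map q _ _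
  have htg : ∀ n, tgenD (q (GG.gx d u)) (q (GG.gy d u)) (n + 3) = q (tgenD (GG.gx d u) (GG.gy d u) (n + 3)) := by
    intro n
    change comm' (sgen _ _ (n + 2)) _ = q (comm' (sgen _ _ (n + 2)) _)
    rw [hsg, comm'_map]
  refine ⟨GG d u ⧸ D, inferInstance, inferInstance, q (GG.gx d u), q (GG.gy d u), ?_, ?_, ?_, ?_, ?_,
    ?_, ?_, ?_, ?_, ?_, ?_, ?_, GG d u, inferInstance, inferInstance, ?_, ?_, ⟨GG.sig d u, GG.sigma hu⟩,
    ?_, GG.derived_three hu, q, hq, hker⟩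
  · have h := congrArg (Subgroup.map q) (GG.closure_top (d := d) (u := u))
    rw [MonoidHom.map_closure, Set.image_pair, Subgroup.map_top_of_surjective q hq] at h
    exact h
  · have h := Subgroup.card_eq_card_quotient_mul_card_subgroup D
    rw [GG.card, GG.card_two hu] at h
    have h2 : 3 ^ (d + 8) = 3 ^ (6 + (d + 1)) * 3 := by ring
    omega
  · unfold IsMetabelian
    rw [← map_derivedSeries_eq hq, eq_bot_iff, Subgroup.map_le_iff_le_comap]
    intro g hg
    have : g ∈ q.ker := by rw [hker]; exact hg
    exact this
  · have hm : D.map (GG.sig d u : GG d u →* GG d u) = D :=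
      map_derivedSeries_eq (f := (GG.sig d u : GG d u →* GG d u)) (GG.sig d u).surjective 2
    refine ⟨QuotientGroup.congr D D (GG.sig d u) hm, ?_⟩
    intro g
    obtain ⟨g, rfl⟩ := hq g
    have h := congrArg (Abelianization.map q) (GG.sigma hu g)
    rw [map_inv, Abelianization.map_of, Abelianization.map_of] at h
    exact h
  · have := GG.w_cube (d := d) hu
    rw [← map_pow, ← map_pow, ← MonoidHom.mem_ker, hker]
    exact this
  · rw [hsg 3, ← map_pow, GG.y3, GG.s5]
  · rw [hsg 0, hsg 2, hsg 3, ← map_pow, ← map_pow, ← map_mul]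
    refine hD _ _ (GG.gz d u) GG.gz_mem ?_
    rw [GG.s2, GG.s4, GG.s5, GG.gz, ← map_pow, ← map_pow, ← map_mul, ← map_mul]
    congr 1
  · rw [hsg 1, hsg 3, ← map_pow, ← map_pow, GG.s3, GG.s5, ← map_pow, ← map_pow]
    congr 1
  · rw [hsg 1, hsg 3, htg 0, ← map_pow, ← map_pow, ← map_mul, ← map_mul, GG.w_u, GG.s3, GG.s5, GG.t3,
      ← map_mul, ← map_mul]
    congr 1
  · rw [htg 1, hsg 2]
    refine hD _ _ _ GG.vv3_mem ?_
    rw [GG.t4, GG.s4, ← map_mul]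
    congr 1
  · rw [htg 2, hsg 3]
    refine hD _ _ (GG.gz d u) GG.gz_mem ?_
    rw [GG.t5, GG.s5, GG.gz, ← map_mul]
    congr 1
  · have hle : D ≤ (GG.al d u).ker := by
      refine le_trans ?_ (Abelianization.commutator_subset_ker (GG.al d u))
      rw [← derivedSeries_one]
      exact derivedSeries_antitone _ (by norm_num)
    refine abel_equiv (QuotientGroup.lift D (GG.al d u) hle) ?_ ?_
    · intro t
      obtain ⟨g, hg⟩ := GG.al_surj (d := d) (u := u) t
      exact ⟨q g, hg⟩
    · intro m hm
      obtain ⟨g, rfl⟩ := hq m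
      have hg : g ∈ commutator (GG d u) := GG.ker_le hu hm
      have h := map_derivedSeries_eq hq 1
      rw [derivedSeries_one, derivedSeries_one] at h
      rw [← h]
      exact Subgroup.mem_map_of_mem q hg
  · rw [GG.card]; ring
  · exact abel_equiv (GG.al d u) GG.al_surj (GG.ker_le hu)
  · intro h
    have h1 := GG.gz_mem (d := d) (u := u)
    rw [h, Subgroup.mem_bot] at h1
    exact GG.gz_ne hu h1
end
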